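/- arXiv:2206.03323 — 2 statements merged into one kernel-verified Lean document; each statement's English description precedes it below -/
import Mathlib

section
/- Let V = {S_1, ..., S_n} be a fully reducible simple m-dimensional Venn diagram with n ≥ 2 and m ≥ 3. Then W = {S_1 ∩ S_n, ..., S_{n-1} ∩ S_n} is a fully reducible simple (m-1)-dimensional Venn diagram embedded on the m-surface S_n (which is homeomorphic to the sphere S^{m-1}). -/
open Set Metric Bornology

section VennDefs

variable {E : Type*} [TopologicalSpace E]

/-- `A ⊆ E` is homeomorphic to the `d`-dimensional sphere `S^d ⊆ ℝ^{d+1}`. -/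
def HomeoToSphere (d : ℕ) (A : Set E) : Prop :=
  Nonempty (A ≃ₜ (Metric.sphere (0 : EuclideanSpace ℝ (Fin (d + 1))) 1 :
    Set (EuclideanSpace ℝ (Fin (d + 1)))))

/-- `A` is a union of finitely many compact sets, each homeomorphic to `S^d`. -/
def FinUnionOfSpheres (d : ℕ) (A : Set E) : Prop :=
  ∃ 𝒞 : Finset (Set E), A = ⋃₀ ↑𝒞 ∧ ∀ C ∈ 𝒞, IsCompact C ∧ HomeoToSphere d C

/-- `A` is a disjoint union of finitely many compact sets, each homeomorphic to `S^d`. -/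
def FinDisjUnionOfSpheres (d : ℕ) (A : Set E) : Prop :=
  ∃ 𝒞 : Finset (Set E), A = ⋃₀ ↑𝒞 ∧ (↑𝒞 : Set (Set E)).PairwiseDisjoint id ∧
    ∀ C ∈ 𝒞, IsCompact C ∧ HomeoToSphere d C

end VennDefs

section MetricVennDefs

variable {E : Type*} [MetricSpace E]

/-- An `m`-surface: a compact set homeomorphic to the sphere `S^{m-1}`. -/
def IsMSurface (m : ℕ) (S : Set E) : Prop :=
  IsCompact S ∧ HomeoToSphere (m - 1) S

/-- The two sides of an `m`-surface: side `0` (the "interior") consists of the points of the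
complement whose connected component in the complement is bounded, and side `1`
(the "exterior") of those whose component is unbounded. -/
def surfSide (S : Set E) : Fin 2 → Set E := fun ε =>
  if ε = 0 then {x | x ∉ S ∧ IsBounded (connectedComponentIn Sᶜ x)}
  else {x | x ∉ S ∧ ¬ IsBounded (connectedComponentIn Sᶜ x)}

/-- A family of `m`-surfaces is an `m`-dimensional Venn diagram if every region
`S₁^{ε₁} ∩ ⋯ ∩ Sₙ^{εₙ}` is nonempty and connected, and the intersection of any two of the
surfaces is a disjoint union of finitely many `(m-1)`-surfaces, i.e. sets homeomorphic
to `S^{m-2}`. -/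
def IsVennDiagram (m : ℕ) {ι : Type*} [Fintype ι] (S : ι → Set E) : Prop :=
  (∀ i, IsMSurface m (S i)) ∧
  (∀ ε : ι → Fin 2, (⋂ i, surfSide (S i) (ε i)).Nonempty ∧
    IsConnected (⋂ i, surfSide (S i) (ε i))) ∧
  (∀ i j, i ≠ j → FinDisjUnionOfSpheres (m - 2) (S i ∩ S j))

/-- A Venn diagram is simple if for every `k ≥ 2`, the intersection of any `k` distinct
surfaces is a union of finitely many sets homeomorphic to `S^{m-k}` (and is empty
when `m - k ≤ 0`). -/
def IsSimpleVennDiagram (m : ℕ) {ι : Type*} [Fintype ι] (S : ι → Set E) : Prop :=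
  IsVennDiagram m S ∧
  ∀ t : Finset ι, 2 ≤ t.card →
    if m ≤ t.card then (⋂ i ∈ t, S i) = ∅
    else FinUnionOfSpheres (m - t.card) (⋂ i ∈ t, S i)

/-- A Venn diagram is fully reducible if every subfamily is again a Venn diagram. -/
def FullyReducible (m : ℕ) {ι : Type*} [Fintype ι] (S : ι → Set E) : Prop :=
  ∀ t : Finset ι, IsVennDiagram m (fun i : {x // x ∈ t} => S i.1)

/-- The number of regions of a family of surfaces: the number of connected components of
the nonempty cells `⋂ i, (S i)^{ε i}`. -/
noncomputable def vennRegionCount {ι : Type*} [Fintype ι] (S : ι → Set E) : ℕ :=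
  Nat.card {A : Set E // ∃ (ε : ι → Fin 2) (x : E),
    x ∈ ⋂ i, surfSide (S i) (ε i) ∧ A = connectedComponentIn (⋂ i, surfSide (S i) (ε i)) x}

/-- The edges of the diagram lying on the surface `S i`: connected components of
`S i \ ⋃_{j ≠ i} S j`. -/
def vennEdgeSet {ι : Type*} [Fintype ι] (S : ι → Set E) (i : ι) : Set (Set E) :=
  {A | ∃ x ∈ S i \ ⋃ j ∈ {j | j ≠ i}, S j,
    A = connectedComponentIn (S i \ ⋃ j ∈ {j | j ≠ i}, S j) x}

/-- The number of edges lying on the surface `S i`. -/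
noncomputable def vennEdgeCountOn {ι : Type*} [Fintype ι] (S : ι → Set E) (i : ι) : ℕ :=
  Nat.card (vennEdgeSet S i)

/-- The total number of edges of the diagram. -/
noncomputable def vennEdgeCount {ι : Type*} [Fintype ι] (S : ι → Set E) : ℕ :=
  ∑ i, vennEdgeCountOn S i

end MetricVennDefs


section OnSurface

variable {X : Type*} [TopologicalSpace X]

/-- A Venn diagram of ambient dimension `d` on a topological space `X` (such as a sphere),
relative to a choice `σ` of the two sides of each surface: each surface `T i` is compact and
homeomorphic to `S^{d-1}`; its two sides `σ i 0` and `σ i 1` are the two distinct connected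
components into which it separates `X`; every region `⋂ i, σ i (ε i)` is nonempty and
connected; and any two surfaces intersect in a disjoint union of finitely many
`(d-1)`-surfaces. -/
def IsVennDiagramOn (d : ℕ) {ι : Type*} [Fintype ι] (T : ι → Set X)
    (σ : ι → Fin 2 → Set X) : Prop :=
  (∀ i, IsCompact (T i) ∧ HomeoToSphere (d - 1) (T i)) ∧
  (∀ i, σ i 0 ∪ σ i 1 = (T i)ᶜ ∧ σ i 0 ≠ σ i 1 ∧
    ∀ ε : Fin 2, ∃ x, σ i ε = connectedComponentIn (T i)ᶜ x) ∧
  (∀ ε : ι → Fin 2, (⋂ i, σ i (ε i)).Nonempty ∧ IsConnected (⋂ i, σ i (ε i))) ∧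
  (∀ i j, i ≠ j → FinDisjUnionOfSpheres (d - 2) (T i ∩ T j))

/-- A simple Venn diagram of ambient dimension `d` on `X`. -/
def IsSimpleVennDiagramOn (d : ℕ) {ι : Type*} [Fintype ι] (T : ι → Set X)
    (σ : ι → Fin 2 → Set X) : Prop :=
  IsVennDiagramOn d T σ ∧
  ∀ t : Finset ι, 2 ≤ t.card →
    if d ≤ t.card then (⋂ i ∈ t, T i) = ∅
    else FinUnionOfSpheres (d - t.card) (⋂ i ∈ t, T i)

/-- Full reducibility on `X`: every subfamily is again a Venn diagram on `X`. -/
def FullyReducibleOn (d : ℕ) {ι : Type*} [Fintype ι] (T : ι → Set X)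
    (σ : ι → Fin 2 → Set X) : Prop :=
  ∀ t : Finset ι, IsVennDiagramOn d (fun i : {x // x ∈ t} => T i.1)
    (fun i : {x // x ∈ t} => σ i.1)

end OnSurface

/-!
In the one-point compactification of `ℝᵐ` the surfaces become walls cutting a topological sphere
`Z` into connected cells. Restricting to a wall `T` requires that `T` meets every cell `C` in a
connected set and every other wall in a single sphere. Both are read off the mod 2
Alexander–Spanier cohomology of compact pairs.

* If `D` splits a `(q + 1)`-sphere `Z` into two connected sides and `B ⊆ D` satisfies
  `H^q(Z, B) = 0`, then `H^q(D, B)` has rank at most one. It embeds into the kernel of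
  `H^{q+1}(Z, D) → H^{q+1}(Z)`, and each side contributes one class to `H^{q+1}(Z, D)`, because the
  classes supported near a point of a connected side do not depend on the point.
* For two walls `D` and `T` and `B = ∅`, applied inside `T`, the finite union of spheres `T ∩ D` has
  top cohomology of rank at most one, so it is a single sphere.
* For `D = (Z \ C) ∪ T` and `B = Z \ C`, excision gives rank at most one for the top cohomology of
  `(T, T \ C)`. A disconnection of `C ∩ T` would produce two independent classes there.

The last step needs `H^q(Z, Z \ C) = 0`, which is proved by induction on the dimension and on the
number of walls defining `C`: adding a wall `T` costs `H^{q-1}(T, T \ C)`, which vanishes by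
induction in the arrangement restricted to `T`.
-/

namespace VennReduction

open Filter Topology TopologicalSpace

/-! ### Cochains, coboundary and prism operators -/

section Cochains

variable {X : Type*}

/-- Mod `2` cochains on all finite tuples of points; the part of degree `q` consists of the
values on lists of length `q + 1`. -/
abbrev Cochain (X : Type*) := List X → ZMod 2

/-- The cochain `l ↦ f (x :: l)`. -/
def cone (x : X) : Cochain X →ₗ[ZMod 2] Cochain X :=
  LinearMap.funLeft (ZMod 2) (ZMod 2) (List.cons x)

lemma cone_apply (x : X) (f : Cochain X) (l : List X) : cone x f l = f (x :: l) := rfl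

/-- The sum of the values of a cochain on the faces of a tuple. -/
def faceSum : List X → Cochain X →ₗ[ZMod 2] ZMod 2
  | [] => 0
  | x :: l => LinearMap.proj l + faceSum l ∘ₗ cone x

/-- The simplicial coboundary operator, augmented by the empty tuple. -/
def coboundary : Cochain X →ₗ[ZMod 2] Cochain X := LinearMap.pi faceSum

end Cochains

local notation "δ" => coboundary

section Operators

variable {X Y : Type*}

lemma coboundary_nil (f : Cochain X) : δ f [] = 0 := rfl

lemma coboundary_cons (f : Cochain X) (x : X) (l : List X) :
    δ f (x :: l) = f l + δ (cone x f) l := rfl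

lemma coboundary_singleton (f : Cochain X) (x : X) : δ f [x] = f [] := by
  simp [coboundary_cons, coboundary_nil]

lemma cone_coboundary (x : X) (f : Cochain X) : cone x (δ f) = f + δ (cone x f) := rfl

lemma coboundary_coboundary (f : Cochain X) : δ (δ f) = 0 := by
  funext l
  induction l generalizing f with
  | nil => rfl
  | cons x l ih =>
    simp only [coboundary_cons, cone_coboundary, map_add, Pi.add_apply, ih, Pi.zero_apply,
      add_zero, ZModModule.add_self]

lemma coboundary_apply_eq_zero (f : Cochain X) (l : List X)
    (h : ∀ l' : List X, l'.Sublist l → l'.length + 1 = l.length → f l' = 0) : δ f l = 0 := by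
  induction l generalizing f with
  | nil => rfl
  | cons x l ih =>
    rw [coboundary_cons, h l (List.sublist_cons_self x l) (by simp), zero_add]
    exact ih _ fun l' hl hlen => h _ (hl.cons_cons x) (by simp [hlen])

/-- Pullback of cochains along an arbitrary, possibly discontinuous, function. -/
def pullback (φ : X → Y) : Cochain Y →ₗ[ZMod 2] Cochain X :=
  LinearMap.funLeft (ZMod 2) (ZMod 2) (List.map φ)

lemma pullback_apply (φ : X → Y) (f : Cochain Y) (l : List X) :
    pullback φ f l = f (l.map φ) := rfl

lemma cone_pullback (φ : X → Y) (f : Cochain Y) (x : X) :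
    cone x (pullback φ f) = pullback φ (cone (φ x) f) := rfl

lemma pullback_id (f : Cochain X) : pullback id f = f := by
  funext l
  rw [pullback_apply, List.map_id]

lemma coboundary_pullback (φ : X → Y) (f : Cochain Y) :
    δ (pullback φ f) = pullback φ (δ f) := by
  funext l
  induction l generalizing f with
  | nil => rfl
  | cons x l ih => rw [coboundary_cons, cone_pullback, ih]; rfl

/-- The sum of the values of a cochain on the prism `[φ x₀, …, φ xᵢ, ψ xᵢ, …, ψ xₙ]`, over
all `i`. -/
def prismSum (φ ψ : X → Y) : List X → Cochain Y →ₗ[ZMod 2] ZMod 2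
  | [] => 0
  | x :: l => LinearMap.proj (φ x :: ψ x :: l.map ψ) + prismSum φ ψ l ∘ₗ cone (φ x)

/-- The prism operator, a cochain homotopy between the pullbacks along `φ` and `ψ`. -/
def prism (φ ψ : X → Y) : Cochain Y →ₗ[ZMod 2] Cochain X := LinearMap.pi (prismSum φ ψ)

lemma prism_nil (φ ψ : X → Y) (f : Cochain Y) : prism φ ψ f [] = 0 := rfl

lemma prism_cons (φ ψ : X → Y) (f : Cochain Y) (x : X) (l : List X) :
    prism φ ψ f (x :: l) = f (φ x :: ψ x :: l.map ψ) + prism φ ψ (cone (φ x) f) l := rfl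

lemma cone_prism (φ ψ : X → Y) (f : Cochain Y) (x : X) :
    cone x (prism φ ψ f) =
      pullback ψ (cone (ψ x) (cone (φ x) f)) + prism φ ψ (cone (φ x) f) := rfl

lemma coboundary_prism_add_prism_coboundary (φ ψ : X → Y) (f : Cochain Y) :
    δ (prism φ ψ f) + prism φ ψ (δ f) = pullback φ f + pullback ψ f := by
  funext l
  induction l generalizing f with
  | nil => simp only [Pi.add_apply, coboundary_nil, prism_nil, pullback_apply, List.map_nil,
      ZModModule.add_self]
  | cons x l ih =>
    have h := ih (cone (φ x) f)
    simp only [Pi.add_apply, pullback_apply, List.map_cons, cone_apply, coboundary_cons,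
      prism_cons, cone_prism, cone_coboundary, map_add, coboundary_pullback] at h ⊢
    grind

lemma prism_apply_eq_zero (φ ψ : X → Y) (f : Cochain Y) (l : List X)
    (h : ∀ l' : List Y, (∀ y ∈ l', ∃ x ∈ l, y = φ x ∨ y = ψ x) → l'.length = l.length + 1 →
      f l' = 0) : prism φ ψ f l = 0 := by
  induction l generalizing f with
  | nil => rfl
  | cons x l ih =>
    rw [prism_cons, h, zero_add]
    · refine ih _ fun l' hl hlen => h _ ?_ (by simp [hlen])
      simp only [List.mem_cons, forall_eq_or_imp, exists_eq_or_imp]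
      exact ⟨.inl (.inl trivial), fun y hy => .inr (hl y hy)⟩
    · simp only [List.mem_cons, forall_eq_or_imp, exists_eq_or_imp, List.mem_map]
      exact ⟨.inl (.inl trivial), .inl (.inr trivial),
        fun y ⟨z, hz, hy⟩ => .inr ⟨z, hz, .inr hy.symm⟩⟩
    · simp

end Operators

/-! ### Relative cohomology of subsets of metric spaces -/

section Cohomology

variable {X Y : Type*} [PseudoMetricSpace X] [PseudoMetricSpace Y]

/-- `l` is an `ε`-small tuple of points of `A`. The empty tuple is excluded when `A` is empty, so
that cohomology relative to `∅` is reduced cohomology. -/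
def IsSmall (ε : ℝ) (A : Set X) (l : List X) : Prop :=
  A.Nonempty ∧ (∀ x ∈ l, x ∈ A) ∧ ∀ x ∈ l, ∀ y ∈ l, dist x y < ε

lemma IsSmall.mono {ε ε' : ℝ} {A A' : Set X} {l : List X} (h : IsSmall ε A l) (hε : ε ≤ ε')
    (hA : A ⊆ A') : IsSmall ε' A' l :=
  ⟨h.1.mono hA, fun x hx => hA (h.2.1 x hx), fun x hx y hy => (h.2.2 x hx y hy).trans_le hε⟩

lemma IsSmall.of_subset {ε : ℝ} {A : Set X} {l l' : List X} (h : IsSmall ε A l) (hl : l' ⊆ l) :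
    IsSmall ε A l' :=
  ⟨h.1, fun x hx => h.2.1 x (hl hx), fun x hx y hy => h.2.2 x (hl hx) y (hl hy)⟩

/-- `f` vanishes on the `ε`-small `n`-tuples of `A`. -/
def VanishesAt (ε : ℝ) (n : ℕ) (A : Set X) (f : Cochain X) : Prop :=
  ∀ l : List X, l.length = n → IsSmall ε A l → f l = 0

lemma VanishesAt.mono {ε ε' : ℝ} {n : ℕ} {A A' : Set X} {f : Cochain X}
    (h : VanishesAt ε n A f) (hε : ε' ≤ ε) (hA : A' ⊆ A) : VanishesAt ε' n A' f :=
  fun l hl hs => h l hl (hs.mono hε hA)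

/-- The cochains vanishing on all sufficiently small `n`-tuples of `A`. -/
def vanishing (n : ℕ) (A : Set X) : Submodule (ZMod 2) (Cochain X) where
  carrier := {f | ∃ ε > 0, VanishesAt ε n A f}
  zero_mem' := ⟨1, one_pos, fun _ _ _ => rfl⟩
  add_mem' := by
    rintro f g ⟨ε, hε, hf⟩ ⟨ε', hε', hg⟩
    refine ⟨min ε ε', lt_min hε hε', fun l hl hs => ?_⟩
    rw [Pi.add_apply, hf.mono (min_le_left ..) le_rfl l hl hs,
      hg.mono (min_le_right ..) le_rfl l hl hs, add_zero]
  smul_mem' := by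
    rintro c f ⟨ε, hε, hf⟩
    exact ⟨ε, hε, fun l hl hs => by rw [Pi.smul_apply, hf l hl hs, smul_zero]⟩

lemma vanishing_anti (n : ℕ) {A B : Set X} (h : A ⊆ B) : vanishing n B ≤ vanishing n A :=
  fun _ ⟨ε, hε, hf⟩ => ⟨ε, hε, hf.mono le_rfl h⟩

lemma vanishing_empty (n : ℕ) (f : Cochain X) : f ∈ vanishing n (∅ : Set X) :=
  ⟨1, one_pos, fun _ _ hs => absurd hs.1 not_nonempty_empty⟩

lemma coboundary_mem_vanishing {n : ℕ} {A : Set X} {f : Cochain X} (hf : f ∈ vanishing n A) :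
    δ f ∈ vanishing (n + 1) A := by
  obtain ⟨ε, hε, hf⟩ := hf
  exact ⟨ε, hε, fun l hl hs => coboundary_apply_eq_zero f l fun l' hl' hlen =>
    hf l' (by omega) (hs.of_subset hl'.subset)⟩

/-- The `q`-cocycles of the pair `(Z, A)`. -/
def cocycles (q : ℕ) (Z A : Set X) : Submodule (ZMod 2) (Cochain X) :=
  vanishing (q + 1) A ⊓ (vanishing (q + 2) Z).comap δ

/-- The `q`-coboundaries of the pair `(Z, A)`; cochains vanishing on small tuples of `Z`, which
represent zero, are included. -/
def coboundaries (q : ℕ) (Z A : Set X) : Submodule (ZMod 2) (Cochain X) :=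
  vanishing (q + 1) Z ⊔ (vanishing q A).map δ

/-- The cohomology group `H^q(Z, A; 𝔽₂)` vanishes. -/
def IsAcyclic (q : ℕ) (Z A : Set X) : Prop := cocycles q Z A ≤ coboundaries q Z A

/-- The image of `M` in the quotient by `N` has dimension at most one, for spaces of cochains
over `𝔽₂`. -/
def RankLEOne (M N : Submodule (ZMod 2) (Cochain X)) : Prop :=
  ∀ f ∈ M, ∀ g ∈ M, f ∈ N ∨ g ∈ N ∨ f + g ∈ N

variable {q n : ℕ} {Z A C : Set X} {f g : Cochain X}

lemma mem_cocycles : f ∈ cocycles q Z A ↔ f ∈ vanishing (q + 1) A ∧ δ f ∈ vanishing (q + 2) Z :=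
  Iff.rfl

lemma mem_coboundaries :
    f ∈ coboundaries q Z A ↔ ∃ g ∈ vanishing q A, f + δ g ∈ vanishing (q + 1) Z := by
  simp only [coboundaries, Submodule.mem_sup, Submodule.mem_map]
  constructor
  · rintro ⟨u, hu, _, ⟨g, hg, rfl⟩, rfl⟩
    exact ⟨g, hg, by rwa [add_assoc, ZModModule.add_self, add_zero]⟩
  · rintro ⟨g, hg, hf⟩
    exact ⟨_, hf, _, ⟨g, hg, rfl⟩, by rw [add_assoc, ZModModule.add_self, add_zero]⟩

lemma cocycles_anti {Z' A' : Set X} (hZ : Z' ⊆ Z) (hA : A' ⊆ A) :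
    cocycles q Z A ≤ cocycles q Z' A' :=
  inf_le_inf (vanishing_anti _ hA) (Submodule.comap_mono (vanishing_anti _ hZ))

lemma coboundaries_anti {Z' A' : Set X} (hZ : Z' ⊆ Z) (hA : A' ⊆ A) :
    coboundaries q Z A ≤ coboundaries q Z' A' :=
  sup_le_sup (vanishing_anti _ hZ) (Submodule.map_mono (vanishing_anti _ hA))

lemma mem_coboundaries_of_vanishing (hf : f ∈ vanishing (q + 1) Z) : f ∈ coboundaries q Z A :=
  Submodule.mem_sup_left hf

lemma exists_scale (hf : f ∈ cocycles q Z A) :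
    ∃ ε > 0, VanishesAt ε (q + 1) A f ∧ VanishesAt ε (q + 2) Z (δ f) := by
  obtain ⟨⟨ε, hε, hA⟩, ε', hε', hZ⟩ := hf
  exact ⟨min ε ε', lt_min hε hε', hA.mono (min_le_left ..) le_rfl,
    hZ.mono (min_le_right ..) le_rfl⟩

/-! ### The exact sequence of a triple -/

lemma exists_cocycle_of_restrict_coboundary (hf : f ∈ cocycles q Z C)
    (hb : f ∈ coboundaries q A C) : ∃ f' ∈ cocycles q Z A, f + f' ∈ coboundaries q Z C := by
  obtain ⟨g, hgC, hgA⟩ := mem_coboundaries.1 hb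
  refine ⟨f + δ g, mem_cocycles.2 ⟨hgA, ?_⟩, mem_coboundaries.2 ⟨g, hgC, ?_⟩⟩
  · rw [map_add, coboundary_coboundary, add_zero]
    exact hf.2
  · rw [show f + (f + δ g) + δ g = 0 by grind]
    exact zero_mem _

lemma coboundary_mem_cocycles (hf : f ∈ cocycles q A C) : δ f ∈ cocycles (q + 1) Z A :=
  mem_cocycles.2 ⟨hf.2, by rw [coboundary_coboundary]; exact zero_mem _⟩

lemma exists_cocycle_of_coboundary_mem (hC : C ⊆ A) (hf : f ∈ cocycles q A C)
    (hb : δ f ∈ coboundaries (q + 1) Z A) :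
    ∃ f' ∈ cocycles q Z C, f + f' ∈ vanishing (q + 1) A := by
  obtain ⟨g, hgA, hgZ⟩ := mem_coboundaries.1 hb
  refine ⟨f + g, mem_cocycles.2 ⟨add_mem hf.1 (vanishing_anti _ hC hgA), ?_⟩, ?_⟩
  · rwa [map_add]
  · rwa [show f + (f + g) = g by grind]

lemma exists_connecting_of_mem_coboundaries (hA : A ⊆ Z) (hf : f ∈ cocycles (q + 1) Z A)
    (hb : f ∈ coboundaries (q + 1) Z C) :
    ∃ g ∈ cocycles q A C, f + δ g ∈ vanishing (q + 2) Z := by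
  obtain ⟨g, hgC, hgZ⟩ := mem_coboundaries.1 hb
  exact ⟨g, mem_cocycles.2
    ⟨hgC, ((vanishing _ A).add_mem_iff_right hf.1).1 (vanishing_anti _ hA hgZ)⟩, hgZ⟩

lemma mem_coboundaries_of_isAcyclic (hA : A ⊆ Z) (hf : f ∈ cocycles (q + 1) Z A)
    (hb : f ∈ coboundaries (q + 1) Z C) (hac : IsAcyclic q A C) :
    f ∈ coboundaries (q + 1) Z A := by
  obtain ⟨g, hg, hfg⟩ := exists_connecting_of_mem_coboundaries hA hf hb
  obtain ⟨k, -, hk⟩ := mem_coboundaries.1 (hac hg)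
  refine mem_coboundaries.2 ⟨g + δ k, hk, ?_⟩
  rwa [map_add, coboundary_coboundary, add_zero]

/-! ### Functoriality and homotopy invariance -/

section Functoriality

variable {φ ψ : X → Y} {Z' A' : Set Y}

lemma pullback_mem_vanishing (hm : MapsTo φ Z Z') (hu : UniformContinuousOn φ Z) {f : Cochain Y}
    (hf : f ∈ vanishing n Z') : pullback φ f ∈ vanishing n Z := by
  obtain ⟨ε, hε, hf⟩ := hf
  obtain ⟨η, hη, hφ⟩ := Metric.uniformContinuousOn_iff.1 hu ε hε
  refine ⟨η, hη, fun l hl hs => hf _ (by simpa using hl)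
    ⟨(hs.1.image φ).mono hm.image_subset, ?_, ?_⟩⟩
  · simpa only [List.forall_mem_map] using fun x hx => hm (hs.2.1 x hx)
  · simpa only [List.forall_mem_map] using fun x hx y hy =>
      hφ x (hs.2.1 x hx) y (hs.2.1 y hy) (hs.2.2 x hx y hy)

lemma pullback_mem_cocycles (hA : A ⊆ Z) (hm : MapsTo φ Z Z') (hm' : MapsTo φ A A')
    (hu : UniformContinuousOn φ Z) {f : Cochain Y} (hf : f ∈ cocycles q Z' A') :
    pullback φ f ∈ cocycles q Z A :=
  mem_cocycles.2 ⟨pullback_mem_vanishing hm' (hu.mono hA) hf.1, by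
    rw [coboundary_pullback]; exact pullback_mem_vanishing hm hu hf.2⟩

lemma pullback_mem_coboundaries (hA : A ⊆ Z) (hm : MapsTo φ Z Z') (hm' : MapsTo φ A A')
    (hu : UniformContinuousOn φ Z) {f : Cochain Y} (hf : f ∈ coboundaries q Z' A') :
    pullback φ f ∈ coboundaries q Z A := by
  obtain ⟨g, hgA, hgZ⟩ := mem_coboundaries.1 hf
  refine mem_coboundaries.2 ⟨pullback φ g, pullback_mem_vanishing hm' (hu.mono hA) hgA, ?_⟩
  rw [coboundary_pullback, ← map_add]
  exact pullback_mem_vanishing hm hu hgZ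

/-- `φ` and `ψ` together map `η`-small tuples of `Z` to `ε`-small ones. -/
def IsContiguous (η ε : ℝ) (Z : Set X) (φ ψ : X → Y) : Prop :=
  ∀ x ∈ Z, ∀ y ∈ Z, dist x y < η →
    dist (φ x) (φ y) < ε ∧ dist (φ x) (ψ y) < ε ∧ dist (ψ x) (ψ y) < ε

lemma IsContiguous.isSmall {η ε : ℝ} (h : IsContiguous η ε Z φ ψ) (hA : A ⊆ Z)
    (hφ : MapsTo φ A A') (hψ : MapsTo ψ A A') {l : List X} (hl : IsSmall η A l) {l' : List Y}
    (hl' : ∀ y ∈ l', ∃ x ∈ l, y = φ x ∨ y = ψ x) : IsSmall ε A' l' := by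
  refine ⟨hl.1.image φ |>.mono hφ.image_subset, fun y hy => ?_, fun y hy y' hy' => ?_⟩
  · obtain ⟨x, hx, rfl | rfl⟩ := hl' y hy
    exacts [hφ (hl.2.1 x hx), hψ (hl.2.1 x hx)]
  · obtain ⟨x, hx, hxy⟩ := hl' y hy
    obtain ⟨x', hx', hxy'⟩ := hl' y' hy'
    have hdist := h x (hA (hl.2.1 x hx)) x' (hA (hl.2.1 x' hx')) (hl.2.2 x hx x' hx')
    have hdist' := h x' (hA (hl.2.1 x' hx')) x (hA (hl.2.1 x hx)) (hl.2.2 x' hx' x hx)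
    rcases hxy with rfl | rfl <;> rcases hxy' with rfl | rfl
    exacts [hdist.1, hdist.2.1, dist_comm (φ x') (ψ x) ▸ hdist'.2.1, hdist.2.2]

lemma IsContiguous.pullback_add_pullback_mem {η ε : ℝ} (h : IsContiguous η ε Z φ ψ) (hη : 0 < η)
    (hA : A ⊆ Z) (hφ : MapsTo φ Z Z') (hψ : MapsTo ψ Z Z') (hφ' : MapsTo φ A A')
    (hψ' : MapsTo ψ A A') {f : Cochain Y} (hfA : VanishesAt ε (q + 1) A' f)
    (hfZ : VanishesAt ε (q + 2) Z' (δ f)) :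
    pullback φ f + pullback ψ f ∈ coboundaries q Z A := by
  refine mem_coboundaries.2 ⟨prism φ ψ f, ⟨η, hη, fun l hl hs => ?_⟩, η, hη, fun l hl hs => ?_⟩
  · exact prism_apply_eq_zero _ _ _ _ fun l' hmem hlen =>
      hfA l' (by omega) (h.isSmall hA hφ' hψ' hs hmem)
  · rw [← coboundary_prism_add_prism_coboundary, add_right_comm, ZModModule.add_self, zero_add]
    exact prism_apply_eq_zero _ _ _ _ fun l' hmem hlen =>
      hfZ l' (by omega) (h.isSmall le_rfl hφ hψ hs hmem)

lemma pullback_add_self_mem_coboundaries {r : X → X} {W B : Set X} (hB : B ⊆ W) (hW : W ⊆ Z)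
    (hBA : B ⊆ A) (hrW : MapsTo r W Z) (hrB : MapsTo r B A) {ε η : ℝ} (hη : 0 < η)
    (hηε : 4 * η ≤ ε) (hfA : VanishesAt ε (q + 1) A f) (hfZ : VanishesAt ε (q + 2) Z (δ f))
    (hr : ∀ x ∈ W, dist (r x) x < η) : pullback r f + f ∈ coboundaries q W B := by
  have h : IsContiguous η ε W r id := fun x hx y hy hxy => by
    have := dist_triangle4 (r x) x y (r y)
    have := dist_triangle (r x) x y
    have := dist_comm y (r y)
    have := hr x hx
    have := hr y hy
    exact ⟨by linarith, by simp only [id]; linarith, by simp only [id]; linarith⟩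
  simpa only [pullback_id] using
    h.pullback_add_pullback_mem hη hB hrW (fun _ hx => hW hx) hrB (fun _ hx => hBA hx) hfA hfZ

lemma pullback_add_pullback_mem_coboundaries_of_homotopy {h : ℝ → X → Y} (hA : A ⊆ Z)
    (hZ : IsCompact Z) (hm : ∀ t ∈ Icc (0 : ℝ) 1, MapsTo (h t) Z Z')
    (hm' : ∀ t ∈ Icc (0 : ℝ) 1, MapsTo (h t) A A')
    (hc : ContinuousOn (fun p : ℝ × X => h p.1 p.2) (Icc 0 1 ×ˢ Z))
    {f : Cochain Y} (hf : f ∈ cocycles q Z' A') :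
    pullback (h 0) f + pullback (h 1) f ∈ coboundaries q Z A := by
  obtain ⟨ε, hε, hfA, hfZ⟩ := exists_scale hf
  obtain ⟨η, hη, hηε⟩ := Metric.uniformContinuousOn_iff.1
    ((isCompact_Icc.prod hZ).uniformContinuousOn_of_continuous hc) ε hε
  refine isPreconnected_Icc.induction₂
    (fun s t => pullback (h s) f + pullback (h t) f ∈ coboundaries q Z A) (fun s hs => ?_)
    (fun s t u _ _ _ hst htu => ?_) (fun s t _ _ hst => by rwa [add_comm])
    (left_mem_Icc.2 zero_le_one) (right_mem_Icc.2 zero_le_one)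
  · filter_upwards [inter_mem_nhdsWithin _ (ball_mem_nhds s hη)] with t ht
    have hclose : IsContiguous η ε Z (h s) (h t) := fun x hx y hy hxy =>
      ⟨hηε (s, x) ⟨hs, hx⟩ (s, y) ⟨hs, hy⟩ (max_lt (by simpa using hη) hxy),
        hηε (s, x) ⟨hs, hx⟩ (t, y) ⟨ht.1, hy⟩ (max_lt (mem_ball'.1 ht.2) hxy),
        hηε (t, x) ⟨ht.1, hx⟩ (t, y) ⟨ht.1, hy⟩ (max_lt (by simpa using hη) hxy)⟩
    exact hclose.pullback_add_pullback_mem hη hA (hm s hs) (hm t ht.1) (hm' s hs) (hm' t ht.1)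
      hfA hfZ
  · simpa only [ZModModule.add_add_add_cancel] using add_mem hst htu

end Functoriality

/-! ### Acyclic spaces -/

lemma isAcyclic_self (q : ℕ) (Z : Set X) : IsAcyclic q Z Z :=
  fun _ hf => mem_coboundaries_of_vanishing hf.1

lemma isAcyclic_empty (q : ℕ) (A : Set X) : IsAcyclic q ∅ A :=
  fun f _ => mem_coboundaries_of_vanishing (vanishing_empty _ f)

lemma isAcyclic_singleton (q : ℕ) (x : X) : IsAcyclic q {x} ∅ := by
  rintro f ⟨-, ε, hε, hf⟩
  refine mem_coboundaries.2 ⟨cone x f, vanishing_empty _ _, ε, hε, fun l hl hs => ?_⟩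
  rw [← cone_coboundary]
  have hmem : ∀ y ∈ x :: l, y = x := by simpa using hs.2.1
  refine hf (x :: l) (by simp [hl]) ⟨hs.1, hmem, fun y hy z hz => ?_⟩
  rwa [hmem y hy, hmem z hz, dist_self]

lemma isAcyclic_of_contraction (hZ : IsCompact Z) {h : ℝ → X → X} {x : X} (hx : x ∈ Z)
    (hm : ∀ t ∈ Icc (0 : ℝ) 1, MapsTo (h t) Z Z)
    (hc : ContinuousOn (fun p : ℝ × X => h p.1 p.2) (Icc 0 1 ×ˢ Z))
    (h0 : ∀ y ∈ Z, h 0 y = y) (h1 : ∀ y ∈ Z, h 1 y = x) (q : ℕ) : IsAcyclic q Z ∅ := by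
  intro f hf
  have hhom : pullback (h 0) f + pullback (h 1) f ∈ coboundaries q Z ∅ :=
    pullback_add_pullback_mem_coboundaries_of_homotopy (empty_subset Z) hZ hm
      (fun _ _ => mapsTo_empty _ ∅) hc hf
  have hconst : pullback (fun _ => x) f ∈ coboundaries q Z ∅ :=
    pullback_mem_coboundaries (empty_subset Z) (fun _ _ => mem_singleton x) (mapsTo_empty _ _)
      uniformContinuous_const.uniformContinuousOn
      (isAcyclic_singleton q x (cocycles_anti (singleton_subset_iff.2 hx) le_rfl hf))
  have hends : f + (pullback (h 0) f + pullback (h 1) f + pullback (fun _ => x) f) ∈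
      vanishing (q + 1) Z := by
    refine ⟨1, one_pos, fun l _ hs => ?_⟩
    have e0 : l.map (h 0) = l :=
      (List.map_congr_left fun y hy => h0 y (hs.2.1 y hy)).trans l.map_id
    have e1 : l.map (h 1) = l.map fun _ => x :=
      List.map_congr_left fun y hy => h1 y (hs.2.1 y hy)
    simp only [Pi.add_apply, pullback_apply, e0, e1]
    exact (by decide : ∀ a b : ZMod 2, a + (a + b + b) = 0) _ _
  exact ((coboundaries q Z ∅).add_mem_iff_left (add_mem hhom hconst)).1
    (mem_coboundaries_of_vanishing hends)

end Cohomology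

/-! ### Tautness and excision -/

section Excision

variable {X : Type*} [MetricSpace X] {q n : ℕ} {A B Z : Set X} {f g : Cochain X}

lemma exists_dist_inter_lt (hA : IsCompact A) (hB : IsCompact B) {η : ℝ} (hη : 0 < η) :
    ∃ τ > 0, ∀ x ∈ A, ∀ y ∈ B, dist x y < τ → ∃ z ∈ A ∩ B, dist y z < η := by
  have hdisj : Disjoint A (B \ thickening η (A ∩ B)) :=
    disjoint_left.2 fun x hx hx' => hx'.2 (self_subset_thickening hη _ ⟨hx, hx'.1⟩)
  obtain ⟨τ, hτ, h⟩ := hdisj.exists_thickenings hA (hB.diff isOpen_thickening).isClosed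
  refine ⟨τ, hτ, fun x hx y hy hxy => ?_⟩
  by_contra hfar
  exact disjoint_left.1 h (mem_thickening_iff.2 ⟨x, hx, by rwa [dist_comm]⟩)
    (self_subset_thickening hτ _ ⟨hy, fun h' => hfar (mem_thickening_iff.1 h')⟩)

-- `r` is not continuous: cochains only see the distances between the points of a small tuple.
lemma exists_retraction_near (hA : IsCompact A) (hZ : IsCompact Z) {ε : ℝ} (hε : 0 < ε) :
    ∃ η > 0, ∃ r : X → X, (∀ x, dist (r x) x < ε) ∧ MapsTo r (thickening η Z) Z ∧
      MapsTo r (A ∩ thickening η Z) A ∧ ∀ x ∉ thickening η Z, r x = x := by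
  obtain ⟨τ, hτ, hclose⟩ := exists_dist_inter_lt hZ hA hε
  have hpoint : ∀ x, ∃ y, dist y x < ε ∧
      (x ∈ thickening (min τ ε) Z → y ∈ Z ∧ (x ∈ A → y ∈ A)) ∧
      (x ∉ thickening (min τ ε) Z → y = x) := fun x => by
    by_cases hx : x ∈ thickening (min τ ε) Z
    · obtain ⟨z, hz, hxz⟩ := mem_thickening_iff.1 hx
      by_cases hxA : x ∈ A
      · obtain ⟨w, hw, hxw⟩ := hclose z hz x hxA
          (by rw [dist_comm]; exact hxz.trans_le (min_le_left _ _))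
        exact ⟨w, by rwa [dist_comm], fun _ => ⟨hw.1, fun _ => hw.2⟩, absurd hx⟩
      · exact ⟨z, by rw [dist_comm]; exact hxz.trans_le (min_le_right _ _),
          fun _ => ⟨hz, fun h => absurd h hxA⟩, absurd hx⟩
    · exact ⟨x, by simpa, fun h => absurd h hx, fun _ => rfl⟩
  choose r hr using hpoint
  exact ⟨min τ ε, lt_min hτ hε, r, fun x => (hr x).1, fun x hx => ((hr x).2.1 hx).1,
    fun x hx => ((hr x).2.1 hx.2).2 hx.1, fun x => (hr x).2.2⟩

lemma VanishesAt.pullback_near {r : X → X} {ε η : ℝ} (hf : VanishesAt ε n A f)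
    (hr : ∀ x, dist (r x) x < η) (hm : MapsTo r B A) :
    VanishesAt (ε - 2 * η) n B (pullback r f) := by
  refine fun l hl hs => hf _ (by simpa using hl) ⟨(hs.1.image r).mono hm.image_subset, ?_, ?_⟩
  · simpa only [List.forall_mem_map] using fun x hx => hm (hs.2.1 x hx)
  · simp only [List.forall_mem_map]
    intro x hx y hy
    linarith [hs.2.2 x hx y hy, hr x, hr y, dist_comm y (r y), dist_triangle4 (r x) x y (r y)]

lemma exists_cocycle_thickening (hA : IsCompact A) (hAZ : A ⊆ Z) (hf : f ∈ cocycles q Z A) :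
    ∃ η > 0, ∃ f' ∈ cocycles q Z (Z ∩ thickening η A), f + f' ∈ coboundaries q Z A := by
  obtain ⟨ε, hε, hfA, hfZ⟩ := exists_scale hf
  obtain ⟨η, hη, r, hr, hrA, -, hid⟩ :=
    exists_retraction_near isCompact_empty hA (show 0 < ε / 4 by positivity)
  have hrZ : MapsTo r Z Z := fun x hx => by
    by_cases h : x ∈ thickening η A
    exacts [hAZ (hrA h), (hid x h).symm ▸ hx]
  refine ⟨η, hη, pullback r f, mem_cocycles.2 ⟨⟨ε - 2 * (ε / 4), by linarith, ?_⟩,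
    ⟨ε - 2 * (ε / 4), by linarith, ?_⟩⟩, ?_⟩
  · exact hfA.pullback_near hr fun x hx => hrA hx.2
  · rw [coboundary_pullback]
    exact hfZ.pullback_near hr hrZ
  · rw [add_comm]
    exact pullback_add_self_mem_coboundaries hAZ le_rfl le_rfl hrZ
      (fun x hx => hrA (self_subset_thickening hη _ hx)) (by positivity) (by linarith) hfA hfZ
      fun x _ => hr x

lemma exists_mem_coboundaries_thickening (hA : IsCompact A) (hB : IsCompact B) (hBZ : B ⊆ Z)
    (hf : f ∈ cocycles q Z A) (hb : f ∈ coboundaries q B (A ∩ B)) :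
    ∃ η > 0, f ∈ coboundaries q (Z ∩ thickening η B) (A ∩ (Z ∩ thickening η B)) := by
  obtain ⟨ε₁, hε₁, hfA, hfZ⟩ := exists_scale hf
  obtain ⟨g, ⟨ε₂, hε₂, hgA⟩, ε₃, hε₃, hgB⟩ := mem_coboundaries.1 hb
  obtain ⟨ε, hε, hε₁', hε₂', hε₃'⟩ : ∃ ε > 0, ε ≤ ε₁ ∧ ε ≤ ε₂ ∧ ε ≤ ε₃ :=
    ⟨min ε₁ (min ε₂ ε₃), by positivity, by simp⟩
  obtain ⟨η, hη, r, hr, hrB, hrA, -⟩ :=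
    exists_retraction_near hA hB (show 0 < ε / 4 by positivity)
  have hrAB : MapsTo r (A ∩ (Z ∩ thickening η B)) (A ∩ B) :=
    fun x hx => ⟨hrA ⟨hx.1, hx.2.2⟩, hrB hx.2.2⟩
  have hclose : pullback r f + f ∈
      coboundaries q (Z ∩ thickening η B) (A ∩ (Z ∩ thickening η B)) :=
    pullback_add_self_mem_coboundaries inter_subset_right inter_subset_left inter_subset_left
      (fun x hx => hBZ (hrB hx.2)) (fun x hx => (hrAB hx).1) (by positivity) (by linarith)
      (hfA.mono hε₁' le_rfl) (hfZ.mono hε₁' le_rfl) fun x _ => hr x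
  refine ⟨η, hη, ((coboundaries _ _ _).add_mem_iff_right ?_).1 hclose⟩
  refine mem_coboundaries.2 ⟨pullback r g, ⟨ε - 2 * (ε / 4), by linarith, ?_⟩,
    ε - 2 * (ε / 4), by linarith, ?_⟩
  · exact (hgA.mono hε₂' le_rfl).pullback_near hr hrAB
  · rw [coboundary_pullback, ← map_add]
    exact (hgB.mono hε₃' le_rfl).pullback_near hr fun x hx => hrB hx.2

lemma mem_vanishing_union (hA : IsCompact A) (hB : IsCompact B) {η : ℝ} (hη : 0 < η)
    (hfB : f ∈ vanishing n B) (hfA : f ∈ vanishing n (A ∪ B ∩ thickening η (A ∩ B))) :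
    f ∈ vanishing n (A ∪ B) := by
  obtain ⟨ε₁, hε₁, hfB⟩ := hfB
  obtain ⟨ε₂, hε₂, hfA⟩ := hfA
  obtain ⟨τ, hτ, hclose⟩ := exists_dist_inter_lt hA hB hη
  refine ⟨min τ (min ε₁ ε₂), by positivity, fun l hl hs => ?_⟩
  by_cases hlB : B.Nonempty ∧ ∀ x ∈ l, x ∈ B
  · exact hfB l hl ⟨hlB.1, hlB.2, (hs.mono (by simp) le_rfl).2.2⟩
  suffices hN : ∃ x ∈ A, ∀ y ∈ l, dist x y < τ ∨ y ∈ A by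
    obtain ⟨x, hx, hxl⟩ := hN
    refine hfA l hl ⟨⟨x, .inl hx⟩, fun y hy => ?_, (hs.mono (by simp) le_rfl).2.2⟩
    refine (hs.2.1 y hy).imp_right fun hyB => ?_
    rcases hxl y hy with hxy | hyA
    · exact ⟨hyB, mem_thickening_iff.2 (hclose x hx y hyB hxy)⟩
    · exact ⟨hyB, self_subset_thickening hη _ ⟨hyA, hyB⟩⟩
  rcases B.eq_empty_or_nonempty with rfl | hBne
  · rw [union_empty] at hs
    exact ⟨_, hs.1.some_mem, fun y hy => .inr (hs.2.1 y hy)⟩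
  · obtain ⟨x, hx, hxB⟩ : ∃ x ∈ l, x ∉ B := by simpa [hBne] using hlB
    exact ⟨x, (hs.2.1 x hx).resolve_right hxB, fun y hy =>
      .inl ((hs.2.2 x hx y hy).trans_le (min_le_left _ _))⟩

lemma exists_extension_by_zero {η : ℝ} (hη : 0 < η)
    (hf : f ∈ vanishing (n + 1) (B ∩ thickening η (A ∩ B))) :
    ∃ g ∈ vanishing (n + 1) (A ∪ B ∩ thickening η (A ∩ B)), g + f ∈ vanishing (n + 1) B := by
  classical
  obtain ⟨ε, hε, hf⟩ := hf
  refine ⟨fun l => if ∀ x ∈ l, x ∈ B then f l else 0, ⟨ε, hε, fun l hl hs => ?_⟩,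
    1, one_pos, fun l _ hs => ?_⟩
  · refine ite_eq_right_iff.2 fun hlB => hf l hl ?_
    have hmem : ∀ x ∈ l, x ∈ B ∩ thickening η (A ∩ B) := fun x hx =>
      (hs.2.1 x hx).elim (fun hA => ⟨hlB x hx, self_subset_thickening hη _ ⟨hA, hlB x hx⟩⟩) id
    obtain ⟨x, hx⟩ := List.exists_mem_of_length_eq_add_one hl
    exact ⟨⟨x, hmem x hx⟩, hmem, hs.2.2⟩
  · simp only [Pi.add_apply, if_pos hs.2.1, ZModModule.add_self]

lemma exists_excision_preimage (hA : IsCompact A) (hB : IsCompact B)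
    (hf : f ∈ cocycles q B (A ∩ B)) :
    ∃ f' ∈ cocycles q (A ∪ B) A, f + f' ∈ coboundaries q B (A ∩ B) := by
  obtain ⟨η, hη, f₁, hf₁, hff₁⟩ :=
    exists_cocycle_thickening (hA.inter hB) inter_subset_right hf
  obtain ⟨f', hf'A, hf'B⟩ := exists_extension_by_zero hη hf₁.1
  refine ⟨f', mem_cocycles.2 ⟨vanishing_anti _ subset_union_left hf'A, ?_⟩, ?_⟩
  · refine mem_vanishing_union hA hB hη ?_ (coboundary_mem_vanishing hf'A)
    have h := coboundary_mem_vanishing hf'B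
    rw [map_add] at h
    exact ((vanishing _ B).add_mem_iff_left hf₁.2).1 h
  · rw [show f + f' = f + f₁ + (f' + f₁) by grind]
    exact add_mem hff₁ (mem_coboundaries_of_vanishing hf'B)

lemma mem_coboundaries_of_thickening (hA : IsCompact A) (hB : IsCompact B) {η : ℝ} (hη : 0 < η)
    (hf : f ∈ cocycles (q + 1) (A ∪ B) ((A ∪ B) ∩ thickening η A))
    (hb : f ∈ coboundaries (q + 1) B (B ∩ thickening η (A ∩ B))) :
    f ∈ coboundaries (q + 1) (A ∪ B) A := by
  obtain ⟨g, hg, hfg⟩ := mem_coboundaries.1 hb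
  obtain ⟨g', hg'A, hg'B⟩ := exists_extension_by_zero hη hg
  refine mem_coboundaries.2
    ⟨g', vanishing_anti _ subset_union_left hg'A, mem_vanishing_union hA hB hη ?_ ?_⟩
  · rw [show f + δ g' = f + δ g + δ (g' + g) by grind]
    exact add_mem hfg (coboundary_mem_vanishing hg'B)
  · refine add_mem (vanishing_anti _ (union_subset ?_ ?_) hf.1) (coboundary_mem_vanishing hg'A)
    · exact fun x hx => ⟨.inl hx, self_subset_thickening hη _ hx⟩
    · exact fun x hx => ⟨.inr hx.1, thickening_subset_of_subset _ inter_subset_left hx.2⟩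

lemma mem_coboundaries_of_excision (hA : IsCompact A) (hB : IsCompact B)
    (hf : f ∈ cocycles (q + 1) (A ∪ B) A) (hb : f ∈ coboundaries (q + 1) B (A ∩ B)) :
    f ∈ coboundaries (q + 1) (A ∪ B) A := by
  obtain ⟨η, hη, f', hf', hff'⟩ := exists_cocycle_thickening hA subset_union_left hf
  have hDη : B ∩ thickening η (A ∩ B) ⊆ (A ∪ B) ∩ thickening η A := fun x hx =>
    ⟨.inr hx.1, thickening_subset_of_subset _ inter_subset_left hx.2⟩
  have hb' : f' ∈ coboundaries (q + 1) B (A ∩ B) :=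
    ((coboundaries _ _ _).add_mem_iff_right hb).1
      (coboundaries_anti subset_union_right inter_subset_left hff')
  -- On `B` we have `f' = δ g` with `g` vanishing on `A ∩ B`; near `A ∩ B` the cochain `g` is a
  -- cocycle, so by tautness it can be made to vanish there.
  obtain ⟨g, hg, hfg⟩ := exists_connecting_of_mem_coboundaries inter_subset_left
    (cocycles_anti subset_union_right hDη hf') hb'
  have hsub : A ∩ B ⊆ B ∩ thickening η (A ∩ B) := fun x hx =>
    ⟨hx.2, self_subset_thickening hη _ hx⟩
  obtain ⟨τ, hτ, hgτ⟩ := exists_mem_coboundaries_thickening (hA.inter hB) (hA.inter hB) hsub hg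
    (mem_coboundaries_of_vanishing hg.1)
  obtain ⟨k, -, hk⟩ := mem_coboundaries.1 hgτ
  refine ((coboundaries _ _ _).add_mem_iff_left ?_).1 hff'
  have hmin : 0 < min η τ := lt_min hη hτ
  refine mem_coboundaries_of_thickening hA hB hmin (cocycles_anti le_rfl
    (inter_subset_inter_right _ (thickening_mono (min_le_left ..) _)) hf') ?_
  have hN : B ∩ thickening (min η τ) (A ∩ B) ⊆
      B ∩ thickening η (A ∩ B) ∩ thickening τ (A ∩ B) := fun x hx =>
    ⟨⟨hx.1, thickening_mono (min_le_left ..) _ hx.2⟩, thickening_mono (min_le_right ..) _ hx.2⟩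
  refine mem_coboundaries.2 ⟨g + δ k, vanishing_anti _ hN hk, ?_⟩
  rwa [map_add, coboundary_coboundary, add_zero]

lemma isAcyclic_union_left (hA : IsCompact A) (hB : IsCompact B)
    (h : IsAcyclic (q + 1) B (A ∩ B)) : IsAcyclic (q + 1) (A ∪ B) A := fun _ hf =>
  mem_coboundaries_of_excision hA hB hf
    (h (cocycles_anti subset_union_right inter_subset_left hf))

lemma mem_coboundaries_union {Z₁ Z₂ : Set X} (hZ₁ : IsCompact Z₁) (hZ₂ : IsCompact Z₂)
    (hA : IsCompact A) (hAZ : A ⊆ Z₁ ∪ Z₂) (hac : IsAcyclic q ((A ∪ Z₁) ∩ Z₂) (A ∩ Z₂))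
    (hf : f ∈ cocycles (q + 1) (Z₁ ∪ Z₂) A) (hb₁ : f ∈ coboundaries (q + 1) Z₁ (A ∩ Z₁))
    (hb₂ : f ∈ coboundaries (q + 1) Z₂ (A ∩ Z₂)) : f ∈ coboundaries (q + 1) (Z₁ ∪ Z₂) A := by
  have hunion : A ∪ Z₁ ∪ Z₂ = Z₁ ∪ Z₂ := by rw [union_assoc, union_eq_right.2 hAZ]
  obtain ⟨f', hf', hff'⟩ := exists_cocycle_of_restrict_coboundary hf
    (mem_coboundaries_of_excision hA hZ₁
      (cocycles_anti (union_subset hAZ subset_union_left) le_rfl hf) hb₁)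
  refine ((coboundaries _ _ _).add_mem_iff_left
    (coboundaries_anti (A := A ∪ Z₁) le_rfl subset_union_left ?_)).1 hff'
  have hb₂' : f' ∈ coboundaries (q + 1) Z₂ (A ∩ Z₂) :=
    ((coboundaries _ _ _).add_mem_iff_right hb₂).1
      (coboundaries_anti subset_union_right inter_subset_left hff')
  rw [← hunion] at hf' ⊢
  exact mem_coboundaries_of_excision (hA.union hZ₁) hZ₂ hf' (mem_coboundaries_of_isAcyclic
    inter_subset_right (cocycles_anti subset_union_right inter_subset_left hf') hb₂' hac)

end Excision

/-! ### Cohomological dimension -/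

section Dimension

variable {X : Type*} [MetricSpace X] {q k : ℕ} {A Z : Set X} {f : Cochain X}

/-- `Z` has cohomological dimension at most `k` over `𝔽₂`. -/
def DimLE (k : ℕ) (Z : Set X) : Prop :=
  ∀ q, k < q → ∀ A ⊆ Z, IsCompact A → IsAcyclic q Z A

lemma DimLE.mono {L : Set X} (hZ : DimLE k Z) (hLZ : L ⊆ Z) (hL : IsCompact L) : DimLE k L := by
  intro q hq A hA hAc f hf
  obtain ⟨f', hf', hff'⟩ := exists_cocycle_of_coboundary_mem hA hf
    (hZ (q + 1) (by omega) L hLZ hL (coboundary_mem_cocycles hf))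
  have hb : f' ∈ coboundaries q L A :=
    coboundaries_anti hLZ le_rfl (hZ q hq A (hA.trans hLZ) hAc hf')
  exact ((coboundaries _ _ _).add_mem_iff_left hb).1 (mem_coboundaries_of_vanishing hff')

lemma dimLE_of_subsingleton (hZ : Z.Subsingleton) : DimLE 0 Z := by
  intro q _ A hA _
  rcases hZ.eq_empty_or_singleton with rfl | ⟨x, rfl⟩
  · exact isAcyclic_empty q A
  · rcases subset_singleton_iff_eq.1 hA with rfl | rfl
    exacts [isAcyclic_singleton q x, isAcyclic_self q _]

lemma DimLE.union {Z₁ Z₂ : Set X} (hZ₁ : IsCompact Z₁) (hZ₂ : IsCompact Z₂) (h₁ : DimLE k Z₁)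
    (h₂ : DimLE k Z₂) : DimLE k (Z₁ ∪ Z₂) := by
  intro q hq A hA hAc f hf
  obtain ⟨q, rfl⟩ := Nat.exists_eq_succ_of_ne_zero (Nat.ne_zero_of_lt hq)
  have hunion : A ∪ Z₁ ∪ Z₂ = Z₁ ∪ Z₂ := by rw [union_assoc, union_eq_right.2 hA]
  obtain ⟨f', hf', hff'⟩ := exists_cocycle_of_restrict_coboundary hf
    (isAcyclic_union_left hAc hZ₁ (h₁ _ hq _ inter_subset_right (hAc.inter hZ₁))
      (cocycles_anti (union_subset hA subset_union_left) le_rfl hf))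
  refine ((coboundaries _ _ _).add_mem_iff_left
    (coboundaries_anti (A := A ∪ Z₁) le_rfl subset_union_left ?_)).1 hff'
  rw [← hunion] at hf' ⊢
  exact isAcyclic_union_left (hAc.union hZ₁) hZ₂
    (h₂ _ hq _ inter_subset_right ((hAc.union hZ₁).inter hZ₂)) hf'

variable {φ : X → ℝ}

lemma exists_slab_mem_coboundaries (hZ : IsCompact Z) (hφ : Continuous φ) (hA : IsCompact A)
    (hAZ : A ⊆ Z) (hf : f ∈ cocycles q Z A) {t : ℝ}
    (hb : f ∈ coboundaries q (Z ∩ φ ⁻¹' {t}) (A ∩ (Z ∩ φ ⁻¹' {t}))) :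
    ∃ ρ > 0, f ∈ coboundaries q (Z ∩ φ ⁻¹' ball t ρ) (A ∩ φ ⁻¹' ball t ρ) := by
  obtain ⟨η, hη, h⟩ := exists_mem_coboundaries_thickening hA
    (hZ.inter_right (isClosed_singleton.preimage hφ)) inter_subset_left hf hb
  have hclosed : IsClosed (φ '' (Z \ thickening η (Z ∩ φ ⁻¹' {t}))) :=
    ((hZ.diff isOpen_thickening).image hφ).isClosed
  have ht : t ∉ φ '' (Z \ thickening η (Z ∩ φ ⁻¹' {t})) := by
    rintro ⟨x, hx, hxt⟩
    exact hx.2 (self_subset_thickening hη _ ⟨hx.1, hxt⟩)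
  obtain ⟨ρ, hρ, hball⟩ := Metric.isOpen_iff.1 hclosed.isOpen_compl t ht
  have hsub : Z ∩ φ ⁻¹' ball t ρ ⊆ Z ∩ thickening η (Z ∩ φ ⁻¹' {t}) := fun x hx =>
    ⟨hx.1, by_contra fun hfar => hball hx.2 ⟨x, ⟨hx.1, hfar⟩, rfl⟩⟩
  refine ⟨ρ, hρ, coboundaries_anti hsub ?_ h⟩
  exact fun x hx => ⟨hx.1, hsub ⟨hAZ hx.1, hx.2⟩⟩

lemma glue_slabs (hZ : IsCompact Z) (hφ : Continuous φ) (hA : IsCompact A) (hAZ : A ⊆ Z)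
    (hf : f ∈ cocycles (q + 1) Z A) {a b c : ℝ} (hab : a ≤ b) (hbc : b ≤ c)
    (hac : DimLE k (Z ∩ φ ⁻¹' {b})) (hk : k < q)
    (h₁ : f ∈ coboundaries (q + 1) (Z ∩ φ ⁻¹' Icc a b) (A ∩ φ ⁻¹' Icc a b))
    (h₂ : f ∈ coboundaries (q + 1) (Z ∩ φ ⁻¹' Icc b c) (A ∩ φ ⁻¹' Icc b c)) :
    f ∈ coboundaries (q + 1) (Z ∩ φ ⁻¹' Icc a c) (A ∩ φ ⁻¹' Icc a c) := by
  obtain ⟨q, rfl⟩ := Nat.exists_eq_succ_of_ne_zero (Nat.ne_zero_of_lt hk)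
  have hcpt {s : Set ℝ} (hs : IsClosed s) {K : Set X} (hK : IsCompact K) :
      IsCompact (K ∩ φ ⁻¹' s) := hK.inter_right (hs.preimage hφ)
  have hunion : Z ∩ φ ⁻¹' Icc a b ∪ Z ∩ φ ⁻¹' Icc b c = Z ∩ φ ⁻¹' Icc a c := by
    rw [← inter_union_distrib_left, ← preimage_union, Icc_union_Icc_eq_Icc hab hbc]
  have hinter : (A ∩ φ ⁻¹' Icc a c ∪ Z ∩ φ ⁻¹' Icc a b) ∩ (Z ∩ φ ⁻¹' Icc b c) =
      A ∩ φ ⁻¹' Icc b c ∪ Z ∩ φ ⁻¹' {b} := by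
    ext x
    have := @hAZ x
    simp only [mem_inter_iff, mem_union, mem_preimage, mem_Icc, mem_singleton_iff]
    grind
  have hA₁ : A ∩ φ ⁻¹' Icc a c ∩ (Z ∩ φ ⁻¹' Icc a b) = A ∩ φ ⁻¹' Icc a b := by
    ext x
    have := @hAZ x
    simp only [mem_inter_iff, mem_preimage, mem_Icc]
    grind
  have hA₂ : A ∩ φ ⁻¹' Icc a c ∩ (Z ∩ φ ⁻¹' Icc b c) = A ∩ φ ⁻¹' Icc b c := by
    ext x
    have := @hAZ x
    simp only [mem_inter_iff, mem_preimage, mem_Icc]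
    grind
  rw [← hunion]
  refine mem_coboundaries_union (hcpt isClosed_Icc hZ) (hcpt isClosed_Icc hZ)
    (hcpt isClosed_Icc hA) ?_ ?_ ?_ (hA₁.symm ▸ h₁) (hA₂.symm ▸ h₂)
  · exact hunion ▸ inter_subset_inter_left _ hAZ
  · rw [hinter, hA₂]
    exact isAcyclic_union_left (hcpt isClosed_Icc hA) (hcpt isClosed_singleton hZ)
      (hac _ hk _ inter_subset_right ((hcpt isClosed_Icc hA).inter (hcpt isClosed_singleton hZ)))
  · exact hunion ▸ cocycles_anti inter_subset_left inter_subset_left hf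

lemma dimLE_of_fibers (hZ : IsCompact Z) (hφ : Continuous φ)
    (h : ∀ t, DimLE k (Z ∩ φ ⁻¹' {t})) : DimLE (k + 1) Z := by
  rintro (_ | q) hq A hAZ hA f hf
  · omega
  have hk : k < q := by omega
  set P : ℝ → ℝ → Prop := fun s t =>
    f ∈ coboundaries (q + 1) (Z ∩ φ ⁻¹' Icc s t) (A ∩ φ ⁻¹' Icc s t)
  have hmono {s t u v : ℝ} (hus : u ≤ s) (htv : t ≤ v) (hP : P u v) : P s t := by
    have hsub : φ ⁻¹' Icc s t ⊆ φ ⁻¹' Icc u v := preimage_mono (Icc_subset_Icc hus htv)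
    exact coboundaries_anti (inter_subset_inter_right _ hsub) (inter_subset_inter_right _ hsub) hP
  have hlocal (t : ℝ) : ∀ᶠ s in 𝓝 t, P t s ∧ P s t := by
    obtain ⟨ρ, hρ, hb⟩ := exists_slab_mem_coboundaries hZ hφ hA hAZ hf
      (h t (q + 1) (by omega) _ inter_subset_right
        (hA.inter (hZ.inter_right (isClosed_singleton.preimage hφ)))
        (cocycles_anti inter_subset_left inter_subset_left hf))
    have hP {s u : ℝ} (hs : s ∈ ball t ρ) (hu : u ∈ ball t ρ) : P s u := by
      have hsub : φ ⁻¹' Icc s u ⊆ φ ⁻¹' ball t ρ :=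
        preimage_mono ((convex_ball t ρ).ordConnected.out hs hu)
      exact coboundaries_anti (inter_subset_inter_right _ hsub)
        (inter_subset_inter_right _ hsub) hb
    filter_upwards [ball_mem_nhds t hρ] with s hs
    exact ⟨hP (mem_ball_self hρ) hs, hP hs (mem_ball_self hρ)⟩
  have htrans (s t u : ℝ) (hst : P s t) (htu : P t u) : P s u := by
    rcases le_total t s with h₁ | h₁
    · exact hmono h₁ le_rfl htu
    rcases le_total u t with h₂ | h₂
    · exact hmono le_rfl h₂ hst
    · exact glue_slabs hZ hφ hA hAZ hf h₁ h₂ (h t) hk hst htu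
  obtain ⟨R, hR⟩ := (hZ.image hφ).isBounded.subset_closedBall 0
  have hP : P (-R) R := isPreconnected_univ.induction₂' P (fun t _ => by
    simpa only [nhdsWithin_univ] using hlocal t) (fun s t u _ _ _ => htrans s t u)
    (mem_univ _) (mem_univ _)
  have hsub : Z ⊆ φ ⁻¹' Icc (-R) R := fun x hx =>
    by simpa [Real.closedBall_eq_Icc] using hR (mem_image_of_mem φ hx)
  simpa only [P, inter_eq_left.2 hsub, inter_eq_left.2 (hAZ.trans hsub)] using hP

lemma exists_cocycle_add_cocycle {A₁ A₂ : Set X} (hZ : DimLE k Z) (hA₁ : IsCompact A₁)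
    (hA₂ : IsCompact A₂) (hA₁Z : A₁ ⊆ Z) (hA₂Z : A₂ ⊆ Z) (hf : f ∈ cocycles k Z (A₁ ∩ A₂)) :
    ∃ f₁ ∈ cocycles k Z A₁, ∃ f₂ ∈ cocycles k Z A₂,
      f + (f₁ + f₂) ∈ coboundaries k Z (A₁ ∩ A₂) := by
  rw [inter_comm] at hf ⊢
  obtain ⟨f', hf', hff'⟩ := exists_excision_preimage hA₂ hA₁ (cocycles_anti hA₁Z le_rfl hf)
  obtain ⟨f₂, hf₂, hff₂⟩ := exists_cocycle_of_coboundary_mem subset_union_left hf'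
    (hZ (k + 1) (by omega) _ (union_subset hA₂Z hA₁Z) (hA₂.union hA₁)
      (coboundary_mem_cocycles hf'))
  obtain ⟨f₁, hf₁, hff₁⟩ := exists_cocycle_of_restrict_coboundary
    (add_mem hf (cocycles_anti le_rfl inter_subset_left hf₂))
    (show f + f₂ ∈ coboundaries k A₁ (A₂ ∩ A₁) by
      rw [← ZModModule.add_add_add_cancel]
      exact add_mem hff' (mem_coboundaries_of_vanishing
        (vanishing_anti _ subset_union_right hff₂)))
  exact ⟨f₁, hf₁, f₂, hf₂, by rwa [add_comm f₁ f₂, ← add_assoc]⟩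

end Dimension

/-! ### Suspensions and cohomology spheres -/

section Suspension

variable {X : Type*} [MetricSpace X] {q k : ℕ} {P Q : Set X} {F h : Cochain X}

lemma isSmall_singleton {ε : ℝ} {A : Set X} {x : X} (hε : 0 < ε) (hx : x ∈ A) :
    IsSmall ε A [x] :=
  ⟨⟨x, hx⟩, by simpa using hx, by simpa using hε⟩

/-- The class of `F` on `P ∪ Q` is the image of the class of `h` on `P ∩ Q` under the connecting
map of the Mayer–Vietoris sequence. -/
def IsConnecting (q : ℕ) (P Q : Set X) (F h : Cochain X) : Prop :=
  ∃ u v : Cochain X, F + δ u ∈ vanishing (q + 2) P ∧ F + δ v ∈ vanishing (q + 2) Q ∧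
    h + (u + v) ∈ vanishing (q + 1) (P ∩ Q)

lemma IsConnecting.add {F' h' : Cochain X} (H : IsConnecting q P Q F h)
    (H' : IsConnecting q P Q F' h') : IsConnecting q P Q (F + F') (h + h') := by
  obtain ⟨u, v, hP, hQ, hPQ⟩ := H
  obtain ⟨u', v', hP', hQ', hPQ'⟩ := H'
  refine ⟨u + u', v + v', ?_, ?_, ?_⟩
  · rw [map_add, add_add_add_comm]
    exact add_mem hP hP'
  · rw [map_add, add_add_add_comm]
    exact add_mem hQ hQ'
  · rw [add_add_add_comm u, add_add_add_comm h]
    exact add_mem hPQ hPQ'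

lemma exists_isConnecting_of_isAcyclic (hP : IsAcyclic (q + 1) P ∅) (hQ : IsAcyclic (q + 1) Q ∅)
    (hF : F ∈ cocycles (q + 1) (P ∪ Q) ∅) :
    ∃ h ∈ cocycles q (P ∩ Q) ∅, IsConnecting q P Q F h := by
  obtain ⟨u, -, hu⟩ := mem_coboundaries.1 (hP (cocycles_anti subset_union_left le_rfl hF))
  obtain ⟨v, -, hv⟩ := mem_coboundaries.1 (hQ (cocycles_anti subset_union_right le_rfl hF))
  refine ⟨u + v, mem_cocycles.2 ⟨vanishing_empty _ _, ?_⟩, u, v, hu, hv, ?_⟩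
  · rw [show δ (u + v) = F + δ u + (F + δ v) by grind]
    exact add_mem (vanishing_anti _ inter_subset_left hu) (vanishing_anti _ inter_subset_right hv)
  · rw [ZModModule.add_self]
    exact zero_mem _

lemma exists_isConnecting_of_mem_cocycles (hP : IsCompact P) (hQ : IsCompact Q)
    (hh : h ∈ cocycles q (P ∩ Q) ∅) :
    ∃ F ∈ cocycles (q + 1) (P ∪ Q) ∅, IsConnecting q P Q F h := by
  obtain ⟨F, hF, hFh⟩ := exists_excision_preimage hP hQ (coboundary_mem_cocycles (Z := Q) hh)
  obtain ⟨g, hg, hFg⟩ := mem_coboundaries.1 hFh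
  refine ⟨F, cocycles_anti le_rfl (empty_subset _) hF, 0, h + g, ?_, ?_, ?_⟩
  · rw [map_zero, add_zero]
    exact hF.1
  · rwa [map_add, ← add_assoc, add_comm F]
  · rwa [show h + (0 + (h + g)) = g by grind]

lemma IsConnecting.mem_coboundaries_union (hP : IsCompact P) (hQ : IsCompact Q)
    (hF : F ∈ cocycles (q + 1) (P ∪ Q) ∅) (H : IsConnecting q P Q F h)
    (hh : h ∈ coboundaries q (P ∩ Q) ∅) : F ∈ coboundaries (q + 1) (P ∪ Q) ∅ := by
  obtain ⟨u, v, hu, hv, huv⟩ := H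
  obtain ⟨k, -, hk⟩ := mem_coboundaries.1 hh
  have hFu : F + δ u ∈ cocycles (q + 1) (P ∪ Q) P := mem_cocycles.2 ⟨hu, by
    rw [map_add, coboundary_coboundary, add_zero]; exact hF.2⟩
  have hFQ : F + δ u ∈ coboundaries (q + 1) Q (P ∩ Q) := by
    refine mem_coboundaries.2 ⟨u + v + δ k, ?_, ?_⟩
    · rw [show u + v + δ k = h + (u + v) + (h + δ k) by grind]
      exact add_mem huv hk
    · rwa [map_add, map_add, coboundary_coboundary,
        show F + δ u + (δ u + δ v + 0) = F + δ v by grind]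
  obtain ⟨g, -, hg⟩ := mem_coboundaries.1 (mem_coboundaries_of_excision hP hQ hFu hFQ)
  exact mem_coboundaries.2 ⟨u + g, vanishing_empty _ _, by rwa [map_add, ← add_assoc]⟩

lemma IsConnecting.mem_coboundaries_inter (hP : IsAcyclic q P ∅) (hQ : IsAcyclic q Q ∅)
    (H : IsConnecting q P Q F h) (hF : F ∈ coboundaries (q + 1) (P ∪ Q) ∅) :
    h ∈ coboundaries q (P ∩ Q) ∅ := by
  obtain ⟨u, v, hu, hv, huv⟩ := H
  obtain ⟨w, -, hw⟩ := mem_coboundaries.1 hF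
  have hcob {R : Set X} {x : Cochain X} (hR : R ⊆ P ∪ Q) (hac : IsAcyclic q R ∅)
      (hx : F + δ x ∈ vanishing (q + 2) R) : w + x ∈ coboundaries q R ∅ := by
    refine hac (mem_cocycles.2 ⟨vanishing_empty _ _, ?_⟩)
    rw [show δ (w + x) = F + δ w + (F + δ x) by grind]
    exact add_mem (vanishing_anti _ hR hw) hx
  rw [show h = w + u + (w + v) + (h + (u + v)) by grind]
  exact add_mem (add_mem
    (coboundaries_anti inter_subset_left le_rfl (hcob subset_union_left hP hu))
    (coboundaries_anti inter_subset_right le_rfl (hcob subset_union_right hQ hv)))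
    (mem_coboundaries_of_vanishing huv)

lemma isAcyclic_zero_union (hP : IsAcyclic 0 P ∅) (hQ : IsAcyclic 0 Q ∅)
    (hPQ : (P ∩ Q).Nonempty) : IsAcyclic 0 (P ∪ Q) ∅ := by
  intro F hF
  obtain ⟨u, -, ε, hε, hu⟩ := mem_coboundaries.1 (hP (cocycles_anti subset_union_left le_rfl hF))
  obtain ⟨v, -, η, hη, hv⟩ := mem_coboundaries.1 (hQ (cocycles_anti subset_union_right le_rfl hF))
  have hFu {x : X} (hx : x ∈ P) : F [x] + u [] = 0 := by
    simpa [coboundary_singleton] using hu [x] rfl (isSmall_singleton hε hx)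
  have hFv {x : X} (hx : x ∈ Q) : F [x] + v [] = 0 := by
    simpa [coboundary_singleton] using hv [x] rfl (isSmall_singleton hη hx)
  obtain ⟨z, hzP, hzQ⟩ := hPQ
  have huv : u [] = v [] := add_left_cancel ((hFu hzP).trans (hFv hzQ).symm)
  refine mem_coboundaries.2 ⟨u, vanishing_empty _ _, 1, one_pos, fun l hl hs => ?_⟩
  obtain ⟨x, rfl⟩ := List.length_eq_one_iff.1 hl
  rw [Pi.add_apply, coboundary_singleton]
  exact (hs.2.1 x (List.mem_singleton_self x)).elim hFu fun hx => huv ▸ hFv hx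

/-- `Z` has the reduced cohomology of the `k`-sphere over `𝔽₂`. -/
structure IsCohomologySphere (k : ℕ) (Z : Set X) : Prop where
  isAcyclic : ∀ q ≠ k, IsAcyclic q Z ∅
  not_isAcyclic : ¬ IsAcyclic k Z ∅
  rankLEOne : RankLEOne (cocycles k Z ∅) (coboundaries k Z ∅)

lemma IsCohomologySphere.suspension (hP : IsCompact P) (hQ : IsCompact Q)
    (haP : ∀ q, IsAcyclic q P ∅) (haQ : ∀ q, IsAcyclic q Q ∅) (hne : (P ∩ Q).Nonempty)
    (hPQ : IsCohomologySphere k (P ∩ Q)) : IsCohomologySphere (k + 1) (P ∪ Q) where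
  isAcyclic
    | 0, _ => isAcyclic_zero_union (haP 0) (haQ 0) hne
    | q + 1, hq => fun F hF => by
      obtain ⟨h, hh, H⟩ := exists_isConnecting_of_isAcyclic (haP _) (haQ _) hF
      exact H.mem_coboundaries_union hP hQ hF (hPQ.isAcyclic q (by omega) hh)
  not_isAcyclic hac := hPQ.not_isAcyclic fun h hh => by
    obtain ⟨F, hF, H⟩ := exists_isConnecting_of_mem_cocycles hP hQ hh
    exact H.mem_coboundaries_inter (haP _) (haQ _) (hac hF)
  rankLEOne F hF F' hF' := by
    obtain ⟨h, hh, H⟩ := exists_isConnecting_of_isAcyclic (haP _) (haQ _) hF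
    obtain ⟨h', hh', H'⟩ := exists_isConnecting_of_isAcyclic (haP _) (haQ _) hF'
    exact (hPQ.rankLEOne h hh h' hh').imp (H.mem_coboundaries_union hP hQ hF)
      (Or.imp (H'.mem_coboundaries_union hP hQ hF')
        ((H.add H').mem_coboundaries_union hP hQ (add_mem hF hF')))

lemma mem_coboundaries_pair {a b : X} {f : Cochain X} (h : f [a] = f [b]) :
    f ∈ coboundaries 0 {a, b} ∅ := by
  refine mem_coboundaries.2 ⟨fun _ => f [a], vanishing_empty _ _, 1, one_pos, fun l hl hs => ?_⟩
  obtain ⟨x, rfl⟩ := List.length_eq_one_iff.1 hl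
  rw [Pi.add_apply, coboundary_singleton]
  obtain rfl | hx := hs.2.1 x (List.mem_singleton_self x)
  · exact ZModModule.add_self _
  · rw [mem_singleton_iff.1 hx, h]
    exact ZModModule.add_self _

lemma not_isAcyclic_pair {a b : X} (hab : a ≠ b) : ¬ IsAcyclic 0 {a, b} ∅ := by
  classical
  intro hac
  set f : Cochain X := fun l => if l = [a] then 1 else 0
  have hf : f ∈ cocycles 0 {a, b} ∅ := by
    refine mem_cocycles.2 ⟨vanishing_empty _ _, dist a b, dist_pos.2 hab, fun l hl hs => ?_⟩
    obtain ⟨x, y, rfl⟩ := List.length_eq_two.1 hl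
    have hxy : x = y := by
      have hx := hs.2.1 x (by simp)
      have hy := hs.2.1 y (by simp)
      have hdist := hs.2.2 x (by simp) y (by simp)
      rcases hx with rfl | rfl <;> rcases hy with rfl | rfl
      exacts [rfl, absurd hdist (lt_irrefl _), absurd hdist (dist_comm x y ▸ lt_irrefl _), rfl]
    simp [coboundary_cons, coboundary_nil, cone_apply, hxy, ZModModule.add_self]
  obtain ⟨g, -, ε, hε, hg⟩ := mem_coboundaries.1 (hac hf)
  have ha := hg [a] rfl (isSmall_singleton hε (by simp))
  have hb := hg [b] rfl (isSmall_singleton hε (by simp))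
  simp_all [coboundary_singleton, f, hab.symm]

lemma isCohomologySphere_pair {a b : X} (hab : a ≠ b) :
    IsCohomologySphere 0 ({a, b} : Set X) where
  isAcyclic q hq := by
    rw [insert_eq]
    exact (dimLE_of_subsingleton subsingleton_singleton).union isCompact_singleton
      isCompact_singleton (dimLE_of_subsingleton subsingleton_singleton) q
      (Nat.pos_of_ne_zero hq) ∅ (empty_subset _) isCompact_empty
  not_isAcyclic := not_isAcyclic_pair hab
  rankLEOne f _ g _ := by
    have key : ∀ p q r s : ZMod 2, p = q ∨ r = s ∨ p + r = q + s := by decide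
    exact (key (f [a]) (f [b]) (g [a]) (g [b])).imp mem_coboundaries_pair
      (Or.imp mem_coboundaries_pair mem_coboundaries_pair)

end Suspension

/-! ### Round spheres -/

section RoundSpheres

open scoped RealInnerProductSpace

variable {F : Type*} [NormedAddCommGroup F] [InnerProductSpace ℝ F]

/-- The spherical cap around `e` of height `c` in the unit sphere of the subspace `W`. -/
def cap (W : Submodule ℝ F) (e : F) (c : ℝ) : Set F := {y | ‖y‖ = 1 ∧ y ∈ W ∧ c ≤ ⟪y, e⟫}

lemma isCompact_cap [FiniteDimensional ℝ F] (W : Submodule ℝ F) (e : F) (c : ℝ) :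
    IsCompact (cap W e c) := by
  have heq : cap W e c = sphere (0 : F) 1 ∩ (W ∩ {y | c ≤ ⟪y, e⟫}) := by
    ext y
    simp [cap]
  rw [heq]
  exact (isCompact_sphere _ _).inter_right
    (W.closed_of_finiteDimensional.inter (isClosed_le continuous_const (by fun_prop)))

section Segment

variable {e y : F} {t : ℝ}

lemma segment_ne_zero (he : ‖e‖ = 1) (hy : ‖y‖ = 1) (h : -1 < ⟪y, e⟫) :
    (1 - t) • y + t • e ≠ 0 := by
  intro h0
  have hinner : ⟪(1 - t) • y + t • e, y + e⟫ = 1 + ⟪y, e⟫ := by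
    simp only [inner_add_left, inner_add_right, real_inner_smul_left, real_inner_self_eq_norm_sq,
      he, hy, real_inner_comm y e]
    ring
  rw [h0, inner_zero_left] at hinner
  linarith

lemma inner_mul_norm_segment_le (he : ‖e‖ = 1) (hy : ‖y‖ = 1) (ht : t ∈ Icc (0 : ℝ) 1) :
    ⟪y, e⟫ * ‖(1 - t) • y + t • e‖ ≤ (1 - t) * ⟪y, e⟫ + t := by
  obtain ⟨ht0, ht1⟩ := ht
  have hys : ‖(1 - t) • y‖ = 1 - t := by
    rw [norm_smul, hy, mul_one, Real.norm_of_nonneg (by linarith)]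
  have hes : ‖t • e‖ = t := by rw [norm_smul, he, mul_one, Real.norm_of_nonneg ht0]
  have hupper := norm_add_le ((1 - t) • y) (t • e)
  have hlower := norm_sub_le_norm_add ((1 - t) • y) (t • e)
  have habs := abs_le.1 (abs_real_inner_le_norm y e)
  rw [hys, hes] at hupper hlower
  rw [he, hy, mul_one] at habs
  rcases le_total 0 ⟪y, e⟫ <;> nlinarith

end Segment

lemma isAcyclic_cap [FiniteDimensional ℝ F] {W : Submodule ℝ F} {e : F} {c : ℝ} (he : ‖e‖ = 1)
    (heW : e ∈ W) (hc : -1 < c) (hc1 : c ≤ 1) (q : ℕ) : IsAcyclic q (cap W e c) ∅ := by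
  have hee : ⟪e, e⟫ = 1 := by rw [real_inner_self_eq_norm_sq, he, one_pow]
  have hne (t : ℝ) {y : F} (hy : y ∈ cap W e c) : ‖(1 - t) • y + t • e‖ ≠ 0 :=
    norm_ne_zero_iff.2 (segment_ne_zero he hy.1 (hc.trans_le hy.2.2))
  refine isAcyclic_of_contraction (isCompact_cap W e c) (x := e)
    (h := fun t y => ‖(1 - t) • y + t • e‖⁻¹ • ((1 - t) • y + t • e))
    ⟨he, heW, hc1.trans_eq hee.symm⟩ ?_ ?_ ?_ ?_ q
  · intro t ht y hy
    refine ⟨?_, W.smul_mem _ (W.add_mem (W.smul_mem _ hy.2.1) (W.smul_mem _ heW)),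
      hy.2.2.trans ?_⟩
    · rw [norm_smul, norm_inv, norm_norm, inv_mul_cancel₀ (hne t hy)]
    · rw [real_inner_smul_left, inner_add_left, real_inner_smul_left, real_inner_smul_left, hee,
        mul_one, inv_mul_eq_div, le_div_iff₀ ((norm_nonneg _).lt_of_ne' (hne t hy))]
      exact inner_mul_norm_segment_le he hy.1 ht
  · refine ContinuousOn.smul (ContinuousOn.inv₀ (by fun_prop) ?_) (by fun_prop)
    rintro ⟨t, y⟩ ⟨-, hy⟩
    exact hne t hy
  · intro y hy
    simp [hy.1]
  · intro y _
    simp [he]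

variable {k : ℕ} {W : Submodule ℝ F}

lemma exists_unit_vector_mem (hW : Module.finrank ℝ W = k + 1) : ∃ e ∈ W, ‖e‖ = 1 := by
  have : Nontrivial W := Module.nontrivial_of_finrank_pos (R := ℝ) (by omega)
  obtain ⟨e, he⟩ := exists_norm_eq W zero_le_one
  exact ⟨e, e.2, he⟩

lemma finrank_inf_orthogonal_span_singleton {e : F} (heW : e ∈ W) (he : ‖e‖ = 1)
    (hW : Module.finrank ℝ W = k + 1) :
    Module.finrank ℝ ((ℝ ∙ e)ᗮ ⊓ W : Submodule ℝ F) = k := by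
  have : FiniteDimensional ℝ W := Module.finite_of_finrank_eq_succ hW
  have hne : e ≠ 0 := norm_ne_zero_iff.1 (by rw [he]; exact one_ne_zero)
  have h := Submodule.finrank_add_inf_finrank_orthogonal
    ((Submodule.span_singleton_le_iff_mem e W).2 heW)
  rw [finrank_span_singleton hne] at h
  omega

lemma eq_of_sub_eq_smul {e x y : F} {c : ℝ} (he : ‖e‖ = 1) (hxy : ‖x‖ = ‖y‖)
    (hc : x - y = c • e) (hsign : 0 ≤ ⟪x, e⟫ * ⟪y, e⟫) : x = y := by
  have hc_eq : ⟪x, e⟫ - ⟪y, e⟫ = c := by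
    rw [← inner_sub_left, hc, real_inner_smul_left, real_inner_self_eq_norm_sq, he, one_pow,
      mul_one]
  have horth : c * (⟪x, e⟫ + ⟪y, e⟫) = 0 := by
    rw [← inner_add_left, real_inner_comm, ← real_inner_smul_left, ← hc, real_inner_comm,
      real_inner_add_sub_eq_zero_iff]
    exact hxy
  have hc0 : c = 0 := by
    rcases mul_eq_zero.1 horth with h | h <;> nlinarith
  rw [← sub_eq_zero, hc, hc0, zero_smul]

lemma dimLE_of_subset_sphere {Z : Set F} (hZ : IsCompact Z) (hZS : Z ⊆ sphere 0 1)
    (hW : Module.finrank ℝ W = k + 1) (hZW : ∀ x ∈ Z, ∀ y ∈ Z, x - y ∈ W) : DimLE k Z := by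
  induction k generalizing W Z with
  | zero =>
    obtain ⟨e, heW, he⟩ := exists_unit_vector_mem hW
    have hspan := (finrank_eq_one_iff_of_nonzero' (⟨e, heW⟩ : W) (by
      rw [Ne, ← norm_eq_zero]; simp [he])).1 hW
    have hsub {s : Set F} (hs : ∀ x ∈ s, ∀ y ∈ s, 0 ≤ ⟪x, e⟫ * ⟪y, e⟫) :
        (Z ∩ s).Subsingleton := by
      intro x hx y hy
      obtain ⟨c, hc⟩ := hspan ⟨x - y, hZW x hx.1 y hy.1⟩
      refine eq_of_sub_eq_smul he ?_ (congrArg Subtype.val hc).symm (hs x hx.2 y hy.2)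
      rw [mem_sphere_zero_iff_norm.1 (hZS hx.1), mem_sphere_zero_iff_norm.1 (hZS hy.1)]
    have hpos : (Z ∩ {x | 0 ≤ ⟪x, e⟫}).Subsingleton := hsub fun x hx y hy => mul_nonneg hx hy
    have hneg : (Z ∩ {x | ⟪x, e⟫ ≤ 0}).Subsingleton :=
      hsub fun x hx y hy => mul_nonneg_of_nonpos_of_nonpos hx hy
    have hcover : Z ∩ {x | 0 ≤ ⟪x, e⟫} ∪ Z ∩ {x | ⟪x, e⟫ ≤ 0} = Z := by
      rw [← inter_union_distrib_left, inter_eq_left]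
      exact fun x _ => le_total 0 ⟪x, e⟫
    rw [← hcover]
    exact (dimLE_of_subsingleton hpos).union hpos.isCompact hneg.isCompact
      (dimLE_of_subsingleton hneg)
  | succ k ih =>
    obtain ⟨e, heW, he⟩ := exists_unit_vector_mem hW
    refine dimLE_of_fibers hZ (φ := fun x => ⟪x, e⟫) (by fun_prop) fun t => ?_
    refine ih (hZ.inter_right (isClosed_singleton.preimage (by fun_prop)))
      (inter_subset_left.trans hZS) (finrank_inf_orthogonal_span_singleton heW he hW) ?_
    rintro x ⟨hx, hxt⟩ y ⟨hy, hyt⟩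
    refine ⟨Submodule.mem_orthogonal_singleton_iff_inner_left.2 ?_, hZW x hx y hy⟩
    rw [inner_sub_left, show ⟪x, e⟫ = t from hxt, show ⟪y, e⟫ = t from hyt, sub_self]

variable [FiniteDimensional ℝ F]

lemma dimLE_sphere (hF : Module.finrank ℝ F = k + 1) : DimLE k (sphere (0 : F) 1) :=
  dimLE_of_subset_sphere (isCompact_sphere _ _) le_rfl (finrank_top ℝ F ▸ hF)
    fun _ _ _ _ => Submodule.mem_top

lemma isCohomologySphere_sphere_inter (hW : Module.finrank ℝ W = k + 1) :
    IsCohomologySphere k (sphere (0 : F) 1 ∩ W) := by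
  induction k generalizing W with
  | zero =>
    obtain ⟨e, heW, he⟩ := exists_unit_vector_mem hW
    have hspan := (finrank_eq_one_iff_of_nonzero' (⟨e, heW⟩ : W) (by
      rw [Ne, ← norm_eq_zero]; simp [he])).1 hW
    have heq : sphere (0 : F) 1 ∩ W = {e, -e} := by
      ext x
      constructor
      · rintro ⟨hx, hxW⟩
        obtain ⟨c, hc⟩ := hspan ⟨x, hxW⟩
        obtain rfl : c • e = x := congrArg Subtype.val hc
        rw [mem_sphere_zero_iff_norm, norm_smul, he, mul_one, Real.norm_eq_abs] at hx
        rcases eq_or_eq_neg_of_abs_eq hx with rfl | rfl <;> simp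
      · rintro (rfl | rfl)
        exacts [⟨by simpa using he, heW⟩, ⟨by simpa using he, W.neg_mem heW⟩]
    have : IsAddTorsionFree F := .of_isTorsionFree ℝ F
    rw [heq]
    exact isCohomologySphere_pair (self_ne_neg.2 (norm_ne_zero_iff.1 (by simp [he])))
  | succ k ih =>
    obtain ⟨e, heW, he⟩ := exists_unit_vector_mem hW
    have hfin := finrank_inf_orthogonal_span_singleton heW he hW
    have hunion : cap W e 0 ∪ cap W (-e) 0 = sphere (0 : F) 1 ∩ W := by
      ext y
      simp only [cap, mem_union, mem_ofPred_eq, inner_neg_right, mem_inter_iff,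
        mem_sphere_zero_iff_norm, SetLike.mem_coe]
      grind
    have hinter : cap W e 0 ∩ cap W (-e) 0 = sphere (0 : F) 1 ∩ ((ℝ ∙ e)ᗮ ⊓ W : Submodule ℝ F) := by
      ext y
      simp only [cap, mem_inter_iff, mem_ofPred_eq, inner_neg_right, mem_sphere_zero_iff_norm,
        SetLike.mem_coe, Submodule.mem_inf, Submodule.mem_orthogonal_singleton_iff_inner_left]
      grind
    rw [← hunion]
    refine IsCohomologySphere.suspension (isCompact_cap _ _ _) (isCompact_cap _ _ _)
      (isAcyclic_cap he heW (by norm_num) zero_le_one)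
      (isAcyclic_cap (by rwa [norm_neg]) (W.neg_mem heW) (by norm_num) zero_le_one) ?_ ?_
    · obtain ⟨x, hxW, hx⟩ := exists_unit_vector_mem hfin
      exact hinter ▸ ⟨x, mem_sphere_zero_iff_norm.2 hx, hxW⟩
    · exact hinter ▸ ih hfin

lemma isCohomologySphere_sphere (hF : Module.finrank ℝ F = k + 1) :
    IsCohomologySphere k (sphere (0 : F) 1) := by
  simpa using isCohomologySphere_sphere_inter (W := (⊤ : Submodule ℝ F)) (finrank_top ℝ F ▸ hF)

lemma isAcyclic_sphere_diff_ball {x : F} (hx : x ∈ sphere (0 : F) 1) {r : ℝ} (hr : 0 < r)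
    (q : ℕ) : IsAcyclic q (sphere (0 : F) 1 \ ball x r) ∅ := by
  rw [mem_sphere_zero_iff_norm] at hx
  have heq : sphere (0 : F) 1 \ ball x r = cap ⊤ (-x) (r ^ 2 / 2 - 1) := by
    ext y
    simp only [cap, Set.mem_sdiff, mem_sphere_zero_iff_norm, mem_ball, not_lt, mem_ofPred_eq,
      Submodule.mem_top, true_and, and_congr_right_iff, inner_neg_right]
    intro hy
    rw [dist_eq_norm, ← sq_le_sq₀ hr.le (norm_nonneg _), norm_sub_sq_real, hx, hy]
    constructor <;> intro h <;> linarith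
  rcases le_or_gt r 2 with hr2 | hr2
  · rw [heq]
    exact isAcyclic_cap (by rwa [norm_neg]) Submodule.mem_top (by nlinarith) (by nlinarith) q
  · have hempty : sphere (0 : F) 1 \ ball x r = ∅ := by
      refine sdiff_eq_empty.2 fun y hy => ?_
      rw [mem_sphere_zero_iff_norm] at hy
      have hle := dist_le_norm_add_norm y x
      rw [mem_ball]
      linarith
    rw [hempty]
    exact isAcyclic_empty q ∅

end RoundSpheres

/-! ### Localisation at points -/

section Localization

variable {X : Type*} [MetricSpace X] {q k : ℕ} {Z A L M : Set X}

/-- The compact sets missing a point `x` of `Z` are exhausted by acyclic ones. On a sphere these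
are the complements of small balls around `x`. -/
def HasAcyclicPunctures (Z : Set X) : Prop :=
  ∀ x ∈ Z, ∀ A ⊆ Z, IsCompact A → x ∉ A →
    ∃ L ⊆ Z, A ⊆ L ∧ x ∉ L ∧ IsCompact L ∧ ∀ q, IsAcyclic q L ∅

/-- The classes of `H^k(Z, A; 𝔽₂)` coming from `H^k(Z, L; 𝔽₂)`. For `L` the complement of a small
neighbourhood of a point, these are the classes supported near that point. -/
def supportedOff (k : ℕ) (Z A L : Set X) : Submodule (ZMod 2) (Cochain X) :=
  cocycles k Z L ⊔ coboundaries k Z A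

lemma supportedOff_eq_of_subset (hAL : A ⊆ L) (hLM : L ⊆ M) (hMZ : M ⊆ Z)
    (hL : IsAcyclic q L ∅) (hM : IsAcyclic (q + 1) M ∅) :
    supportedOff (q + 1) Z A L = supportedOff (q + 1) Z A M := by
  refine le_antisymm (sup_le (fun f hf => ?_) le_sup_right)
    (sup_le_sup_right (cocycles_anti le_rfl hLM) _)
  have hfM : f ∈ coboundaries (q + 1) M L :=
    mem_coboundaries_of_isAcyclic hLM (cocycles_anti hMZ le_rfl hf)
      (hM (cocycles_anti hMZ (empty_subset _) hf)) hL
  obtain ⟨f', hf', hff'⟩ := exists_cocycle_of_restrict_coboundary hf hfM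
  exact Submodule.mem_sup.2 ⟨f', hf', f + f', coboundaries_anti le_rfl hAL hff', by grind⟩

lemma HasAcyclicPunctures.exists_supportedOff_eq (hZ : HasAcyclicPunctures Z)
    (hA : IsCompact A) (hAZ : A ⊆ Z) (hc : IsPreconnected (Z \ A)) :
    ∃ L : X → Set X, (∀ x ∈ Z \ A, L x ⊆ Z ∧ A ⊆ L x ∧ x ∉ L x ∧ IsCompact (L x) ∧
      ∀ q, IsAcyclic q (L x) ∅) ∧
      ∀ q, ∀ x ∈ Z \ A, ∀ y ∈ Z \ A,
        supportedOff (q + 1) Z A (L x) = supportedOff (q + 1) Z A (L y) := by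
  choose! L hL using fun x (hx : x ∈ Z \ A) => hZ x hx.1 A hAZ hA hx.2
  refine ⟨L, hL, fun q x hx y hy => ?_⟩
  refine hc.induction₂
    (fun x y => supportedOff (q + 1) Z A (L x) = supportedOff (q + 1) Z A (L y)) ?_
    (fun _ _ _ _ _ _ => Eq.trans) (fun _ _ _ _ => Eq.symm) hx hy
  intro x hx
  obtain ⟨hLZ, hAL, hxL, hLc, hLa⟩ := hL x hx
  filter_upwards [mem_nhdsWithin_of_mem_nhds (hLc.isClosed.isOpen_compl.mem_nhds hxL),
    self_mem_nhdsWithin] with y hyL hy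
  obtain ⟨hLZ', hAL', hyL', hLc', hLa'⟩ := hL y hy
  obtain ⟨M, hMZ, hLM, -, -, hMa⟩ := hZ y hy.1 (L x ∪ L y) (union_subset hLZ hLZ')
    (hLc.union hLc') (not_or.2 ⟨hyL, hyL'⟩)
  exact (supportedOff_eq_of_subset hAL (subset_union_left.trans hLM) hMZ (hLa _) (hMa _)).trans
    (supportedOff_eq_of_subset hAL' (subset_union_right.trans hLM) hMZ (hLa' _) (hMa _)).symm

lemma DimLE.cocycles_biInter_le {ι : Type*} (hdim : DimLE k Z) (hZ : IsCompact Z) (hAZ : A ⊆ Z)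
    {N : Submodule (ZMod 2) (Cochain X)} (hN : coboundaries k Z A ≤ N) {s : Finset ι}
    {L : ι → Set X} (hL : ∀ i ∈ s, L i ⊆ Z ∧ A ⊆ L i ∧ IsCompact (L i) ∧ cocycles k Z (L i) ≤ N) :
    cocycles k Z (Z ∩ ⋂ i ∈ s, L i) ≤ N := by
  classical
  induction s using Finset.induction_on with
  | empty =>
    intro f hf
    refine hN (mem_coboundaries_of_vanishing ?_)
    simpa using hf.1
  | insert i s _ ih =>
    simp only [Finset.forall_mem_insert] at hL
    obtain ⟨⟨hLZ, hAL, hLc, hLN⟩, hL⟩ := hL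
    intro f hf
    have heq : Z ∩ ⋂ j ∈ insert i s, L j = L i ∩ (Z ∩ ⋂ j ∈ s, L j) := by
      rw [Finset.set_biInter_insert, inter_left_comm]
    have hsc : IsCompact (Z ∩ ⋂ j ∈ s, L j) :=
      hZ.inter_right (isClosed_biInter fun j hj => (hL j hj).2.2.1.isClosed)
    rw [heq] at hf
    obtain ⟨f₁, hf₁, f₂, hf₂, hff⟩ :=
      exists_cocycle_add_cocycle hdim hLc hsc hLZ inter_subset_left hf
    have hA : A ⊆ L i ∩ (Z ∩ ⋂ j ∈ s, L j) :=
      subset_inter hAL (subset_inter hAZ (subset_iInter₂ fun j hj => (hL j hj).2.1))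
    exact (N.add_mem_iff_left (N.add_mem (hLN hf₁) (ih hL hf₂))).1
      (hN (coboundaries_anti le_rfl hA hff))

lemma mem_coboundaries_of_isPreconnected_diff (hZ : IsCompact Z) (hdim : DimLE (q + 1) Z)
    (hpunct : HasAcyclicPunctures Z) (hA : IsCompact A) (hAZ : A ⊆ Z)
    (hc : IsPreconnected (Z \ A)) {f : Cochain X} (hf : f ∈ cocycles (q + 1) Z A)
    (hb : f ∈ coboundaries (q + 1) Z ∅) : f ∈ coboundaries (q + 1) Z A := by
  rcases (Z \ A).eq_empty_or_nonempty with hempty | ⟨x₀, hx₀⟩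
  · exact mem_coboundaries_of_vanishing (vanishing_anti _ (sdiff_eq_empty.1 hempty) hf.1)
  obtain ⟨L, hL, hLeq⟩ := hpunct.exists_supportedOff_eq hA hAZ hc
  set N := supportedOff (q + 1) Z A (L x₀)
  have hAN : coboundaries (q + 1) Z A ≤ N := le_sup_right
  have hfN : f ∈ N := by
    obtain ⟨η, hη, f', hf', hff'⟩ := exists_cocycle_thickening hA hAZ hf
    have hdiff : ∀ x ∈ Z \ thickening η A, x ∈ Z \ A :=
      fun x hx => ⟨hx.1, fun h => hx.2 (self_subset_thickening hη _ h)⟩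
    obtain ⟨s, hs, hcover⟩ := (hZ.diff isOpen_thickening).elim_nhds_subcover (fun x => (L x)ᶜ)
      fun x hx => (hL x (hdiff x hx)).2.2.2.1.isClosed.isOpen_compl.mem_nhds
        (hL x (hdiff x hx)).2.2.1
    have hsub : Z ∩ ⋂ x ∈ s, L x ⊆ Z ∩ thickening η A := fun x ⟨hx, hxL⟩ =>
      ⟨hx, by_contra fun h => by
        obtain ⟨y, hy, hxy⟩ := mem_iUnion₂.1 (hcover ⟨hx, h⟩)
        exact hxy (mem_iInter₂.1 hxL y hy)⟩
    refine (N.add_mem_iff_left (hdim.cocycles_biInter_le hZ hAZ hAN (s := s) (fun x hx => ?_)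
      (cocycles_anti le_rfl hsub hf'))).1 (hAN hff')
    obtain ⟨hLZ, hAL, -, hLc, -⟩ := hL x (hdiff x (hs x hx))
    exact ⟨hLZ, hAL, hLc, le_sup_left.trans (hLeq q x (hdiff x (hs x hx)) x₀ hx₀).le⟩
  obtain ⟨hLZ, hAL, -, -, hLa⟩ := hL x₀ hx₀
  obtain ⟨f₀, hf₀, g, hg, rfl⟩ := Submodule.mem_sup.1 hfN
  have hb₀ : f₀ ∈ coboundaries (q + 1) Z ∅ := ((coboundaries _ _ _).add_mem_iff_left
    (coboundaries_anti le_rfl (empty_subset _) hg)).1 hb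
  have hbL : f₀ ∈ coboundaries (q + 1) Z (L x₀) := mem_coboundaries_of_isAcyclic hLZ hf₀ hb₀ (hLa q)
  exact add_mem (coboundaries_anti le_rfl hAL hbL) hg

lemma isAcyclic_of_ssubset (hdim : DimLE k Z) (hpunct : HasAcyclicPunctures Z)
    (hA : IsCompact A) (hAZ : A ⊂ Z) : IsAcyclic k A ∅ := by
  intro f hf
  obtain ⟨x, hx, hxA⟩ := exists_of_ssubset hAZ
  obtain ⟨L, hLZ, hAL, -, hLc, hLa⟩ := hpunct x hx A hAZ.1 hA hxA
  have hext : δ f ∈ coboundaries (k + 1) L A :=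
    hdim.mono hLZ hLc _ (by omega) A hAL hA (coboundary_mem_cocycles hf)
  obtain ⟨f', hf', hff'⟩ := exists_cocycle_of_coboundary_mem (empty_subset _) hf hext
  exact ((coboundaries _ _ _).add_mem_iff_left (coboundaries_anti hAL le_rfl (hLa k hf'))).1
    (mem_coboundaries_of_vanishing hff')

end Localization

/-! ### Topological spheres -/

section UniformEquiv

variable {X Y : Type*} [MetricSpace X] [MetricSpace Y] {q k : ℕ} {Z A : Set X} {Z' : Set Y}
  {φ : X → Y} {ψ : Y → X}

/-- `φ` and `ψ` restrict to mutually inverse uniform equivalences between `Z` and `Z'`. -/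
structure IsUniformEquivOn (Z : Set X) (Z' : Set Y) (φ : X → Y) (ψ : Y → X) : Prop where
  mapsTo : MapsTo φ Z Z'
  mapsTo_symm : MapsTo ψ Z' Z
  invOn : InvOn ψ φ Z Z'
  uniformContinuousOn : UniformContinuousOn φ Z
  uniformContinuousOn_symm : UniformContinuousOn ψ Z'

lemma exists_isUniformEquivOn (hZ : IsCompact Z) (hZ' : IsCompact Z') (hne : Z.Nonempty)
    (e : Z ≃ₜ Z') : ∃ φ ψ, IsUniformEquivOn Z Z' φ ψ := by
  obtain ⟨x₀, hx₀⟩ := hne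
  set φ : X → Y := Function.extend Subtype.val (fun x => (e x : Y)) fun _ => e ⟨x₀, hx₀⟩
  set ψ : Y → X := Function.extend Subtype.val (fun y => (e.symm y : X)) fun _ => x₀
  have hφ (x : Z) : φ x = e x := Subtype.val_injective.extend_apply _ _ x
  have hψ (y : Z') : ψ y = e.symm y := Subtype.val_injective.extend_apply _ _ y
  refine ⟨φ, ψ, fun x hx => ?_, fun y hy => ?_, ⟨fun x hx => ?_, fun y hy => ?_⟩,
    hZ.uniformContinuousOn_of_continuous ?_, hZ'.uniformContinuousOn_of_continuous ?_⟩
  · exact hφ ⟨x, hx⟩ ▸ Subtype.property _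
  · exact hψ ⟨y, hy⟩ ▸ Subtype.property _
  · rw [hφ ⟨x, hx⟩, hψ, e.symm_apply_apply]
  · rw [hψ ⟨y, hy⟩, hφ, e.apply_symm_apply]
  · rw [continuousOn_iff_continuous_domRestrict, show Z.domRestrict φ = _ from funext hφ]
    exact continuous_subtype_val.comp e.continuous
  · rw [continuousOn_iff_continuous_domRestrict, show Z'.domRestrict ψ = _ from funext hψ]
    exact continuous_subtype_val.comp e.symm.continuous

namespace IsUniformEquivOn

lemma symm (h : IsUniformEquivOn Z Z' φ ψ) : IsUniformEquivOn Z' Z ψ φ :=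
  ⟨h.mapsTo_symm, h.mapsTo, h.invOn.symm, h.uniformContinuousOn_symm, h.uniformContinuousOn⟩

lemma mapsTo_image (h : IsUniformEquivOn Z Z' φ ψ) (hA : A ⊆ Z) : MapsTo ψ (φ '' A) A := by
  rintro _ ⟨x, hx, rfl⟩
  rwa [h.invOn.1 (hA hx)]

lemma image_subset (h : IsUniformEquivOn Z Z' φ ψ) (hA : A ⊆ Z) : φ '' A ⊆ Z' :=
  (h.mapsTo.mono_left hA).image_subset

lemma image (h : IsUniformEquivOn Z Z' φ ψ) (hA : A ⊆ Z) : IsUniformEquivOn A (φ '' A) φ ψ :=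
  ⟨Set.mapsTo_image φ A, h.mapsTo_image hA, h.invOn.mono hA (h.image_subset hA),
    h.uniformContinuousOn.mono hA, h.uniformContinuousOn_symm.mono (h.image_subset hA)⟩

lemma isCompact_image (h : IsUniformEquivOn Z Z' φ ψ) (hA : A ⊆ Z) (hAc : IsCompact A) :
    IsCompact (φ '' A) :=
  hAc.image_of_continuousOn (h.uniformContinuousOn.continuousOn.mono hA)

lemma pullback_mem_cocycles (h : IsUniformEquivOn Z Z' φ ψ) (hA : A ⊆ Z) {f : Cochain X}
    (hf : f ∈ cocycles q Z A) : pullback ψ f ∈ cocycles q Z' (φ '' A) :=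
  VennReduction.pullback_mem_cocycles (h.image_subset hA) h.mapsTo_symm (h.mapsTo_image hA)
    h.uniformContinuousOn_symm hf

lemma mem_coboundaries (h : IsUniformEquivOn Z Z' φ ψ) (hA : A ⊆ Z) {f : Cochain X}
    (hf : pullback ψ f ∈ coboundaries q Z' (φ '' A)) : f ∈ coboundaries q Z A := by
  have hpull := pullback_mem_coboundaries hA h.mapsTo (Set.mapsTo_image φ A)
    h.uniformContinuousOn hf
  refine ((coboundaries _ _ _).add_mem_iff_left hpull).1
    (mem_coboundaries_of_vanishing ⟨1, one_pos, fun l _ hl => ?_⟩)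
  have hmap : (l.map φ).map ψ = l := by
    rw [List.map_map]
    exact (List.map_congr_left fun x hx => h.invOn.1 (hl.2.1 x hx)).trans (List.map_id l)
  rw [Pi.add_apply, pullback_apply, pullback_apply, hmap, ZModModule.add_self]

lemma isAcyclic (h : IsUniformEquivOn Z Z' φ ψ) (hA : A ⊆ Z)
    (hac : IsAcyclic q Z' (φ '' A)) : IsAcyclic q Z A :=
  fun _ hf => h.mem_coboundaries hA (hac (h.pullback_mem_cocycles hA hf))

lemma isAcyclic_empty (h : IsUniformEquivOn Z Z' φ ψ) (hac : IsAcyclic q Z' ∅) :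
    IsAcyclic q Z ∅ :=
  h.isAcyclic (empty_subset _) (image_empty φ ▸ hac)

lemma dimLE (h : IsUniformEquivOn Z Z' φ ψ) (hdim : DimLE k Z') : DimLE k Z :=
  fun q hq _ hA hAc =>
    h.isAcyclic hA (hdim q hq _ (h.image_subset hA) (h.isCompact_image hA hAc))

lemma isCohomologySphere (h : IsUniformEquivOn Z Z' φ ψ) (hs : IsCohomologySphere k Z') :
    IsCohomologySphere k Z where
  isAcyclic q hq := h.isAcyclic_empty (hs.isAcyclic q hq)
  not_isAcyclic hac := hs.not_isAcyclic (h.symm.isAcyclic_empty hac)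
  rankLEOne f hf g hg := by
    have hpull {f : Cochain X} (hf : f ∈ cocycles k Z ∅) : pullback ψ f ∈ cocycles k Z' ∅ :=
      image_empty φ ▸ h.pullback_mem_cocycles (empty_subset _) hf
    have hb {f : Cochain X} (hf : pullback ψ f ∈ coboundaries k Z' ∅) :
        f ∈ coboundaries k Z ∅ :=
      h.mem_coboundaries (empty_subset _) ((image_empty φ).symm ▸ hf)
    have hrank := hs.rankLEOne _ (hpull hf) _ (hpull hg)
    rw [← map_add] at hrank
    exact hrank.imp hb (Or.imp hb hb)

lemma hasAcyclicPunctures (h : IsUniformEquivOn Z Z' φ ψ) (hp : HasAcyclicPunctures Z') :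
    HasAcyclicPunctures Z := by
  intro x hx A hA hAc hxA
  obtain ⟨L, hLZ, hAL, hxL, hLc, hLa⟩ := hp (φ x) (h.mapsTo hx) (φ '' A) (h.image_subset hA)
    (h.isCompact_image hA hAc) fun hxA' => hxA (h.invOn.1 hx ▸ h.mapsTo_image hA hxA')
  refine ⟨ψ '' L, h.symm.image_subset hLZ, fun y hy => ?_, fun hxL' => ?_,
    h.symm.isCompact_image hLZ hLc, fun q => (h.symm.image hLZ).symm.isAcyclic_empty (hLa q)⟩
  · exact ⟨φ y, hAL (mem_image_of_mem φ hy), h.invOn.1 (hA hy)⟩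
  · exact hxL (h.symm.mapsTo_image hLZ hxL')

end IsUniformEquivOn

end UniformEquiv

section TopologicalSpheres

variable {E : Type*} [MetricSpace E] {d k : ℕ} {Z A : Set E}

/-- A compact set with the cohomological properties of a `k`-dimensional sphere that survive
uniform homeomorphism. -/
structure IsSphereLike (k : ℕ) (Z : Set E) : Prop extends IsCohomologySphere k Z where
  isCompact : IsCompact Z
  dimLE : DimLE k Z
  hasAcyclicPunctures : HasAcyclicPunctures Z

lemma hasAcyclicPunctures_sphere {F : Type*} [NormedAddCommGroup F] [InnerProductSpace ℝ F]
    [FiniteDimensional ℝ F] : HasAcyclicPunctures (sphere (0 : F) 1) := by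
  intro x hx A hA hAc hxA
  obtain ⟨r, hr, hball⟩ := Metric.isOpen_iff.1 hAc.isClosed.isOpen_compl x hxA
  exact ⟨sphere 0 1 \ ball x r, sdiff_subset, fun y hy => ⟨hA hy, fun hy' => hball hy' hy⟩,
    fun hx' => hx'.2 (mem_ball_self hr), (isCompact_sphere _ _).diff isOpen_ball,
    isAcyclic_sphere_diff_ball hx hr⟩

/-- A topological `d`-sphere: a compact set homeomorphic to `S^d`. -/
def IsSphere {X : Type*} [TopologicalSpace X] (d : ℕ) (Z : Set X) : Prop :=
  IsCompact Z ∧ HomeoToSphere d Z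

lemma IsSphere.exists_isUniformEquivOn (h : IsSphere d Z) :
    ∃ φ ψ, IsUniformEquivOn Z (sphere (0 : EuclideanSpace ℝ (Fin (d + 1))) 1) φ ψ := by
  obtain ⟨hZ, ⟨e⟩⟩ := h
  obtain ⟨y, hy⟩ : (sphere (0 : EuclideanSpace ℝ (Fin (d + 1))) 1).Nonempty :=
    NormedSpace.sphere_nonempty.2 zero_le_one
  exact VennReduction.exists_isUniformEquivOn hZ (isCompact_sphere _ _)
    ⟨e.symm ⟨y, hy⟩, Subtype.property _⟩ e

lemma IsSphere.isSphereLike (h : IsSphere d Z) : IsSphereLike d Z := by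
  obtain ⟨φ, ψ, he⟩ := h.exists_isUniformEquivOn
  have hfin : Module.finrank ℝ (EuclideanSpace ℝ (Fin (d + 1))) = d + 1 :=
    finrank_euclideanSpace_fin
  exact ⟨he.isCohomologySphere (isCohomologySphere_sphere hfin), h.1, he.dimLE (dimLE_sphere hfin),
    he.hasAcyclicPunctures hasAcyclicPunctures_sphere⟩

lemma IsSphere.isConnected (h : IsSphere (d + 1) Z) : IsConnected Z := by
  obtain ⟨-, ⟨e⟩⟩ := h
  have hsphere : IsConnected (sphere (0 : EuclideanSpace ℝ (Fin (d + 1 + 1))) 1) := by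
    refine isConnected_sphere ?_ _ zero_le_one
    rw [← Module.finrank_eq_rank, finrank_euclideanSpace_fin]
    exact_mod_cast (by omega : 1 < d + 1 + 1)
  rw [isConnected_iff_connectedSpace] at hsphere ⊢
  exact e.symm.surjective.connectedSpace e.symm.continuous

end TopologicalSpheres

/-! ### Splitting a sphere along a wall -/

section Splitting

variable {E : Type*} [MetricSpace E] {q : ℕ} {Z Y U A B D T : Set E} {u : Fin 2 → Set E}
  {a b : Fin 2}

/-- The compact set `D` cuts `Z` into the two disjoint sides `u 0` and `u 1`. Compactness of
`D ∪ u a` expresses that the other side is relatively open in `Z`. -/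
structure IsSplitting {X : Type*} [TopologicalSpace X] (Z D : Set X) (u : Fin 2 → Set X) :
    Prop where
  union_eq : D ∪ u 0 ∪ u 1 = Z
  disjoint_sides : Disjoint (u 0) (u 1)
  disjoint_wall : ∀ a, Disjoint D (u a)
  isCompact_union : ∀ a, IsCompact (D ∪ u a)

namespace IsSplitting

lemma union_union (h : IsSplitting Z D u) (hab : a ≠ b) : (D ∪ u a) ∪ (D ∪ u b) = Z := by
  have hunion := h.union_eq
  fin_cases a <;> fin_cases b <;> grind

lemma disjoint (h : IsSplitting Z D u) (hab : a ≠ b) : Disjoint (u a) (u b) := by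
  have hdisj := h.disjoint_sides
  have hdisj' := hdisj.symm
  fin_cases a <;> fin_cases b <;> first | exact absurd rfl hab | assumption

lemma union_inter_union (h : IsSplitting Z D u) (hab : a ≠ b) : (D ∪ u a) ∩ (D ∪ u b) = D := by
  rw [← union_inter_distrib_left, (h.disjoint hab).inter_eq, union_empty]

lemma wall_subset (h : IsSplitting Z D u) : D ⊆ Z :=
  h.union_eq ▸ subset_union_left.trans subset_union_left

lemma side_subset (h : IsSplitting Z D u) (a : Fin 2) : u a ⊆ Z := by
  obtain ⟨b, hab⟩ := exists_ne a
  exact h.union_union hab ▸ subset_union_right.trans subset_union_right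

lemma diff_side (h : IsSplitting Z D u) (hab : a ≠ b) : Z \ u a = D ∪ u b := by
  have hwall := (h.disjoint_wall a).notMem_of_mem_left
  have hside := (h.disjoint hab).notMem_of_mem_right
  rw [← h.union_union hab]
  grind

lemma diff_union (h : IsSplitting Z D u) (hab : a ≠ b) : Z \ (D ∪ u b) = u a := by
  rw [← h.diff_side hab, sdiff_sdiff_cancel_left (h.side_subset a)]

lemma isCompact_wall (h : IsSplitting Z D u) : IsCompact D :=
  h.union_inter_union zero_ne_one ▸ (h.isCompact_union 0).inter (h.isCompact_union 1)

lemma isCompact_diff_side (h : IsSplitting Z D u) (a : Fin 2) : IsCompact (Z \ u a) := by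
  obtain ⟨b, hab⟩ := exists_ne a
  exact h.diff_side hab.symm ▸ h.isCompact_union b

lemma inter_wall_nonempty (h : IsSplitting Z D u) (hY : Y ⊆ Z) (hc : IsPreconnected Y)
    (hmeet : ∀ a, (Y ∩ u a).Nonempty) : (Y ∩ D).Nonempty := by
  have hcross := isPreconnected_closed_iff.1 hc _ _ (h.isCompact_union 0).isClosed
    (h.isCompact_union 1).isClosed (hY.trans (h.union_union zero_ne_one).ge)
    ((hmeet 0).mono (inter_subset_inter_right _ subset_union_right))
    ((hmeet 1).mono (inter_subset_inter_right _ subset_union_right))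
  rwa [h.union_inter_union zero_ne_one] at hcross

lemma restrict (h : IsSplitting Z D u) (hY : IsCompact Y) (hYZ : Y ⊆ Z) :
    IsSplitting Y (D ∩ Y) fun a => u a ∩ Y where
  union_eq := by
    rw [← union_inter_distrib_right, ← union_inter_distrib_right, h.union_eq,
      inter_eq_right.2 hYZ]
  disjoint_sides := h.disjoint_sides.mono inter_subset_left inter_subset_left
  disjoint_wall a := (h.disjoint_wall a).mono inter_subset_left inter_subset_left
  isCompact_union a := union_inter_distrib_right .. ▸ (h.isCompact_union a).inter hY

lemma union_diff (h : IsSplitting Z D u) (hU : IsCompact (Z \ U)) :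
    IsSplitting Z (Z \ U ∪ D) fun a => U ∩ u a where
  union_eq := by
    have hunion := h.union_eq
    grind
  disjoint_sides := h.disjoint_sides.mono inter_subset_right inter_subset_right
  disjoint_wall a := disjoint_union_left.2
    ⟨disjoint_sdiff_left.mono_right inter_subset_left,
      (h.disjoint_wall a).mono_right inter_subset_right⟩
  isCompact_union a := by
    have heq : Z \ U ∪ D ∪ U ∩ u a = Z \ U ∪ (D ∪ u a) := by
      have hside := h.side_subset a
      grind
    exact heq ▸ hU.union (h.isCompact_union a)

lemma exists_add_cocycles (h : IsSplitting Z D u) {f : Cochain E}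
    (hf : f ∈ cocycles (q + 1) Z D) : ∃ f₀ ∈ cocycles (q + 1) Z (D ∪ u 0),
      ∃ f₁ ∈ cocycles (q + 1) Z (D ∪ u 1), f + (f₀ + f₁) ∈ coboundaries (q + 1) Z D := by
  have hext {a b : Fin 2} (hab : a ≠ b) : ∃ g ∈ cocycles (q + 1) Z (D ∪ u a),
      f + g ∈ coboundaries (q + 1) (D ∪ u b) D := by
    have hfb : f ∈ cocycles (q + 1) (D ∪ u b) D :=
      cocycles_anti (h.union_union hab ▸ subset_union_right) le_rfl hf
    have hexc := exists_excision_preimage (q := q + 1) (f := f) (h.isCompact_union a)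
      (h.isCompact_union b)
    rw [h.union_inter_union hab, h.union_union hab] at hexc
    exact hexc hfb
  obtain ⟨f₀, hf₀, hff₀⟩ := hext zero_ne_one
  obtain ⟨f₁, hf₁, hff₁⟩ := hext one_ne_zero
  refine ⟨f₀, hf₀, f₁, hf₁, ?_⟩
  have hcoc : f + (f₀ + f₁) ∈ cocycles (q + 1) ((D ∪ u 0) ∪ (D ∪ u 1)) D := by
    rw [h.union_union zero_ne_one]
    exact add_mem hf (add_mem (cocycles_anti le_rfl subset_union_left hf₀)
      (cocycles_anti le_rfl subset_union_left hf₁))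
  have hglue := mem_coboundaries_union (h.isCompact_union 0) (h.isCompact_union 1)
    h.isCompact_wall (subset_union_left.trans subset_union_left) ?_ hcoc ?_ ?_
  · rwa [h.union_union zero_ne_one] at hglue
  · rw [← union_assoc, union_self, h.union_inter_union zero_ne_one,
      inter_eq_left.2 subset_union_left]
    exact isAcyclic_self q D
  · rw [inter_eq_left.2 subset_union_left, add_left_comm]
    exact add_mem (mem_coboundaries_of_vanishing hf₀.1) hff₁
  · rw [inter_eq_left.2 subset_union_left, ← add_assoc]
    exact add_mem hff₀ (mem_coboundaries_of_vanishing hf₁.1)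

lemma rankLEOne_inf (h : IsSplitting Z D u) (hZ : IsSphereLike (q + 1) Z)
    (hu : ∀ a, IsPreconnected (u a)) :
    RankLEOne (cocycles (q + 1) Z D ⊓ coboundaries (q + 1) Z ∅) (coboundaries (q + 1) Z D) := by
  have hside {a b : Fin 2} (hab : a ≠ b) {f : Cochain E} (hf : f ∈ cocycles (q + 1) Z (D ∪ u a))
      (hb : f ∈ coboundaries (q + 1) Z ∅) : f ∈ coboundaries (q + 1) Z D :=
    coboundaries_anti le_rfl subset_union_left
      (mem_coboundaries_of_isPreconnected_diff hZ.isCompact hZ.dimLE hZ.hasAcyclicPunctures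
        (h.isCompact_union a) (h.union_union hab ▸ subset_union_left)
        (h.diff_union hab.symm ▸ hu b) hf hb)
  have hsum {f f₀ f₁ : Cochain E} (hf₀ : f₀ ∈ cocycles (q + 1) Z (D ∪ u 0))
      (hf₁ : f₁ ∈ cocycles (q + 1) Z (D ∪ u 1)) (hb : f ∈ coboundaries (q + 1) Z ∅)
      (hff : f + (f₀ + f₁) ∈ coboundaries (q + 1) Z D) (hb₀ : f₀ ∈ coboundaries (q + 1) Z ∅) :
      f ∈ coboundaries (q + 1) Z D := by
    have hb₀₁ : f₀ + f₁ ∈ coboundaries (q + 1) Z ∅ :=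
      (Submodule.add_mem_iff_right _ hb).1 (coboundaries_anti le_rfl (empty_subset _) hff)
    have hb₁ := (Submodule.add_mem_iff_right _ hb₀).1 hb₀₁
    exact (Submodule.add_mem_iff_left _
      (add_mem (hside zero_ne_one hf₀ hb₀) (hside one_ne_zero hf₁ hb₁))).1 hff
  rintro f ⟨hf, hbf⟩ g ⟨hg, hbg⟩
  obtain ⟨f₀, hf₀, f₁, hf₁, hff⟩ := h.exists_add_cocycles hf
  obtain ⟨g₀, hg₀, g₁, hg₁, hgg⟩ := h.exists_add_cocycles hg
  refine (hZ.rankLEOne f₀ (cocycles_anti le_rfl (empty_subset _) hf₀) g₀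
    (cocycles_anti le_rfl (empty_subset _) hg₀)).imp (hsum hf₀ hf₁ hbf hff)
    (Or.imp (hsum hg₀ hg₁ hbg hgg) (hsum (add_mem hf₀ hg₀) (add_mem hf₁ hg₁)
      (add_mem hbf hbg) ?_))
  rw [add_add_add_comm f₀, add_add_add_comm f]
  exact add_mem hff hgg

lemma rankLEOne_wall (h : IsSplitting Z D u) (hZ : IsSphereLike (q + 1) Z)
    (hu : ∀ a, IsPreconnected (u a)) (hB : B ⊆ D) (hac : IsAcyclic q Z B) :
    RankLEOne (cocycles q D B) (coboundaries q D B) := by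
  have hδ {f : Cochain E} (hf : f ∈ cocycles q D B) :
      δ f ∈ cocycles (q + 1) Z D ⊓ coboundaries (q + 1) Z ∅ :=
    Submodule.mem_inf.2 ⟨coboundary_mem_cocycles hf, mem_coboundaries.2
      ⟨f, vanishing_empty _ f, by rw [ZModModule.add_self]; exact zero_mem _⟩⟩
  have hlift {f : Cochain E} (hf : f ∈ cocycles q D B) (hb : δ f ∈ coboundaries (q + 1) Z D) :
      f ∈ coboundaries q D B := by
    obtain ⟨f', hf', hff'⟩ := exists_cocycle_of_coboundary_mem hB hf hb
    exact (Submodule.add_mem_iff_left _ (coboundaries_anti h.wall_subset le_rfl (hac hf'))).1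
      (mem_coboundaries_of_vanishing hff')
  intro f hf g hg
  refine (h.rankLEOne_inf hZ hu _ (hδ hf) _ (hδ hg)).imp (hlift hf)
    (Or.imp (hlift hg) fun hb => hlift (add_mem hf hg) ?_)
  rwa [map_add]

lemma isAcyclic_diff_side (h : IsSplitting Z D u) (hac : IsAcyclic (q + 1) Z D) (a : Fin 2) :
    IsAcyclic (q + 1) Z (Z \ u a) := by
  obtain ⟨b, hba⟩ := exists_ne a
  rw [h.diff_side hba.symm]
  intro f hf
  have hexc := mem_coboundaries_of_excision (q := q) (f := f) (h.isCompact_union b)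
    (h.isCompact_union a)
  rw [h.union_inter_union hba, h.union_union hba] at hexc
  exact hexc hf (coboundaries_anti (h.union_union hba ▸ subset_union_right) le_rfl
    (hac (cocycles_anti le_rfl subset_union_left hf)))

end IsSplitting

lemma RankLEOne.excision (hA : IsCompact A) (hB : IsCompact B)
    (h : RankLEOne (cocycles (q + 1) (A ∪ B) A) (coboundaries (q + 1) (A ∪ B) A)) :
    RankLEOne (cocycles (q + 1) B (A ∩ B)) (coboundaries (q + 1) B (A ∩ B)) := by
  have hrestrict {f f' : Cochain E} (hff' : f + f' ∈ coboundaries (q + 1) B (A ∩ B))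
      (hb : f' ∈ coboundaries (q + 1) (A ∪ B) A) : f ∈ coboundaries (q + 1) B (A ∩ B) :=
    (Submodule.add_mem_iff_left _
      (coboundaries_anti subset_union_right inter_subset_left hb)).1 hff'
  intro f hf g hg
  obtain ⟨f', hf', hff'⟩ := exists_excision_preimage hA hB hf
  obtain ⟨g', hg', hgg'⟩ := exists_excision_preimage hA hB hg
  refine (h f' hf' g' hg').imp (hrestrict hff') (Or.imp (hrestrict hgg') (hrestrict ?_))
  rw [add_add_add_comm]
  exact add_mem hff' hgg'

namespace IsSphereLike

lemma exists_cocycle_notMem (hT : IsSphereLike q T) (hA : IsCompact A) (hAT : A ⊂ T) :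
    ∃ f ∈ cocycles q T A, f ∉ coboundaries q T ∅ := by
  obtain ⟨f, hf, hfb⟩ := SetLike.not_le_iff_exists.1 hT.not_isAcyclic
  obtain ⟨f', hf', hff'⟩ := exists_cocycle_of_restrict_coboundary hf
    (isAcyclic_of_ssubset hT.dimLE hT.hasAcyclicPunctures hA hAT
      (cocycles_anti hAT.subset le_rfl hf))
  exact ⟨f', hf', fun hb => hfb ((Submodule.add_mem_iff_left _ hb).1 hff')⟩

lemma isPreconnected_diff (hT : IsSphereLike (q + 1) T) (hA : IsCompact A) (hAT : A ⊆ T)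
    (hrank : RankLEOne (cocycles (q + 1) T A) (coboundaries (q + 1) T A)) :
    IsPreconnected (T \ A) := by
  have hclass {w : Set E} (hw : IsOpen w) (hmeet : ((T \ A) ∩ w).Nonempty) :
      IsCompact (A ∪ T \ w) ∧ ∃ f ∈ cocycles (q + 1) T (A ∪ T \ w),
        f ∉ coboundaries (q + 1) T A := by
    obtain ⟨x, ⟨hxT, hxA⟩, hxw⟩ := hmeet
    have hcompact := hA.union (hT.isCompact.diff hw)
    obtain ⟨f, hf, hfb⟩ := hT.exists_cocycle_notMem hcompact
      ⟨union_subset hAT sdiff_subset, fun hsub => (hsub hxT).elim hxA fun hx => hx.2 hxw⟩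
    exact ⟨hcompact, f, hf, fun hb => hfb (coboundaries_anti le_rfl (empty_subset _) hb)⟩
  intro v w hv hw hcover hmeetv hmeetw
  by_contra hdisj
  obtain ⟨hAv, f, hf, hfb⟩ := hclass hv hmeetv
  obtain ⟨hAw, g, hg, hgb⟩ := hclass hw hmeetw
  have hunion : (A ∪ T \ w) ∪ (A ∪ T \ v) = T := by
    rw [not_nonempty_iff_eq_empty, eq_empty_iff_forall_notMem] at hdisj
    ext x
    have hnot := hdisj x
    have hsub := @hAT x
    simp only [mem_union, mem_inter_iff, Set.mem_sdiff] at *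
    tauto
  have hinter : (A ∪ T \ w) ∩ (A ∪ T \ v) = A := by
    ext x
    have hsub := @hcover x
    simp only [mem_union, mem_inter_iff, Set.mem_sdiff] at *
    tauto
  rcases hrank f (cocycles_anti le_rfl subset_union_left hf) g
    (cocycles_anti le_rfl subset_union_left hg) with hb | hb | hb
  · exact hfb hb
  · exact hgb hb
  · have hgv : g ∈ coboundaries (q + 1) (A ∪ T \ v) A := (Submodule.add_mem_iff_right _
      (mem_coboundaries_of_vanishing hf.1)).1
      (coboundaries_anti (union_subset hAT sdiff_subset) le_rfl hb)
    have hexc := mem_coboundaries_of_excision (q := q) (f := g) hAw hAv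
    rw [hunion, hinter] at hexc
    exact hgb (coboundaries_anti le_rfl subset_union_left (hexc hg hgv))

end IsSphereLike

end Splitting

/-! ### Unions of spheres of rank at most one -/

lemma exists_irredundant_sUnion_eq {X : Type*} (𝒞 : Finset (Set X)) : ∃ 𝒟 ⊆ 𝒞,
    ⋃₀ (𝒟 : Set (Set X)) = ⋃₀ 𝒞 ∧ ∀ D ∈ 𝒟, ¬ D ⊆ ⋃₀ (𝒟 \ {D} : Set (Set X)) := by
  classical
  obtain ⟨𝒟, ⟨hsub, hunion⟩, hmin⟩ := exists_minimal_of_wellFoundedLT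
    (fun 𝒟 : Finset (Set X) => 𝒟 ⊆ 𝒞 ∧ ⋃₀ (𝒟 : Set (Set X)) = ⋃₀ 𝒞) ⟨𝒞, Subset.rfl, rfl⟩
  refine ⟨𝒟, hsub, hunion, fun D hD hred => ?_⟩
  rw [← Finset.coe_erase] at hred
  have hunion' : ⋃₀ (𝒟.erase D : Set (Set X)) = ⋃₀ 𝒞 := by
    rw [← hunion, ← Finset.insert_erase hD, Finset.coe_insert, sUnion_insert,
      Finset.erase_insert (Finset.notMem_erase D 𝒟), union_eq_right.2 hred]
  exact Finset.notMem_erase D 𝒟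
    (hmin ⟨(Finset.erase_subset D 𝒟).trans hsub, hunion'⟩ (Finset.erase_subset D 𝒟) hD)

section Wall

variable {E : Type*} [MetricSpace E] {q : ℕ} {K T D Z : Set E} {u : Fin 2 → Set E}

lemma IsSphereLike.exists_cocycle_union (hT : IsSphereLike q T) (hK : IsCompact K)
    (hTK : ¬ T ⊆ K) : ∃ f ∈ cocycles q (K ∪ T) K, f ∉ coboundaries q T ∅ := by
  obtain ⟨f, hf, hfb⟩ := hT.exists_cocycle_notMem (hK.inter hT.isCompact)
    ⟨inter_subset_right, fun hsub => hTK (hsub.trans inter_subset_left)⟩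
  obtain ⟨f', hf', hff'⟩ := exists_excision_preimage hK hT.isCompact hf
  exact ⟨f', hf', fun hb => hfb ((Submodule.add_mem_iff_left _ hb).1
    (coboundaries_anti le_rfl (empty_subset _) hff'))⟩

lemma isSphere_of_rankLEOne (hne : D.Nonempty) (hD : FinUnionOfSpheres q D)
    (hrank : RankLEOne (cocycles q D ∅) (coboundaries q D ∅)) : IsSphere q D := by
  obtain ⟨𝒞, rfl, h𝒞⟩ := hD
  obtain ⟨𝒟, hsub, hunion, hirr⟩ := exists_irredundant_sUnion_eq 𝒞
  rw [← hunion] at hne hrank ⊢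
  replace h𝒞 : ∀ S ∈ 𝒟, IsSphere q S := fun S hS => h𝒞 S (hsub hS)
  have hclass {S : Set E} (hS : S ∈ 𝒟) : ∃ f ∈ cocycles q (⋃₀ 𝒟) (⋃₀ (𝒟 \ {S})),
      f ∉ coboundaries q S ∅ := by
    have hcompact : IsCompact (⋃₀ (𝒟 \ {S} : Set (Set E))) :=
      𝒟.finite_toSet.sdiff.isCompact_sUnion fun R hR => (h𝒞 R hR.1).1
    have heq : ⋃₀ (𝒟 \ {S}) ∪ S = ⋃₀ (𝒟 : Set (Set E)) := by
      rw [union_comm, ← sUnion_insert, insert_sdiff_self_of_mem hS]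
    exact heq ▸ (h𝒞 S hS).isSphereLike.exists_cocycle_union hcompact (hirr S hS)
  obtain ⟨x, S, hS, -⟩ := hne
  obtain hall | ⟨R, hR, hRS⟩ : (∀ R ∈ 𝒟, R = S) ∨ ∃ R ∈ 𝒟, R ≠ S := by grind
  · rw [Finset.eq_singleton_iff_unique_mem.2 ⟨hS, hall⟩, Finset.coe_singleton, sUnion_singleton]
    exact h𝒞 S hS
  · obtain ⟨f, hf, hfb⟩ := hclass hS
    obtain ⟨g, hg, hgb⟩ := hclass hR
    have hbS {e : Cochain E} (he : e ∈ coboundaries q (⋃₀ (𝒟 : Set (Set E))) ∅) :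
        e ∈ coboundaries q S ∅ := coboundaries_anti (subset_sUnion_of_mem hS) le_rfl he
    rcases hrank f (cocycles_anti le_rfl (empty_subset _) hf) g
      (cocycles_anti le_rfl (empty_subset _) hg) with hb | hb | hb
    · exact (hfb (hbS hb)).elim
    · exact (hgb (coboundaries_anti (subset_sUnion_of_mem hR) le_rfl hb)).elim
    · have hSR : S ⊆ ⋃₀ (𝒟 \ {R}) := subset_sUnion_of_mem (mem_sdiff_singleton.2 ⟨hS, hRS.symm⟩)
      have hgS : g ∈ coboundaries q S ∅ :=
        mem_coboundaries_of_vanishing (vanishing_anti _ hSR hg.1)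
      exact (hfb ((Submodule.add_mem_iff_left _ hgS).1 (hbS hb))).elim

lemma IsSplitting.isSphere_wall (h : IsSplitting Z D u) (hZ : IsSphere (q + 1) Z)
    (hu : ∀ a, IsPreconnected (u a)) (hne : D.Nonempty) (hD : FinUnionOfSpheres q D) :
    IsSphere q D :=
  isSphere_of_rankLEOne hne hD (h.rankLEOne_wall hZ.isSphereLike hu (empty_subset _)
    (hZ.isSphereLike.isAcyclic q q.succ_ne_self.symm))

end Wall

/-! ### Arrangements of spheres -/

section Cells

variable {E ι : Type*} {Z T : Set E} {σ : ι → Fin 2 → Set E} {J : Finset ι} {ε : ι → Fin 2} {k : ι}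

/-- The cell of `Z` lying on side `ε i` of the `i`-th wall for every `i ∈ J`. -/
def cell (Z : Set E) (σ : ι → Fin 2 → Set E) (J : Finset ι) (ε : ι → Fin 2) : Set E :=
  Z ∩ ⋂ i ∈ J, σ i (ε i)

lemma cell_subset : cell Z σ J ε ⊆ Z := inter_subset_left

lemma diff_cell_empty : Z \ cell Z σ ∅ ε = ∅ := by simp [cell]

lemma cell_insert [DecidableEq ι] :
    cell Z σ (insert k J) ε = cell Z σ J ε ∩ σ k (ε k) := by
  rw [cell, cell, Finset.set_biInter_insert, inter_comm (σ k (ε k)), inter_assoc]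

lemma cell_insert_update [DecidableEq ι] (hk : k ∉ J) (a : Fin 2) :
    cell Z σ (insert k J) (Function.update ε k a) = cell Z σ J ε ∩ σ k a := by
  have hcongr : ⋂ i ∈ J, σ i (Function.update ε k a i) = ⋂ i ∈ J, σ i (ε i) :=
    iInter₂_congr fun i hi => by rw [Function.update_of_ne (ne_of_mem_of_not_mem hi hk)]
  rw [cell_insert, Function.update_self, cell, cell, hcongr]

lemma cell_inter_of_subset (hT : T ⊆ Z) :
    cell T (fun i a => σ i a ∩ T) J ε = cell Z σ J ε ∩ T := by
  ext x
  simp only [cell, mem_inter_iff, mem_iInter]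
  grind

end Cells

section Arrangement

variable {E ι : Type*} [MetricSpace E] {d p : ℕ} {Z : Set E} {I J : Finset ι} {T : ι → Set E}
  {σ : ι → Fin 2 → Set E} {ε : ι → Fin 2} {i j k : ι}

/-- A finite family of walls `T i`, `i ∈ I`, in a topological `d`-sphere `Z`: a fully reducible
simple Venn diagram on `Z` in which pairwise intersections of walls need not be disjoint unions
of spheres. -/
structure IsSphereArrangement {X : Type*} [TopologicalSpace X] (d : ℕ) (Z : Set X) (I : Finset ι)
    (T : ι → Set X) (σ : ι → Fin 2 → Set X) : Prop where
  isSphere : IsSphere d Z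
  isSphere_wall : ∀ i ∈ I, IsSphere (d - 1) (T i)
  isSplitting : ∀ i ∈ I, IsSplitting Z (T i) (σ i)
  isConnected_cell : ∀ J ⊆ I, ∀ ε, IsConnected (cell Z σ J ε)
  biInter_eq_empty : ∀ J ⊆ I, 2 ≤ J.card → d ≤ J.card → ⋂ i ∈ J, T i = ∅
  finUnionOfSpheres : ∀ J ⊆ I, 2 ≤ J.card → J.card < d →
    FinUnionOfSpheres (d - J.card) (⋂ i ∈ J, T i)

namespace IsSphereArrangement

lemma isCompact_diff_cell (h : IsSphereArrangement d Z I T σ) (hJ : J ⊆ I) (ε : ι → Fin 2) :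
    IsCompact (Z \ cell Z σ J ε) := by
  have heq : Z \ cell Z σ J ε = ⋃ i ∈ J, Z \ σ i (ε i) := by
    simp only [cell, sdiff_self_inter, sdiff_iInter]
  exact heq ▸ J.isCompact_biUnion fun i hi => (h.isSplitting i (hJ hi)).isCompact_diff_side _

lemma isConnected_cell_inter_side (h : IsSphereArrangement d Z I T σ) (hJ : J ⊆ I) (hk : k ∈ I)
    (hkJ : k ∉ J) (a : Fin 2) : IsConnected (cell Z σ J ε ∩ σ k a) := by
  classical
  exact cell_insert_update hkJ a ▸ h.isConnected_cell _ (Finset.insert_subset hk hJ) _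

lemma cell_inter_wall_nonempty (h : IsSphereArrangement d Z I T σ) (hJ : J ⊆ I) (hk : k ∈ I)
    (hkJ : k ∉ J) : (cell Z σ J ε ∩ T k).Nonempty :=
  (h.isSplitting k hk).inter_wall_nonempty cell_subset (h.isConnected_cell J hJ ε).isPreconnected
    fun a => (h.isConnected_cell_inter_side hJ hk hkJ a).nonempty

lemma cell_singleton (h : IsSphereArrangement d Z I T σ) (hi : i ∈ I) :
    cell Z σ {i} ε = σ i (ε i) := by
  rw [cell, Finset.set_biInter_singleton, inter_eq_right.2 ((h.isSplitting i hi).side_subset _)]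

lemma wall_inter_nonempty (h : IsSphereArrangement (d + 2) Z I T σ) (hi : i ∈ I) (hj : j ∈ I)
    (hij : i ≠ j) : (T i ∩ T j).Nonempty := by
  rw [inter_comm]
  refine (h.isSplitting i hi).inter_wall_nonempty (h.isSplitting j hj).wall_subset
    (h.isSphere_wall j hj).isConnected.isPreconnected fun a => ?_
  have hmeet := h.cell_inter_wall_nonempty (ε := fun _ => a) (Finset.singleton_subset_iff.2 hi) hj
    (Finset.notMem_singleton.2 hij.symm)
  rwa [h.cell_singleton hi, inter_comm] at hmeet

lemma isPreconnected_cell_inter_wall (h : IsSphereArrangement (p + 2) Z I T σ) (hJ : J ⊆ I)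
    (hk : k ∈ I) (hkJ : k ∉ J) (hac : IsAcyclic (p + 1) Z (Z \ cell Z σ J ε)) :
    IsPreconnected (cell Z σ J ε ∩ T k) := by
  have hcompact := h.isCompact_diff_cell hJ ε
  have hT : IsSphereLike (p + 1) (T k) := (h.isSphere_wall k hk).isSphereLike
  have hTZ := (h.isSplitting k hk).wall_subset
  have hrank := ((h.isSplitting k hk).union_diff hcompact).rankLEOne_wall h.isSphere.isSphereLike
    (fun a => (h.isConnected_cell_inter_side hJ hk hkJ a).isPreconnected) subset_union_left hac
  have hdiff : T k \ ((Z \ cell Z σ J ε) ∩ T k) = cell Z σ J ε ∩ T k := by grind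
  exact hdiff ▸ hT.isPreconnected_diff (hcompact.inter hT.isCompact) inter_subset_right
    (hrank.excision hcompact hT.isCompact)

lemma isAcyclic_diff_cell_insert [DecidableEq ι] (h : IsSphereArrangement (p + 2) Z I T σ)
    (hJ : J ⊆ I) (hk : k ∈ I) (hac : IsAcyclic (p + 1) Z (Z \ cell Z σ J ε))
    (hwall : IsAcyclic p (Z \ cell Z σ J ε ∪ T k) (Z \ cell Z σ J ε)) :
    IsAcyclic (p + 1) Z (Z \ cell Z σ (insert k J) ε) := by
  rw [cell_insert]
  refine ((h.isSplitting k hk).union_diff (h.isCompact_diff_cell hJ ε)).isAcyclic_diff_side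
    (fun f hf => ?_) (ε k)
  exact mem_coboundaries_of_isAcyclic (union_subset sdiff_subset (h.isSplitting k hk).wall_subset)
    hf (hac (cocycles_anti le_rfl subset_union_left hf)) hwall

lemma isAcyclic_diff_cell_of_wall (h : IsSphereArrangement (p + 2) Z I T σ)
    (hwall : ∀ k ∈ I, ∀ J ⊆ I, k ∉ J → (∀ K ⊆ J, ∀ ε, IsAcyclic (p + 1) Z (Z \ cell Z σ K ε)) →
      ∀ ε, IsAcyclic p (Z \ cell Z σ J ε ∪ T k) (Z \ cell Z σ J ε)) :
    ∀ J ⊆ I, ∀ ε, IsAcyclic (p + 1) Z (Z \ cell Z σ J ε) := by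
  classical
  intro J
  induction J using Finset.strongInduction with
  | H J ih =>
    intro hJ ε
    obtain rfl | ⟨k, hk⟩ := J.eq_empty_or_nonempty
    · rw [diff_cell_empty]
      exact h.isSphere.isSphereLike.isAcyclic _ (by omega)
    · have hJk : J.erase k ⊆ I := (J.erase_subset k).trans hJ
      have hac : ∀ K ⊆ J.erase k, ∀ ε, IsAcyclic (p + 1) Z (Z \ cell Z σ K ε) := fun K hK =>
        ih K (hK.trans_ssubset (Finset.erase_ssubset hk)) (hK.trans hJk)
      rw [← Finset.insert_erase hk]
      exact h.isAcyclic_diff_cell_insert hJk (hJ hk) (hac _ Subset.rfl ε)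
        (hwall k (hJ hk) _ hJk (J.notMem_erase k) hac ε)

lemma restrict_of_isAcyclic (h : IsSphereArrangement (p + 3) Z I T σ) (hj : j ∈ I) (hJ : J ⊆ I)
    (hjJ : j ∉ J) (hac : ∀ K ⊆ J, ∀ ε, IsAcyclic (p + 2) Z (Z \ cell Z σ K ε)) :
    IsSphereArrangement (p + 2) (T j) J (fun i => T i ∩ T j) (fun i a => σ i a ∩ T j) := by
  classical
  have hTZ := (h.isSplitting j hj).wall_subset
  have hsplit : ∀ i ∈ J, IsSplitting (T j) (T i ∩ T j) fun a => σ i a ∩ T j := fun i hi =>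
    (h.isSplitting i (hJ hi)).restrict (h.isSphere_wall j hj).1 hTZ
  have hcell : ∀ K ⊆ J, ∀ ε, IsConnected (cell Z σ K ε ∩ T j) := fun K hK ε =>
    ⟨h.cell_inter_wall_nonempty (hK.trans hJ) hj fun hjK => hjJ (hK hjK),
      h.isPreconnected_cell_inter_wall (hK.trans hJ) hj (fun hjK => hjJ (hK hjK)) (hac K hK ε)⟩
  have hbiInter {K : Finset ι} (hK : 2 ≤ K.card) :
      ⋂ i ∈ K, (T i ∩ T j) = ⋂ i ∈ insert j K, T i := by
    rw [Finset.set_biInter_insert, inter_comm]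
    exact biInter_inter (Finset.card_pos.1 (by omega)) T (T j)
  have hcard {K : Finset ι} (hK : K ⊆ J) : (insert j K).card = K.card + 1 :=
    Finset.card_insert_of_notMem fun hjK => hjJ (hK hjK)
  refine ⟨h.isSphere_wall j hj, fun i hi => ?_, hsplit, fun K hK ε => ?_, fun K hK h2 hd => ?_,
    fun K hK h2 hd => ?_⟩
  · have hij : i ≠ j := ne_of_mem_of_not_mem hi hjJ
    refine (hsplit i hi).isSphere_wall (h.isSphere_wall j hj) (fun a => ?_)
      (h.wall_inter_nonempty (hJ hi) hj hij) ?_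
    · have hconn := hcell {i} (Finset.singleton_subset_iff.2 hi) fun _ => a
      rw [h.cell_singleton (hJ hi)] at hconn
      exact hconn.isPreconnected
    · have hpair := h.finUnionOfSpheres {i, j}
        (Finset.insert_subset (hJ hi) (Finset.singleton_subset_iff.2 hj))
        (Finset.card_pair hij).ge (by rw [Finset.card_pair hij]; omega)
      rwa [Finset.card_pair hij, Finset.set_biInter_insert, Finset.set_biInter_singleton] at hpair
  · exact cell_inter_of_subset hTZ ▸ hcell K hK ε
  · rw [hbiInter h2]
    exact h.biInter_eq_empty _ (Finset.insert_subset hj (hK.trans hJ)) (by rw [hcard hK]; omega)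
      (by rw [hcard hK]; omega)
  · have hfin := h.finUnionOfSpheres _ (Finset.insert_subset hj (hK.trans hJ))
      (by rw [hcard hK]; omega) (by rw [hcard hK]; omega)
    rwa [hcard hK, ← hbiInter h2, ← add_assoc p 2 1, Nat.add_sub_add_right] at hfin

lemma isAcyclic_wall_two (h : IsSphereArrangement 2 Z I T σ) (hk : k ∈ I) (hJ : J ⊆ I)
    (hkJ : k ∉ J) : IsAcyclic 0 (Z \ cell Z σ J ε ∪ T k) (Z \ cell Z σ J ε) := by
  classical
  obtain rfl | ⟨i, hi⟩ := J.eq_empty_or_nonempty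
  · rw [diff_cell_empty, empty_union]
    exact (h.isSphere_wall k hk).isSphereLike.isAcyclic 0 (by omega)
  · have hik : i ≠ k := ne_of_mem_of_not_mem hi hkJ
    have hempty := h.biInter_eq_empty {i, k}
      (Finset.insert_subset (hJ hi) (Finset.singleton_subset_iff.2 hk))
      (Finset.card_pair hik).ge (Finset.card_pair hik).ge
    rw [Finset.set_biInter_insert, Finset.set_biInter_singleton] at hempty
    exact absurd hempty (h.wall_inter_nonempty (hJ hi) hk hik).ne_empty

theorem isAcyclic_diff_cell (h : IsSphereArrangement (p + 2) Z I T σ) :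
    ∀ J ⊆ I, ∀ ε, IsAcyclic (p + 1) Z (Z \ cell Z σ J ε) := by
  induction p generalizing Z I T σ with
  | zero =>
    exact h.isAcyclic_diff_cell_of_wall fun k hk J hJ hkJ _ ε => h.isAcyclic_wall_two hk hJ hkJ
  | succ p ih =>
    refine h.isAcyclic_diff_cell_of_wall fun k hk J hJ hkJ hac ε => ?_
    refine isAcyclic_union_left (h.isCompact_diff_cell hJ ε) (h.isSphere_wall k hk).1 ?_
    have hTZ := (h.isSplitting k hk).wall_subset
    have hcell : (Z \ cell Z σ J ε) ∩ T k =
        T k \ cell (T k) (fun i a => σ i a ∩ T k) J ε := by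
      rw [cell_inter_of_subset hTZ]
      grind
    exact hcell ▸ ih (h.restrict_of_isAcyclic hk hJ hkJ hac) J Subset.rfl ε

theorem restrict [DecidableEq ι] (h : IsSphereArrangement (p + 3) Z I T σ) (hj : j ∈ I) :
    IsSphereArrangement (p + 2) (T j) (I.erase j) (fun i => T i ∩ T j) (fun i a => σ i a ∩ T j) :=
  h.restrict_of_isAcyclic hj (I.erase_subset j) (I.notMem_erase j) fun K hK =>
    h.isAcyclic_diff_cell K (hK.trans (I.erase_subset j))

lemma isSphere_wall_inter (h : IsSphereArrangement (p + 3) Z I T σ) (hi : i ∈ I) (hj : j ∈ I)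
    (hij : i ≠ j) : IsSphere (p + 1) (T i ∩ T j) := by
  classical
  exact (h.restrict hj).isSphere_wall i (Finset.mem_erase.2 ⟨hij, hi⟩)

end IsSphereArrangement

end Arrangement

/-! ### Venn diagrams induced on a parametrized sphere -/

section Embedding

variable {X E : Type*} [TopologicalSpace X] [TopologicalSpace E] {d : ℕ} {u : X → E} {A : Set X}
  {B : Set E}

lemma IsSphere.image (hu : IsEmbedding u) (hA : IsSphere d A) : IsSphere d (u '' A) := by
  obtain ⟨hcompact, ⟨e⟩⟩ := hA
  exact ⟨hcompact.image hu.continuous, ⟨(hu.homeomorphImage A).symm.trans e⟩⟩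

lemma IsSphere.preimage (hu : IsEmbedding u) (hB : B ⊆ range u) (h : IsSphere d B) :
    IsSphere d (u ⁻¹' B) := by
  rw [← image_preimage_eq_of_subset hB] at h
  obtain ⟨hcompact, ⟨e⟩⟩ := h
  exact ⟨hu.isInducing.isCompact_iff.2 hcompact, ⟨(hu.homeomorphImage _).trans e⟩⟩

lemma finUnionOfSpheres_image (hu : IsEmbedding u) (hA : FinUnionOfSpheres d A) :
    FinUnionOfSpheres d (u '' A) := by
  classical
  obtain ⟨𝒞, rfl, h𝒞⟩ := hA
  refine ⟨𝒞.image (u '' ·), ?_, Finset.forall_mem_image.2 fun C hC => IsSphere.image hu (h𝒞 C hC)⟩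
  rw [Finset.coe_image, image_sUnion]

lemma finUnionOfSpheres_preimage (hu : IsEmbedding u) (hB : B ⊆ range u)
    (h : FinUnionOfSpheres d B) : FinUnionOfSpheres d (u ⁻¹' B) := by
  classical
  obtain ⟨𝒞, rfl, h𝒞⟩ := h
  refine ⟨𝒞.image (u ⁻¹' ·), ?_, Finset.forall_mem_image.2 fun C hC =>
    IsSphere.preimage hu ((subset_sUnion_of_mem hC).trans hB) (h𝒞 C hC)⟩
  rw [Finset.coe_image, sUnion_image, preimage_sUnion]

lemma isConnected_preimage (hu : IsEmbedding u) (hB : B ⊆ range u) (h : IsConnected B) :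
    IsConnected (u ⁻¹' B) := by
  refine ⟨h.nonempty.preimage' hB, hu.isInducing.isPreconnected_image.1 ?_⟩
  exact (image_preimage_eq_of_subset hB).symm ▸ h.isPreconnected

lemma connectedComponentIn_union_left {s t : Set X} {x : X} (hs : IsOpen s) (ht : IsOpen t)
    (hst : Disjoint s t) (hconn : IsPreconnected s) (hx : x ∈ s) :
    connectedComponentIn (s ∪ t) x = s :=
  (isPreconnected_connectedComponentIn.subset_left_of_subset_union hs ht hst
    (connectedComponentIn_subset _ _) ⟨x, mem_connectedComponentIn (Or.inl hx), hx⟩).antisymm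
    (hconn.subset_connectedComponentIn hx subset_union_left)

end Embedding

section Parametrization

variable {X E : Type*} [MetricSpace E] {Z D : Set E} {s : Fin 2 → Set E} {u : X → E} {a b : Fin 2}

namespace IsSplitting

lemma preimage_union (h : IsSplitting Z D s) (hu : range u = Z) (hab : a ≠ b) :
    u ⁻¹' s a ∪ u ⁻¹' s b = (u ⁻¹' D)ᶜ := by
  ext x
  have hx : u x ∈ Z := hu ▸ mem_range_self x
  have hwall (c : Fin 2) := (h.disjoint_wall c).notMem_of_mem_left (a := u x)
  rw [← h.union_union hab] at hx
  simp only [mem_union, mem_preimage, mem_compl_iff] at hx ⊢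
  grind

variable [TopologicalSpace X]

lemma isOpen_preimage (h : IsSplitting Z D s) (hcont : Continuous u) (hu : range u = Z)
    (a : Fin 2) : IsOpen (u ⁻¹' s a) := by
  have hcompl : u ⁻¹' (Z \ s a) = (u ⁻¹' s a)ᶜ := by
    rw [preimage_sdiff, ← hu, preimage_range, compl_eq_univ_sdiff]
  rw [← isClosed_compl_iff, ← hcompl]
  exact (h.isCompact_diff_side a).isClosed.preimage hcont

lemma preimage_eq_connectedComponentIn (h : IsSplitting Z D s) (hcont : Continuous u)
    (hu : range u = Z) (hconn : IsConnected (u ⁻¹' s a)) :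
    ∃ x, u ⁻¹' s a = connectedComponentIn (u ⁻¹' D)ᶜ x := by
  obtain ⟨b, hab⟩ := exists_ne a
  obtain ⟨x, hx⟩ := hconn.nonempty
  exact ⟨x, h.preimage_union hu hab.symm ▸ (connectedComponentIn_union_left
    (h.isOpen_preimage hcont hu a) (h.isOpen_preimage hcont hu b)
    ((h.disjoint hab.symm).preimage u) hconn.isPreconnected hx).symm⟩

end IsSplitting

namespace IsSphereArrangement

variable {ι κ : Type*} [TopologicalSpace X] {p : ℕ} {I : Finset ι} {T : ι → Set E}
  {σ : ι → Fin 2 → Set E} {k : κ → ι} {i j : ι}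

lemma isConnected_preimage_region [Finite κ] (h : IsSphereArrangement p Z I T σ)
    (hu : IsEmbedding u) (hrange : range u = Z) (hk : k.Injective) (hkI : ∀ l, k l ∈ I)
    (ε : κ → Fin 2) :
    IsConnected (⋂ l, u ⁻¹' σ (k l) (ε l)) := by
  classical
  have := Fintype.ofFinite κ
  have hcell : ⋂ l, u ⁻¹' σ (k l) (ε l) =
      u ⁻¹' cell Z σ (Finset.univ.image k) (Function.extend k ε 0) := by
    simp only [cell, ← hrange, preimage_inter, preimage_range, univ_inter, preimage_iInter,
      Finset.set_biInter_finset_image, hk.extend_apply, Finset.mem_univ, iInter_true]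
  rw [hcell]
  exact isConnected_preimage hu (hrange ▸ cell_subset)
    (h.isConnected_cell _ (Finset.image_subset_iff.2 fun l _ => hkI l) _)

lemma finDisjUnionOfSpheres_preimage (h : IsSphereArrangement (p + 2) Z I T σ)
    (hu : IsEmbedding u) (hrange : range u = Z) (hi : i ∈ I) (hj : j ∈ I) (hij : i ≠ j) :
    FinDisjUnionOfSpheres p (u ⁻¹' (T i ∩ T j)) := by
  classical
  obtain _ | p := p
  · have hempty := h.biInter_eq_empty {i, j}
      (Finset.insert_subset hi (Finset.singleton_subset_iff.2 hj))
      (Finset.card_pair hij).ge (Finset.card_pair hij).ge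
    rw [Finset.set_biInter_insert, Finset.set_biInter_singleton] at hempty
    exact ⟨∅, by simp [hempty], by simp, by simp⟩
  · have hsub : T i ∩ T j ⊆ range u :=
      hrange ▸ inter_subset_left.trans (h.isSplitting i hi).wall_subset
    refine ⟨{u ⁻¹' (T i ∩ T j)}, by simp, by simp, fun C hC => ?_⟩
    rw [Finset.mem_singleton.1 hC]
    exact (h.isSphere_wall_inter hi hj hij).preimage hu hsub

theorem isVennDiagramOn [Fintype κ] (h : IsSphereArrangement (p + 2) Z I T σ) (hu : IsEmbedding u)
    (hrange : range u = Z) (hk : k.Injective) (hkI : ∀ l, k l ∈ I) :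
    IsVennDiagramOn (p + 2) (fun l => u ⁻¹' T (k l)) (fun l a => u ⁻¹' σ (k l) a) := by
  have hside (l : κ) (a : Fin 2) : IsConnected (u ⁻¹' σ (k l) a) :=
    isConnected_preimage hu (hrange ▸ (h.isSplitting _ (hkI l)).side_subset a)
      (h.cell_singleton (ε := fun _ => a) (hkI l) ▸
        h.isConnected_cell {k l} (Finset.singleton_subset_iff.2 (hkI l)) _)
  refine ⟨fun l => (h.isSphere_wall _ (hkI l)).preimage hu
      (hrange ▸ (h.isSplitting _ (hkI l)).wall_subset),
    fun l => ⟨(h.isSplitting _ (hkI l)).preimage_union hrange zero_ne_one, ?_, fun a =>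
      (h.isSplitting _ (hkI l)).preimage_eq_connectedComponentIn hu.continuous hrange (hside l a)⟩,
    fun ε => ?_, fun l l' hne =>
      h.finDisjUnionOfSpheres_preimage hu hrange (hkI l) (hkI l') (hk.ne hne)⟩
  · exact ((h.isSplitting _ (hkI l)).disjoint_sides.preimage u).ne (hside l 0).nonempty.ne_empty
  · have hregion := h.isConnected_preimage_region hu hrange hk hkI ε
    exact ⟨hregion.nonempty, hregion⟩

theorem isSimpleVennDiagramOn [Fintype κ] (h : IsSphereArrangement (p + 2) Z I T σ)
    (hu : IsEmbedding u) (hrange : range u = Z) (hk : k.Injective) (hkI : ∀ l, k l ∈ I) :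
    IsSimpleVennDiagramOn (p + 2) (fun l => u ⁻¹' T (k l)) (fun l a => u ⁻¹' σ (k l) a) := by
  refine ⟨h.isVennDiagramOn hu hrange hk hkI, fun t ht => ?_⟩
  have hI : t.map ⟨k, hk⟩ ⊆ I := by
    intro i hi
    obtain ⟨l, -, rfl⟩ := Finset.mem_map.1 hi
    exact hkI l
  have hpre : ⋂ l ∈ t, u ⁻¹' T (k l) = u ⁻¹' ⋂ i ∈ t.map ⟨k, hk⟩, T i := by
    ext x
    simp
  obtain ⟨l, hl⟩ : t.Nonempty := Finset.card_pos.1 (by omega)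
  rw [← Finset.card_map ⟨k, hk⟩] at ht
  simp only [hpre]
  split_ifs with hcard <;> rw [← Finset.card_map ⟨k, hk⟩] at hcard
  · rw [h.biInter_eq_empty _ hI ht hcard, preimage_empty]
  · rw [← Finset.card_map ⟨k, hk⟩]
    have hwall := (h.isSplitting _ (hkI l)).wall_subset
    exact finUnionOfSpheres_preimage hu
      (hrange ▸ (biInter_subset_of_mem (Finset.mem_map_of_mem _ hl)).trans hwall)
      (h.finUnionOfSpheres _ hI ht (by omega))

end IsSphereArrangement

end Parametrization

open scoped OnePoint

/-! ### Interior and exterior in the one-point compactification -/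

section Sides

variable {E : Type*} [MetricSpace E] {S : Set E} {a : Fin 2} {x : E}

lemma mem_surfSide :
    x ∈ surfSide S a ↔ x ∉ S ∧ (IsBounded (connectedComponentIn Sᶜ x) ↔ a = 0) := by
  fin_cases a <;> simp [surfSide]

lemma disjoint_surfSide : Disjoint (surfSide S 0) (surfSide S 1) := by
  refine Set.disjoint_left.2 fun x hx hx' => ?_
  rw [mem_surfSide] at hx hx'
  exact zero_ne_one (hx'.2.1 (hx.2.2 rfl)).symm

lemma surfSide_union_surfSide : surfSide S 0 ∪ surfSide S 1 = Sᶜ := by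
  ext x
  simp only [mem_union, mem_surfSide, mem_compl_iff, one_ne_zero]
  tauto

lemma surfSide_subset_compl : surfSide S a ⊆ Sᶜ := fun _ hx => (mem_surfSide.1 hx).1

lemma isOpen_surfSide [LocallyConnectedSpace E] (hS : IsClosed S) (a : Fin 2) :
    IsOpen (surfSide S a) := by
  refine isOpen_iff_forall_mem_open.2 fun x hx => ⟨connectedComponentIn Sᶜ x, fun y hy => ?_,
    hS.isOpen_compl.connectedComponentIn, mem_connectedComponentIn (surfSide_subset_compl hx)⟩
  rw [mem_surfSide, ← connectedComponentIn_eq hy]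
  exact ⟨connectedComponentIn_subset _ _ hy, (mem_surfSide.1 hx).2⟩

/-- The sides of `S` in the one-point compactification: the point at infinity is added to the
exterior. -/
def compactSide (S : Set E) (a : Fin 2) : Set (OnePoint E) :=
  (↑) '' surfSide S a ∪ {x | x = ∞ ∧ a = 1}

lemma coe_mem_compactSide : (x : OnePoint E) ∈ compactSide S a ↔ x ∈ surfSide S a := by
  simp [compactSide]

lemma infty_mem_compactSide : ∞ ∈ compactSide S a ↔ a = 1 := by
  simp [compactSide]

end Sides

section Compactification

variable {V : Type*} [NormedAddCommGroup V] [NormedSpace ℝ V] {S : Set V}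

-- The ray from `x` away from the origin is unbounded and misses `S`.
lemma eventually_cobounded_mem_surfSide_one (hS : IsBounded S) :
    ∀ᶠ x in cobounded V, x ∈ surfSide S 1 := by
  obtain ⟨r, hr, hSr⟩ := hS.exists_pos_norm_le
  filter_upwards [eventually_cobounded_le_norm (r + 1)] with x hx
  have hout {y : V} (hy : ‖x‖ ≤ ‖y‖) : y ∉ S := fun hyS => by linarith [hSr y hyS]
  have hnorm {t : ℝ} (ht : 1 ≤ t) : ‖t • x‖ = t * ‖x‖ := by
    rw [norm_smul, Real.norm_of_nonneg (by linarith)]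
  have hray : (fun t : ℝ => t • x) '' Ici 1 ⊆ connectedComponentIn Sᶜ x := by
    refine (isPreconnected_Ici.image _ (by fun_prop)).subset_connectedComponentIn
      ⟨1, self_mem_Ici, one_smul _ _⟩ (image_subset_iff.2 fun t ht => hout ?_)
    exact (hnorm ht).symm ▸ le_mul_of_one_le_left (norm_nonneg x) ht
  refine mem_surfSide.2 ⟨hout le_rfl, iff_of_false (fun hb => ?_) one_ne_zero⟩
  obtain ⟨R, hR, hbound⟩ := (hb.subset hray).exists_pos_norm_le
  have hR' := hbound _ ⟨1 + R, by simp [hR.le], rfl⟩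
  rw [hnorm (by linarith)] at hR'
  nlinarith

lemma isOpen_compactSide [ProperSpace V] (hS : IsCompact S) (a : Fin 2) :
    IsOpen (compactSide S a) := by
  have hpre : (↑) ⁻¹' compactSide S a = surfSide S a := Set.ext fun _ => coe_mem_compactSide
  have hopen := isOpen_surfSide hS.isClosed a
  rw [OnePoint.isOpen_def, hpre]
  refine ⟨fun ha => isCompact_of_isClosed_isBounded hopen.isClosed_compl ?_, hopen⟩
  rw [infty_mem_compactSide.1 ha]
  exact isBounded_compl_iff.2 (eventually_cobounded_mem_surfSide_one hS.isBounded)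

lemma isSplitting_of_isOpen {X : Type*} [TopologicalSpace X] [CompactSpace X] {D : Set X}
    {u : Fin 2 → Set X} (hunion : u 0 ∪ u 1 = Dᶜ) (hdisj : Disjoint (u 0) (u 1))
    (hopen : ∀ a, IsOpen (u a)) : IsSplitting univ D u where
  union_eq := by rw [union_assoc, hunion, union_compl_self]
  disjoint_sides := hdisj
  disjoint_wall a := by
    rw [← subset_compl_iff_disjoint_left, ← hunion]
    fin_cases a
    exacts [subset_union_left, subset_union_right]
  isCompact_union a := by
    have hcompl (b : Fin 2) (hab : a ≠ b) : D ∪ u a = (u b)ᶜ := by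
      have hD := compl_eq_comm.1 hunion.symm
      have hdisj' := hdisj.symm
      rw [Set.disjoint_left] at hdisj hdisj'
      fin_cases a <;> fin_cases b <;> grind
    obtain ⟨b, hab⟩ := exists_ne a
    exact hcompl b hab.symm ▸ (hopen b).isClosed_compl.isCompact

lemma isSplitting_compactSide [ProperSpace V] (hS : IsCompact S) :
    IsSplitting (univ : Set (OnePoint V)) ((↑) '' S) (compactSide S) := by
  refine isSplitting_of_isOpen (Set.ext ?_) (Set.disjoint_left.2 ?_) (isOpen_compactSide hS)
  · refine OnePoint.forall.2 ⟨by simp [infty_mem_compactSide], fun v => ?_⟩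
    have hunion := Set.ext_iff.1 (surfSide_union_surfSide (S := S)) v
    simpa [coe_mem_compactSide] using hunion
  · refine OnePoint.forall.2 ⟨by simp [infty_mem_compactSide], fun v => ?_⟩
    rw [coe_mem_compactSide, coe_mem_compactSide]
    exact fun hv => disjoint_surfSide.notMem_of_mem_left hv

lemma infty_mem_closure_image_coe [ProperSpace V] [Nontrivial V] {R : Set V}
    (hR : R ∈ cobounded V) : ∞ ∈ closure ((↑) '' R : Set (OnePoint V)) := by
  rw [cobounded_eq_cocompact, ← coclosedCompact_eq_cocompact] at hR
  have : (coclosedCompact V).NeBot := by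
    rw [coclosedCompact_eq_cocompact, ← cobounded_eq_cocompact]
    infer_instance
  exact mem_closure_of_tendsto OnePoint.tendsto_coe_infty
    (mem_of_superset hR fun v hv => mem_image_of_mem _ hv)

lemma isConnected_cell_compactSide [ProperSpace V] [Nontrivial V] {ι : Type*} {S : ι → Set V}
    {J : Finset ι} {ε : ι → Fin 2} (hS : ∀ i ∈ J, IsBounded (S i))
    (hregion : IsConnected (⋂ i ∈ J, surfSide (S i) (ε i))) :
    IsConnected (cell univ (fun i => compactSide (S i)) J ε) := by
  have hcoe (v : V) : ↑v ∈ cell univ (fun i => compactSide (S i)) J ε ↔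
      v ∈ ⋂ i ∈ J, surfSide (S i) (ε i) := by
    simp only [cell, univ_inter, mem_iInter, coe_mem_compactSide]
  refine (hregion.image _ OnePoint.continuous_coe.continuousOn).subset_closure
    (image_subset_iff.2 fun v hv => (hcoe v).2 hv) (OnePoint.forall.2 ⟨fun hinfty => ?_, ?_⟩)
  · simp only [cell, univ_inter, mem_iInter, infty_mem_compactSide] at hinfty
    refine infty_mem_closure_image_coe ((biInter_finset_mem J).2 fun i hi => ?_)
    exact hinfty i hi ▸ eventually_cobounded_mem_surfSide_one (hS i hi)
  · exact fun v hv => subset_closure (mem_image_of_mem _ ((hcoe v).1 hv))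

end Compactification

/-! ### The arrangement of a Venn diagram -/

theorem isSphereArrangement_image_coe {m : ℕ} {ι : Type*} [Fintype ι]
    {S : ι → Set (EuclideanSpace ℝ (Fin m))} [Nontrivial (EuclideanSpace ℝ (Fin m))]
    (hV : IsSimpleVennDiagram m S) (hFR : FullyReducible m S) :
    IsSphereArrangement m (univ : Set (OnePoint (EuclideanSpace ℝ (Fin m)))) Finset.univ
      (fun i => (↑) '' S i) (fun i => compactSide (S i)) where
  isSphere := ⟨isCompact_univ, ⟨(Homeomorph.Set.univ _).trans
    (onePointEquivSphereOfFinrankEq (by simp))⟩⟩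
  isSphere_wall i _ := IsSphere.image OnePoint.isOpenEmbedding_coe.isEmbedding (hV.1.1 i)
  isSplitting i _ := isSplitting_compactSide (hV.1.1 i).1
  isConnected_cell J _ ε := by
    have hregion := ((hFR J).2.1 fun i => ε i).2
    rw [iInter_subtype] at hregion
    exact isConnected_cell_compactSide (fun i _ => (hV.1.1 i).1.isBounded) hregion
  biInter_eq_empty J _ h2 hd := by
    have hinter := hV.2 J h2
    rw [if_pos hd] at hinter
    rw [← OnePoint.coe_injective.injOn.image_biInter_eq (Finset.card_pos.1 (by omega)), hinter,
      image_empty]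
  finUnionOfSpheres J _ h2 hd := by
    have hinter := hV.2 J h2
    rw [if_neg (not_le.2 hd)] at hinter
    rw [← OnePoint.coe_injective.injOn.image_biInter_eq (Finset.card_pos.1 (by omega))]
    exact finUnionOfSpheres_image OnePoint.isOpenEmbedding_coe.isEmbedding hinter

end VennReduction

open VennReduction Topology TopologicalSpace OnePoint in
theorem fullyReducible_intersection_with_last_general {p : ℕ} {ι κ : Type*} [Fintype ι]
    [Fintype κ] {S : ι → Set (EuclideanSpace ℝ (Fin (p + 3)))} (hV : IsSimpleVennDiagram (p + 3) S)
    (hFR : FullyReducible (p + 3) S) {j : ι} {k : κ → ι} (hk : k.Injective) (hkj : ∀ i, k i ≠ j) :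
    ∃ σ : κ → Fin 2 → Set (S j),
      IsSimpleVennDiagramOn (p + 2) (fun i => Subtype.val ⁻¹' S (k i)) σ ∧
      FullyReducibleOn (p + 2) (fun i => Subtype.val ⁻¹' S (k i)) σ := by
  classical
  let V := EuclideanSpace ℝ (Fin (p + 3))
  have : MetrizableSpace (OnePoint V) :=
    (onePointEquivSphereOfFinrankEq (ι := Fin (p + 4)) (by simp [V])).isEmbedding.metrizableSpace
  let := metrizableSpaceMetric (OnePoint V)
  have harr := (isSphereArrangement_image_coe hV hFR).restrict (Finset.mem_univ j)
  have hcoe : IsEmbedding ((↑) : V → OnePoint V) := OnePoint.isOpenEmbedding_coe.isEmbedding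
  have hu : IsEmbedding fun v : S j => (v : OnePoint V) := hcoe.comp .subtypeVal
  have hrange : range (fun v : S j => (v : OnePoint V)) = (↑) '' S j := (image_eq_range _ _).symm
  have hkI (i : κ) : k i ∈ Finset.univ.erase j := Finset.mem_erase.2 ⟨hkj i, Finset.mem_univ _⟩
  have hwall (i : κ) : (fun v : S j => (v : OnePoint V)) ⁻¹' ((↑) '' S (k i) ∩ (↑) '' S j) =
      Subtype.val ⁻¹' S (k i) := by
    ext v
    simp
  have hside (i : κ) (a : Fin 2) : (fun v : S j => (v : OnePoint V)) ⁻¹'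
      (compactSide (S (k i)) a ∩ (↑) '' S j) = Subtype.val ⁻¹' surfSide (S (k i)) a := by
    ext v
    simp [coe_mem_compactSide]
  refine ⟨fun i a => Subtype.val ⁻¹' surfSide (S (k i)) a, ?_, fun t => ?_⟩
  · simpa only [hwall, hside] using harr.isSimpleVennDiagramOn hu hrange hk hkI
  · simpa only [hwall, hside, Function.comp_apply] using harr.isVennDiagramOn hu hrange
      (hk.comp Subtype.val_injective) fun i : t => hkI i

/-- **Lemma 2.** If `V = {S₁, …, Sₙ}` is a fully reducible simple `m`-dimensional Venn
diagram (`n ≥ 2`, `m ≥ 3`), then `W = {S₁ ∩ Sₙ, …, S_{n-1} ∩ Sₙ}` is a fully reducible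
simple `(m-1)`-dimensional Venn diagram embedded on the `m`-surface `Sₙ` (for a suitable
choice of interiors/exteriors, namely the two components into which each `Sᵢ ∩ Sₙ`
separates `Sₙ`).  Here `Sₙ` corresponds to the index `⟨n-1, _⟩ : Fin n`. -/
theorem fullyReducible_intersection_with_last (m n : ℕ) (hm : 3 ≤ m) (hn : 2 ≤ n)
    (S : Fin n → Set (EuclideanSpace ℝ (Fin m)))
    (hV : IsSimpleVennDiagram m S) (hFR : FullyReducible m S) :
    ∃ σ : Fin (n - 1) → Fin 2 → Set (↥(S ⟨n - 1, by omega⟩)),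
      IsSimpleVennDiagramOn (m - 1)
        (fun i : Fin (n - 1) =>
          (Subtype.val ⁻¹' S (Fin.castLE (by omega) i) : Set (↥(S ⟨n - 1, by omega⟩)))) σ ∧
      FullyReducibleOn (m - 1)
        (fun i : Fin (n - 1) =>
          (Subtype.val ⁻¹' S (Fin.castLE (by omega) i) : Set (↥(S ⟨n - 1, by omega⟩)))) σ := by
  obtain ⟨p, rfl⟩ : ∃ p, m = p + 3 := ⟨m - 3, by omega⟩
  exact fullyReducible_intersection_with_last_general hV hFR (Fin.castLE_injective _)
    fun i => Fin.ne_of_val_ne (by simp; omega)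
end

section
/- Let V = {S_1, ..., S_n} be a simple m-dimensional Venn diagram and let r be an integer with 1 < r < n such that every subset of V of size r is a Venn diagram. Then every subset of V of size r - 1 is also a Venn diagram. -/
open Set Metric Bornology

/-
Let `t` consist of `r - 1` surfaces and choose two surfaces `S j` and `S l` outside `t`. A cell `R`
of `t` is open, and its intersections with the two sides of `S j` are connected, being cells of a
subfamily of size `r`. So is its intersection `C` with one side of `S l`, and `C` meets both sides
of `S j` because no cell of the whole diagram is empty. Hence `R` without `S j` lies in a connected
subset of `R`, which is dense in `R` because `S j` has empty interior; so `R` is connected.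

An embedded `(m - 1)`-sphere has empty interior in `ℝ^m`: otherwise, after smoothing the inverse of
the embedding, a map differentiable on all of `ℝ^m` would take part of the standard sphere, a null
set, onto a set containing a ball. That the ball is covered comes from Brouwer's fixed point
theorem, in the form that a continuous map moving no point of a ball by more than its radius hits
the centre. For the underlying absence of `C¹` retractions `G` of the ball onto its boundary, note
that `∫ det (1 + t (G' - 1))` is a polynomial in `t` which equals the volume of the ball for small
`t`, by change of variables, and hence also for `t = 1`, where the integrand `det G'` vanishes. In
terms of `s = t⁻¹` the integrand is `s⁻ᵈ χ(s)` with `χ` the characteristic polynomial of `1 - G'`.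
-/

section ChangeOfVariables

open MeasureTheory Module

open scoped NNReal Polynomial

theorem exists_polynomial_integral_eval_eq {X : Type*} [MeasurableSpace X] {μ : Measure X} {n : ℕ}
    {p : X → ℝ[X]} (hdeg : ∀ x, (p x).degree < n)
    (hint : ∀ s, Integrable (fun x => (p x).eval s) μ) :
    ∃ q : ℝ[X], ∀ s, q.eval s = ∫ x, (p x).eval s ∂μ := by
  have hinj : InjOn (Nat.cast : ℕ → ℝ) (Finset.range n) := Nat.cast_injective.injOn
  refine ⟨Lagrange.interpolate (Finset.range n) Nat.cast fun i => ∫ x, (p x).eval (i : ℝ) ∂μ,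
    fun s => ?_⟩
  have hp (x : X) : (p x).eval s = ∑ i ∈ Finset.range n,
      (p x).eval (i : ℝ) * (Lagrange.basis (Finset.range n) Nat.cast i).eval s := by
    have hx : (p x).degree < (Finset.range n).card := by simpa only [Finset.card_range] using hdeg x
    have h := congrArg (Polynomial.eval s) (Lagrange.eq_interpolate hinj hx)
    simpa only [Lagrange.interpolate_apply, Polynomial.eval_finsetSum, Polynomial.eval_mul,
      Polynomial.eval_C] using h
  simp only [hp, Lagrange.interpolate_apply, Polynomial.eval_finsetSum, Polynomial.eval_mul,
    Polynomial.eval_C]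
  rw [integral_finsetSum _ fun (i : ℕ) _ => (hint i).mul_const _]
  simp only [integral_mul_const]

theorem image_eq_self_of_isOpen_image {X : Type*} [TopologicalSpace X] [T2Space X] {f : X → X}
    {U : Set X} (hUo : IsOpen U) (hUp : IsPreconnected U) (hUc : IsCompact (closure U))
    (hf : ContinuousOn f (closure U)) (hfo : IsOpen (f '' U)) (hmaps : MapsTo f U U)
    (hid : EqOn f id (frontier U)) : f '' U = U := by
  rcases U.eq_empty_or_nonempty with rfl | hne
  · exact image_empty f
  refine hmaps.image_subset.antisymm (hUp.subset_of_closure_inter_subset hfo ?_ ?_)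
  · rwa [inter_eq_right.2 hmaps.image_subset, image_nonempty]
  · rintro y ⟨hy, hyU⟩
    have hcl : closure (f '' U) ⊆ f '' closure U :=
      closure_minimal (image_mono subset_closure) (hUc.image_of_continuousOn hf).isClosed
    obtain ⟨x, hx, rfl⟩ := hcl hy
    by_contra hfx
    have hxU : x ∉ U := fun h => hfx (mem_image_of_mem f h)
    have hxf : x ∈ frontier U := hUo.frontier_eq ▸ ⟨hx, hxU⟩
    exact hxU (by simpa only [hid hxf, id] using hyU)

variable {E : Type*} [NormedAddCommGroup E] [NormedSpace ℝ E] [FiniteDimensional ℝ E]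

theorem det_one_add_pos_of_norm_lt_one {A : E →L[ℝ] E} (hA : ‖A‖ < 1) : 0 < (1 + A).det := by
  have hcont : ContinuousOn (fun B : E →L[ℝ] E => (1 + B).det) (ball 0 1) :=
    (ContinuousLinearMap.continuous_det.comp (continuous_const.add continuous_id)).continuousOn
  have hne (B : E →L[ℝ] E) (hB : B ∈ ball (0 : E →L[ℝ] E) 1) : (1 + B).det ≠ 0 := by
    have : IsUnit (1 - -B) := isUnit_one_sub_of_norm_lt_one (by simpa using hB)
    rw [sub_neg_eq_add] at this
    exact ((this.map ContinuousLinearMap.toLinearMapRingHom).map LinearMap.det).ne_zero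
  by_contra! hle
  obtain ⟨B, hB, hB0⟩ := (convex_ball (0 : E →L[ℝ] E) 1).isPreconnected.intermediate_value
    (mem_ball_zero_iff.2 hA) (mem_ball_self one_pos) hcont
    (show (0 : ℝ) ∈ Icc _ _ from ⟨hle, by simp [ContinuousLinearMap.det]⟩)
  exact hne B hB hB0

theorem eval_charpoly_neg (A : E →L[ℝ] E) {s : ℝ} (hs : s ≠ 0) :
    (-A : E →ₗ[ℝ] E).charpoly.eval s = s ^ finrank ℝ E * (1 + s⁻¹ • A).det := by
  rw [LinearMap.eval_charpoly, ContinuousLinearMap.det, ← LinearMap.det_smul]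
  congr 1
  ext x
  simp [smul_smul, hs]

theorem det_eq_zero_of_interior_range_eq_empty {f : E → E} {f' : E →L[ℝ] E} {x : E}
    (hf : HasStrictFDerivAt f f' x) (hrange : interior (range f) = ∅) : f'.det = 0 := by
  by_contra hdet
  rw [← f'.coe_toContinuousLinearEquivOfDetNeZero hdet] at hf
  have hmem : range f ∈ nhds (f x) := hf.map_nhds_eq_of_equiv ▸ Filter.range_mem_map
  simpa only [hrange, mem_empty_iff_false] using mem_interior_iff_mem_nhds.2 hmem

variable [MeasurableSpace E] [BorelSpace E] (μ : Measure E) [μ.IsAddHaarMeasure] {U : Set E}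

theorem integral_det_one_add_eq_measureReal {v : E → E} {v' : E → E →L[ℝ] E} {K : ℝ≥0}
    (hK : K < 1) (hUo : IsOpen U) (hUp : IsPreconnected U) (hUb : IsBounded U)
    (hv : LipschitzOnWith K v (closure U)) (hv' : ∀ x ∈ U, HasFDerivAt v (v' x) x)
    (hmaps : MapsTo (fun x => x + v x) U U) (hzero : EqOn v 0 (frontier U)) :
    ∫ x in U, (1 + v' x).det ∂μ = μ.real U := by
  set f : E → E := fun x => x + v x with hf
  have hvU : LipschitzOnWith K v U := hv.mono subset_closure
  have happrox : ApproximatesLinearOn f (ContinuousLinearEquiv.refl ℝ E : E →L[ℝ] E) U K := by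
    rw [ApproximatesLinearOn.approximatesLinearOn_iff_lipschitzOnWith]
    convert! hvU using 1
    ext x
    simp [hf]
  have hbound : Subsingleton E ∨
      K < ‖((ContinuousLinearEquiv.refl ℝ E).symm : E →L[ℝ] E)‖₊⁻¹ := by
    rcases subsingleton_or_nontrivial E with hE | hE
    · exact Or.inl hE
    · refine Or.inr ?_
      have hnorm : ‖((ContinuousLinearEquiv.refl ℝ E).symm : E →L[ℝ] E)‖₊ = 1 :=
        NNReal.eq ContinuousLinearMap.norm_id
      rwa [hnorm, inv_one]
  have hdet (x : E) (hx : x ∈ U) : 0 < (1 + v' x).det := by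
    refine det_one_add_pos_of_norm_lt_one (lt_of_le_of_lt ?_ (NNReal.coe_lt_coe.2 hK))
    exact (hv' x hx).le_of_lipschitzOn (hUo.mem_nhds hx) hvU
  have himage : f '' U = U :=
    image_eq_self_of_isOpen_image hUo hUp hUb.isCompact_closure
      (continuousOn_id.add hv.continuousOn)
      (happrox.toOpenPartialHomeomorph f U hbound hUo).open_target hmaps
      fun x hx => by simp [hf, hzero hx]
  calc ∫ x in U, (1 + v' x).det ∂μ
      = ∫ x in U, |(1 + v' x).det| • (1 : ℝ) ∂μ :=
        setIntegral_congr_fun hUo.measurableSet fun x hx => by simp [abs_of_pos (hdet x hx)]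
    _ = ∫ _ in f '' U, (1 : ℝ) ∂μ :=
        (integral_image_eq_integral_abs_det_fderiv_smul μ hUo.measurableSet
          (fun x hx => ((hasFDerivAt_id x).add (hv' x hx)).hasFDerivWithinAt)
          (happrox.injOn hbound) fun _ => 1).symm
    _ = μ.real U := by simp [himage]

theorem integral_det_one_add_smul_eq_measureReal {G : E → E} (hG : ContDiff ℝ 1 G)
    (hUo : IsOpen U) (hUc : Convex ℝ U) (hUb : IsBounded U) (hmaps : MapsTo G U (closure U))
    (hid : EqOn G id (frontier U)) {K : ℝ≥0} {t : ℝ}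
    (hK : ∀ x ∈ closure U, ‖fderiv ℝ G x - 1‖₊ ≤ K) (ht0 : 0 ≤ t) (ht1 : t < 1) (htK : t * K < 1) :
    ∫ x in U, (1 + t • (fderiv ℝ G x - 1)).det ∂μ = μ.real U := by
  have hGd (x : E) : HasFDerivAt (fun y => G y - y) (fderiv ℝ G x - 1) x :=
    (hG.differentiable one_ne_zero x).hasFDerivAt.sub (hasFDerivAt_id x)
  have hlip : LipschitzOnWith K (fun y => G y - y) (closure U) :=
    hUc.closure.lipschitzOnWith_of_nnnorm_hasFDerivWithin_le
      (fun x _ => (hGd x).hasFDerivWithinAt) hK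
  refine integral_det_one_add_eq_measureReal μ (v := fun x => t • (G x - x)) (K := ‖t‖₊ * K) ?_
    hUo hUc.isPreconnected hUb ?_ (fun x _ => (hGd x).const_smul t) (fun x hx => ?_) fun x hx => ?_
  · rwa [← NNReal.coe_lt_coe, NNReal.coe_mul, coe_nnnorm, Real.norm_of_nonneg ht0]
  · exact (lipschitzWith_smul t).comp_lipschitzOnWith hlip
  · have hmem := hUc.combo_interior_closure_mem_interior (hUo.interior_eq.symm ▸ hx) (hmaps hx)
      (sub_pos.2 ht1) ht0 (sub_add_cancel 1 t)
    rw [hUo.interior_eq] at hmem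
    convert! hmem using 1
    module
  · simp [hid hx]

theorem integral_det_fderiv_eq_measureReal {G : E → E} (hG : ContDiff ℝ 1 G)
    (hUo : IsOpen U) (hUc : Convex ℝ U) (hUb : IsBounded U) (hmaps : MapsTo G U (closure U))
    (hid : EqOn G id (frontier U)) : ∫ x in U, (fderiv ℝ G x).det ∂μ = μ.real U := by
  set A : E → E →L[ℝ] E := fun x => fderiv ℝ G x - 1 with hA
  have hAc : Continuous A := (hG.continuous_fderiv one_ne_zero).sub continuous_const
  obtain ⟨K, hK⟩ := hUb.isCompact_closure.exists_bound_of_continuousOn hAc.continuousOn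
  have hcompact := hUb.isCompact_closure
  have hint (s : ℝ) :
      IntegrableOn (fun x => (-A x : E →ₗ[ℝ] E).charpoly.eval s) U μ := by
    have hc : Continuous fun x => (algebraMap ℝ (E →L[ℝ] E) s + A x).det :=
      ContinuousLinearMap.continuous_det.comp (continuous_const.add hAc)
    refine ((hc.continuousOn.integrableOn_compact hcompact).mono_set subset_closure).congr_fun
      (fun x _ => ?_) hUo.measurableSet
    rw [LinearMap.eval_charpoly, sub_neg_eq_add]
    rfl
  have hdeg (x : E) : (-A x : E →ₗ[ℝ] E).charpoly.degree < (finrank ℝ E + 1 : ℕ) := by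
    refine Polynomial.degree_le_natDegree.trans_lt ?_
    rw [LinearMap.charpoly_natDegree]
    exact_mod_cast Nat.lt_succ_self _
  obtain ⟨q, hq⟩ := exists_polynomial_integral_eval_eq hdeg hint
  have hq_large (s : ℝ) (hs : max 1 K < s) : q.eval s = s ^ finrank ℝ E * μ.real U := by
    obtain ⟨hs1, hsK⟩ := max_lt_iff.1 hs
    have hs0 : 0 < s := one_pos.trans hs1
    simp only [hq, eval_charpoly_neg _ hs0.ne', integral_const_mul]
    congr 1
    refine integral_det_one_add_smul_eq_measureReal μ hG hUo hUc hUb hmaps hid (K := K.toNNReal)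
      (fun x hx => NNReal.coe_le_coe.1 ((hK x hx).trans K.le_coe_toNNReal)) (inv_nonneg.2 hs0.le)
      (inv_lt_one_of_one_lt₀ hs1) ?_
    rw [inv_mul_lt_one₀ hs0, Real.coe_toNNReal']
    exact max_lt hsK hs0
  have hq_eq : q = Polynomial.C (μ.real U) * Polynomial.X ^ finrank ℝ E :=
    Polynomial.eq_of_infinite_eval_eq _ _ ((Ioi_infinite (max 1 K)).mono fun s hs => by
      simp [hq_large s hs, mul_comm (μ.real U)])
  have hq_one := hq 1
  simp only [eval_charpoly_neg _ one_ne_zero, hA] at hq_one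
  simpa [hq_eq] using hq_one.symm

end ChangeOfVariables

section Brouwer

open MeasureTheory

theorem exists_norm_eq_one_and_ne_of_contDiff {E : Type*} [NormedAddCommGroup E] [NormedSpace ℝ E]
    [FiniteDimensional ℝ E] {G : E → E} (hG : ContDiff ℝ 1 G) (hnorm : ∀ x, ‖G x‖ = 1) :
    ∃ x, ‖x‖ = 1 ∧ G x ≠ x := by
  borelize E
  by_contra! hid
  have hsphere : range G ⊆ sphere 0 1 := range_subset_iff.2 fun x => by simpa using hnorm x
  have hrange : interior (range G) = ∅ :=
    subset_eq_empty (interior_mono hsphere) (interior_sphere 0 one_ne_zero)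
  have hdet (x : E) : (fderiv ℝ G x).det = 0 :=
    det_eq_zero_of_interior_range_eq_empty (hG.contDiffAt.hasStrictFDerivAt one_ne_zero) hrange
  have hvol := integral_det_fderiv_eq_measureReal (Measure.addHaar : Measure E) hG
    (U := ball 0 1) isOpen_ball (convex_ball 0 1) isBounded_ball
    (fun x _ => by simp [closure_ball, hnorm x])
    (fun x hx => hid x (by simpa [frontier_ball] using hx))
  simp only [hdet, integral_zero] at hvol
  exact (ENNReal.toReal_pos (measure_ball_pos _ (0 : E) one_pos).ne' measure_ball_lt_top.ne).ne hvol

variable {E : Type*} [NormedAddCommGroup E] [InnerProductSpace ℝ E] [FiniteDimensional ℝ E]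

theorem exists_eq_zero_of_contDiff {F : E → E} (hF : ContDiff ℝ 1 F)
    (hid : ∀ x, ‖x‖ = 1 → F x = x) : ∃ x, F x = 0 := by
  by_contra! hne
  obtain ⟨x, hx, hGx⟩ := exists_norm_eq_one_and_ne_of_contDiff (G := fun x => ‖F x‖⁻¹ • F x)
    (((hF.norm ℝ hne).inv fun x => norm_ne_zero_iff.2 (hne x)).smul hF)
    (fun x => norm_smul_inv_norm (hne x))
  exact hGx (by simp [hid x hx, hx])

theorem exists_mem_closedBall_isFixedPt_of_contDiff {P : E → E} (hP : ContDiff ℝ 1 P) {r : ℝ}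
    (hr0 : 0 < r) (hr1 : r < 1) (hPr : ∀ x ∈ closedBall 0 1, ‖P x‖ ≤ r) :
    ∃ x ∈ closedBall (0 : E) 1, Function.IsFixedPt P x := by
  let χ : ContDiffBump (0 : E) := ⟨r, 1, hr0, hr1⟩
  have hχ (x : E) (hx : 1 ≤ ‖x‖) : χ x = 0 := χ.zero_of_le_dist (by simpa using hx)
  obtain ⟨x, hx⟩ : ∃ x, x - χ x • P x = 0 :=
    exists_eq_zero_of_contDiff (contDiff_id.sub (χ.contDiff.smul hP)) fun x hx => by
      simp [hχ x hx.ge]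
  have hx1 : ‖x‖ ≤ 1 := by
    by_contra! h
    have hx0 : x = 0 := by simpa [hχ x h.le] using hx
    exact (norm_eq_zero.2 hx0 ▸ h).not_gt one_pos
  have hxr : ‖x‖ ≤ r := by
    rw [sub_eq_zero.1 hx, norm_smul, Real.norm_of_nonneg χ.nonneg]
    exact (mul_le_of_le_one_left (norm_nonneg _) χ.le_one).trans (hPr x (by simpa using hx1))
  have hχ1 : χ x = 1 := χ.one_of_mem_closedBall (by simpa using hxr)
  rw [hχ1, one_smul] at hx
  exact ⟨x, by simpa using hx1, (sub_eq_zero.1 hx).symm⟩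

theorem exists_norm_sub_lt_of_mapsTo {f : E → E} (hf : ContinuousOn f (closedBall 0 1))
    (hmaps : MapsTo f (closedBall 0 1) (closedBall 0 1)) {ε : ℝ} (hε : 0 < ε) :
    ∃ x ∈ closedBall (0 : E) 1, ‖f x - x‖ < ε := by
  obtain ⟨g, hg⟩ := ContinuousMap.exists_restrict_eq isClosed_closedBall ⟨_, hf.domRestrict⟩
  obtain ⟨δ, hδ0, hδ⟩ := exists_between (show 0 < min 1 (ε / 2) by positivity)
  obtain ⟨hδ1, hδε⟩ := lt_min_iff.1 hδ
  obtain ⟨P, hP, hPg, -⟩ := (g.continuous.const_smul (1 - δ)).exists_contDiff_approx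
    (ε := fun _ => δ / 2) 1 continuous_const (fun _ => by positivity)
  have hfx (x : E) (hx : x ∈ closedBall 0 1) : ‖f x‖ ≤ 1 := by simpa using hmaps hx
  have hPf (x : E) (hx : x ∈ closedBall 0 1) : ‖P x - (1 - δ) • f x‖ < δ / 2 := by
    have hgx : g x = f x := congrArg (fun h => h ⟨x, hx⟩) hg
    simpa only [Pi.smul_apply, hgx, dist_eq_norm] using hPg x
  obtain ⟨x, hx, hPx⟩ := exists_mem_closedBall_isFixedPt_of_contDiff (r := 1 - δ / 2)
    (by exact_mod_cast hP) (by linarith) (by linarith) fun x hx => by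
      calc ‖P x‖ ≤ ‖P x - (1 - δ) • f x‖ + ‖(1 - δ) • f x‖ := by
            simpa using norm_add_le (P x - (1 - δ) • f x) ((1 - δ) • f x)
        _ ≤ δ / 2 + (1 - δ) * 1 := by
            rw [norm_smul, Real.norm_of_nonneg (sub_nonneg.2 hδ1.le)]
            exact add_le_add (hPf x hx).le
              (mul_le_mul_of_nonneg_left (hfx x hx) (sub_nonneg.2 hδ1.le))
        _ = 1 - δ / 2 := by ring
  refine ⟨x, hx, ?_⟩
  calc ‖f x - x‖ = ‖δ • f x - (P x - (1 - δ) • f x)‖ := by rw [hPx.eq]; congr 1; module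
    _ ≤ ‖δ • f x‖ + ‖P x - (1 - δ) • f x‖ := norm_sub_le _ _
    _ ≤ δ * 1 + δ / 2 := by
        rw [norm_smul, Real.norm_of_nonneg hδ0.le]
        exact add_le_add (mul_le_mul_of_nonneg_left (hfx x hx) hδ0.le) (hPf x hx).le
    _ < ε := by linarith

theorem exists_mem_closedBall_isFixedPt {f : E → E} (hf : ContinuousOn f (closedBall 0 1))
    (hmaps : MapsTo f (closedBall 0 1) (closedBall 0 1)) :
    ∃ x ∈ closedBall (0 : E) 1, Function.IsFixedPt f x := by
  obtain ⟨x, hx, hmin⟩ := (isCompact_closedBall (0 : E) 1).exists_isMinOn ⟨0, by simp⟩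
    (hf.sub continuousOn_id).norm
  refine ⟨x, hx, ?_⟩
  by_contra hne
  obtain ⟨y, hy, hlt⟩ := exists_norm_sub_lt_of_mapsTo hf hmaps
    (norm_pos_iff.2 (sub_ne_zero.2 hne))
  exact hlt.not_ge (hmin hy)

theorem mem_image_closedBall_of_norm_sub_le {ψ : E → E} {z : E} {ρ : ℝ} (hρ : 0 < ρ)
    (hψ : ContinuousOn ψ (closedBall z ρ)) (hclose : ∀ x ∈ closedBall z ρ, ‖ψ x - x‖ ≤ ρ) :
    z ∈ ψ '' closedBall z ρ := by
  have hmem : MapsTo (fun y => z + ρ • y) (closedBall 0 1) (closedBall z ρ) := fun y hy => by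
    have hy1 : ‖y‖ ≤ 1 := by simpa using hy
    simpa [norm_smul, abs_of_pos hρ] using mul_le_of_le_one_right hρ.le hy1
  have hmaps : MapsTo (fun y => y - ρ⁻¹ • (ψ (z + ρ • y) - z)) (closedBall 0 1)
      (closedBall 0 1) := fun y hy => by
    have heq : y - ρ⁻¹ • (ψ (z + ρ • y) - z) = -(ρ⁻¹ • (ψ (z + ρ • y) - (z + ρ • y))) := by
      simp only [smul_sub, smul_add, inv_smul_smul₀ hρ.ne']
      abel
    beta_reduce
    rw [mem_closedBall_zero_iff, heq, norm_neg, norm_smul, norm_inv, Real.norm_of_nonneg hρ.le,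
      inv_mul_le_one₀ hρ]
    exact hclose _ (hmem hy)
  obtain ⟨y, hy, hfix⟩ := exists_mem_closedBall_isFixedPt
    (continuousOn_id.sub (((hψ.comp (by fun_prop) hmem).sub continuousOn_const).const_smul ρ⁻¹))
    hmaps
  have hψz := (smul_eq_zero_iff_right (inv_ne_zero hρ.ne')).1 (sub_eq_self.1 hfix)
  exact ⟨z + ρ • y, hmem hy, sub_eq_zero.1 hψz⟩

theorem measure_image_ne_zero_of_leftInvOn [MeasurableSpace E] [BorelSpace E] (μ : Measure E)
    [μ.IsAddHaarMeasure] {g h : E → E} {s : Set E} (hs : (interior s).Nonempty)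
    (hg : Continuous g) (hh : ContinuousOn h s) (hgh : LeftInvOn g h s) : μ (h '' s) ≠ 0 := by
  obtain ⟨p, hp⟩ := hs
  obtain ⟨ρ, hρ, hball⟩ := nhds_basis_closedBall.mem_iff.1 (mem_interior_iff_mem_nhds.1 hp)
  obtain ⟨P, hP, hPg, -⟩ := hg.exists_contDiff_approx (ε := fun _ => ρ / 2) 1
    continuous_const (fun _ => half_pos hρ)
  have hsubset : ball p (ρ / 2) ⊆ P '' (h '' s) := fun z hz => by
    have hzs : closedBall z (ρ / 2) ⊆ s :=
      (closedBall_subset_closedBall' (by linarith [mem_ball.1 hz])).trans hball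
    rw [image_image]
    refine image_mono hzs (mem_image_closedBall_of_norm_sub_le (half_pos hρ)
      (hP.continuous.comp_continuousOn (hh.mono hzs)) fun x hx => ?_)
    simpa only [hgh (hzs hx), dist_eq_norm] using (hPg (h x)).le
  intro hzero
  have hnull : μ (P '' (h '' s)) = 0 :=
    addHaar_image_eq_zero_of_differentiableOn_of_addHaar_eq_zero μ
      (hP.differentiable (by simp)).differentiableOn hzero
  exact (measure_ball_pos μ p (half_pos hρ)).ne' (measure_mono_null hsubset hnull)

theorem interior_eq_empty_of_homeomorph [MeasurableSpace E] [BorelSpace E] (μ : Measure E)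
    [μ.IsAddHaarMeasure] {S T : Set E} (hT : IsClosed T) (hμT : μ T = 0) (e : S ≃ₜ T) :
    interior S = ∅ := by
  obtain ⟨g, hg⟩ := ContinuousMap.exists_restrict_eq hT
    ⟨fun y : T => (e.symm y : E), continuous_subtype_val.comp e.symm.continuous⟩
  have hge (x : S) : g (e x) = x := by
    simpa using congrArg (fun k => k (e x)) hg
  set h : E → E := Function.extend Subtype.val (fun x : S => (e x : E)) 0
  have he (x : S) : h x = e x := Subtype.val_injective.extend_apply _ _ x
  by_contra hne
  refine measure_image_ne_zero_of_leftInvOn μ (nonempty_iff_ne_empty.2 hne) g.continuous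
    (h := h) ?_ (fun x hx => ?_) (measure_mono_null ?_ hμT)
  · rw [continuousOn_iff_continuous_domRestrict]
    exact (continuous_subtype_val.comp e.continuous).congr fun x => (he x).symm
  · simpa only [he ⟨x, hx⟩] using hge ⟨x, hx⟩
  · rintro _ ⟨x, hx, rfl⟩
    simpa only [he ⟨x, hx⟩] using (e ⟨x, hx⟩).2

end Brouwer

section Surfaces

open MeasureTheory

theorem HomeoToSphere.interior_eq_empty {k : ℕ} {S : Set (EuclideanSpace ℝ (Fin (k + 1)))}
    (hS : HomeoToSphere k S) : interior S = ∅ :=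
  hS.elim (interior_eq_empty_of_homeomorph volume isClosed_sphere
    (Measure.addHaar_sphere _ _ _))

theorem IsMSurface.interior_eq_empty {m : ℕ} (hm : 0 < m) {S : Set (EuclideanSpace ℝ (Fin m))}
    (hS : IsMSurface m S) : interior S = ∅ := by
  obtain ⟨k, rfl⟩ := Nat.exists_eq_succ_of_ne_zero hm.ne'
  exact hS.2.interior_eq_empty

theorem iUnion_surfSide {E : Type*} [MetricSpace E] (S : Set E) : ⋃ a, surfSide S a = Sᶜ := by
  ext x
  simp only [mem_iUnion, Fin.exists_fin_two, surfSide, mem_ite, mem_compl_iff]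
  simp [← and_or_left, em]

theorem isOpen_surfSide {E : Type*} [MetricSpace E] [LocallyConnectedSpace E] {S : Set E}
    (hS : IsClosed S) (a : Fin 2) : IsOpen (surfSide S a) := by
  refine isOpen_iff_mem_nhds.2 fun x hx => ?_
  have hxS : x ∈ Sᶜ := iUnion_surfSide S ▸ mem_iUnion_of_mem a hx
  filter_upwards [hS.isOpen_compl.connectedComponentIn.mem_nhds (mem_connectedComponentIn hxS)]
    with y hy
  have hyS : y ∉ S := connectedComponentIn_subset _ _ hy
  have heq := connectedComponentIn_eq hy
  unfold surfSide at hx ⊢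
  split_ifs at hx ⊢ <;> exact ⟨hyS, heq ▸ hx.2⟩

end Surfaces

section VennRegions

theorem isPreconnected_of_dense_iUnion {X α : Type*} [TopologicalSpace X] {R C : Set X}
    {A : α → Set X} (hR : IsOpen R) (hA : Dense (⋃ a, A a))
    (hRA : ∀ a, IsPreconnected (R ∩ A a)) (hC : IsConnected C) (hCR : C ⊆ R)
    (hCA : ∀ a, (C ∩ A a).Nonempty) : IsPreconnected R := by
  obtain ⟨c, hc⟩ := hC.nonempty
  have hpre : IsPreconnected (⋃ a, C ∪ R ∩ A a) :=
    isPreconnected_iUnion ⟨c, mem_iInter.2 fun a => Or.inl hc⟩ fun a => by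
      obtain ⟨x, hxC, hxA⟩ := hCA a
      exact hC.isPreconnected.union x hxC ⟨hCR hxC, hxA⟩ (hRA a)
  refine hpre.subset_closure (iUnion_subset fun a => union_subset hCR inter_subset_left) ?_
  calc R ⊆ closure (R ∩ ⋃ a, A a) := hA.open_subset_closure_inter hR
    _ ⊆ closure (⋃ a, C ∪ R ∩ A a) := by
      rw [inter_iUnion]
      exact closure_mono (iUnion_mono fun a => subset_union_right)

variable {E : Type*} [MetricSpace E] {ι : Type*}

/-- The cell of the subfamily `t` of `S` with sign vector `ε`. Signs are given for the whole index
type, so that cells of different subfamilies can be compared; those outside `t` are ignored. -/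
def vennRegion (S : ι → Set E) (t : Finset ι) (ε : ι → Fin 2) : Set E :=
  ⋂ i ∈ t, surfSide (S i) (ε i)

variable {S : ι → Set E} {t : Finset ι} {i j : ι} {ε : ι → Fin 2}

theorem vennRegion_anti {u : Finset ι} (htu : t ⊆ u) : vennRegion S u ε ⊆ vennRegion S t ε :=
  biInter_subset_biInter_left htu

theorem iInter_subtype_surfSide (S : ι → Set E) (t : Finset ι) (ε : ι → Fin 2) :
    ⋂ i : {x // x ∈ t}, surfSide (S i.1) (ε i.1) = vennRegion S t ε :=
  iInter_subtype _ _

theorem isOpen_vennRegion [LocallyConnectedSpace E] (hS : ∀ i ∈ t, IsClosed (S i)) :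
    IsOpen (vennRegion S t ε) :=
  isOpen_biInter_finset fun i hi => isOpen_surfSide (hS i hi) (ε i)

variable [DecidableEq ι]

theorem vennRegion_insert (S : ι → Set E) (t : Finset ι) (j : ι) (ε : ι → Fin 2) :
    vennRegion S (insert j t) ε = surfSide (S j) (ε j) ∩ vennRegion S t ε :=
  Finset.set_biInter_insert _ _ _

theorem vennRegion_update_of_notMem (hj : j ∉ t) (a : Fin 2) :
    vennRegion S t (Function.update ε j a) = vennRegion S t ε :=
  iInter₂_congr fun i hi => by rw [Function.update_of_ne (ne_of_mem_of_not_mem hi hj)]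

theorem vennRegion_insert_update (hj : j ∉ t) (a : Fin 2) :
    vennRegion S (insert j t) (Function.update ε j a) = vennRegion S t ε ∩ surfSide (S j) a := by
  rw [vennRegion_insert, vennRegion_update_of_notMem hj, Function.update_self, inter_comm]

theorem isConnected_vennRegion_of_insert [LocallyConnectedSpace E] {l : ι}
    (hS : ∀ i ∈ t, IsClosed (S i)) (hSj : interior (S j) = ∅) (hj : j ∉ t) (hjl : j ≠ l)
    (hjt : ∀ ε, IsPreconnected (vennRegion S (insert j t) ε))
    (hlt : IsConnected (vennRegion S (insert l t) ε))
    (hjlt : ∀ ε, (vennRegion S (insert j (insert l t)) ε).Nonempty) :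
    IsConnected (vennRegion S t ε) := by
  have hsub : vennRegion S (insert l t) ε ⊆ vennRegion S t ε :=
    vennRegion_anti (Finset.subset_insert l t)
  have hdense : Dense (⋃ a, surfSide (S j) a) := by
    rwa [iUnion_surfSide, ← interior_eq_empty_iff_dense_compl]
  have hjl_notMem : j ∉ insert l t := by simp [hjl, hj]
  refine ⟨hlt.nonempty.mono hsub, isPreconnected_of_dense_iUnion (isOpen_vennRegion hS) hdense
    (fun a => ?_) hlt hsub fun a => ?_⟩
  · rw [← vennRegion_insert_update hj]
    exact hjt _
  · rw [← vennRegion_insert_update hjl_notMem]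
    exact hjlt _

end VennRegions

section VennDiagrams

variable {E : Type*} [MetricSpace E] {m : ℕ} {ι : Type*} {S : ι → Set E} {t : Finset ι}

theorem IsVennDiagram.isConnected_vennRegion
    (h : IsVennDiagram m fun i : {x // x ∈ t} => S i.1) (ε : ι → Fin 2) :
    IsConnected (vennRegion S t ε) :=
  iInter_subtype_surfSide S t ε ▸ (h.2.1 fun i => ε i.1).2

variable [Fintype ι]

theorem IsVennDiagram.nonempty_vennRegion (h : IsVennDiagram m S) (t : Finset ι)
    (ε : ι → Fin 2) : (vennRegion S t ε).Nonempty :=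
  (h.2.1 ε).1.mono (subset_iInter₂ fun i _ => iInter_subset _ i)

theorem IsVennDiagram.subtype_iff_isConnected (h : IsVennDiagram m S) :
    IsVennDiagram m (fun i : {x // x ∈ t} => S i.1) ↔ ∀ ε, IsConnected (vennRegion S t ε) := by
  refine ⟨fun ht => ht.isConnected_vennRegion, fun ht => ⟨fun i => h.1 i.1, ?_,
    fun i j hij => h.2.2 i.1 j.1 (Subtype.val_injective.ne hij)⟩⟩
  refine Subtype.val_injective.surjective_comp_right.forall.2 fun ε => ?_
  have hε := iInter_subtype_surfSide S t ε ▸ ht ε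
  exact ⟨hε.nonempty, hε⟩

end VennDiagrams

theorem subsets_card_pred_venn_general {m r : ℕ} {ι : Type*} [Fintype ι] (hm : 0 < m) (hr : 0 < r)
    (hrn : r < Fintype.card ι) {S : ι → Set (EuclideanSpace ℝ (Fin m))} (hV : IsVennDiagram m S)
    (hsub : ∀ t : Finset ι, t.card = r → IsVennDiagram m (fun i : {x // x ∈ t} => S i.1)) :
    ∀ t : Finset ι, t.card = r - 1 → IsVennDiagram m (fun i : {x // x ∈ t} => S i.1) := by
  classical
  intro t ht
  obtain ⟨j, hj, l, hl, hjl⟩ : ∃ j ∈ tᶜ, ∃ l ∈ tᶜ, j ≠ l := by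
    refine Finset.one_lt_card.1 ?_
    rw [Finset.card_compl]
    omega
  rw [Finset.mem_compl] at hj hl
  have hinsert (k : ι) (hk : k ∉ t) (ε : ι → Fin 2) : IsConnected (vennRegion S (insert k t) ε) :=
    (hsub _ (by rw [Finset.card_insert_of_notMem hk]; omega)).isConnected_vennRegion ε
  exact hV.subtype_iff_isConnected.2 fun ε => isConnected_vennRegion_of_insert
    (fun i _ => (hV.1 i).1.isClosed) ((hV.1 j).interior_eq_empty hm) hj hjl
    (fun ε => (hinsert j hj ε).isPreconnected) (hinsert l hl ε) (hV.nonempty_vennRegion _)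

/-- **Step (1) in the proof of Theorem 2.** If `V` is a simple `m`-dimensional Venn diagram,
`1 < r < n`, and every subset of `V` of size `r` is a Venn diagram, then every subset of
`V` of size `r - 1` is also a Venn diagram. -/
theorem subsets_card_pred_venn (m n r : ℕ) (hm : 2 ≤ m) (hr : 1 < r) (hrn : r < n)
    (S : Fin n → Set (EuclideanSpace ℝ (Fin m)))
    (hV : IsSimpleVennDiagram m S)
    (hsub : ∀ t : Finset (Fin n), t.card = r →
      IsVennDiagram m (fun i : {x // x ∈ t} => S i.1)) :
    ∀ t : Finset (Fin n), t.card = r - 1 →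
      IsVennDiagram m (fun i : {x // x ∈ t} => S i.1) :=
  subsets_card_pred_venn_general (by omega) (by omega) (by simpa using hrn) hV.1 hsub
end
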